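/- The number α₈ = √17 · ln((√17 − 1)/(√17 + 1)) has irrationality measure at most 3.47835; that is, for every real κ > 3.47835, there exist only finitely many pairs (p, q) with p ∈ ℤ and q a positive integer such that |α₈ − p/q| < q^(−κ). -/

import Mathlib

section
open Real Set Filter Topology MeasureTheory

noncomputable def fejD (t : ℝ) : ℝ := max 0 (1 - |t|)
noncomputable def fejK (v : ℝ) : ℝ := if v = 0 then 1 else 2 * (1 - cos v) / v ^ 2

lemma fejD_cont : Continuous fejD := by unfold fejD; fun_prop
lemma fejD_nonneg (t : ℝ) : 0 ≤ fejD t := le_max_left _ _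
lemma fejD_le (t : ℝ) : fejD t ≤ 1 := by
  unfold fejD; exact max_le (by norm_num) (by linarith [abs_nonneg t])
lemma fejD_zero {t : ℝ} (h : t ∉ Icc (-1:ℝ) 1) : fejD t = 0 := by
  unfold fejD
  apply max_eq_left
  by_contra h'
  push Not at h'
  exact h (abs_le.1 (by linarith))

lemma fejD_integral_eq (g : ℝ → ℂ) : ∫ t, (fejD t : ℂ) * g t = ∫ t in (-1:ℝ)..1, (fejD t : ℂ) * g t := by
  rw [intervalIntegral.integral_of_le (by norm_num), ← integral_Icc_eq_integral_Ioc]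
  rw [setIntegral_eq_integral_of_forall_compl_eq_zero]
  intro t ht
  rw [fejD_zero ht]; simp

lemma fejK_eq (v : ℝ) : ∫ t, (fejD t : ℂ) * Complex.exp (t * v * Complex.I) = (fejK v : ℂ) := by
  rw [fejD_integral_eq]
  have hc : Continuous fun t : ℝ => (fejD t : ℂ) * Complex.exp (t * v * Complex.I) := by
    have := fejD_cont
    fun_prop
  rw [← intervalIntegral.integral_add_adjacent_intervals (b := 0) (hc.intervalIntegrable _ _) (hc.intervalIntegrable _ _)]
  have e1 : ∫ t in (-1:ℝ)..0, (fejD t : ℂ) * Complex.exp (t * v * Complex.I) = ∫ t in (-1:ℝ)..0, (1 + t : ℂ) * Complex.exp (t * v * Complex.I) := by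
    apply intervalIntegral.integral_congr
    intro t ht
    rw [uIcc_of_le (by norm_num)] at ht
    simp only [fejD]
    rw [abs_of_nonpos ht.2, max_eq_right (by linarith [ht.1])]
    push_cast; ring
  have e2 : ∫ t in (0:ℝ)..1, (fejD t : ℂ) * Complex.exp (t * v * Complex.I) = ∫ t in (0:ℝ)..1, (1 - t : ℂ) * Complex.exp (t * v * Complex.I) := by
    apply intervalIntegral.integral_congr
    intro t ht
    rw [uIcc_of_le (by norm_num)] at ht
    simp only [fejD]
    rw [abs_of_nonneg ht.1, max_eq_right (by linarith [ht.2])]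
    push_cast; ring
  rw [e1, e2]
  by_cases hv : v = 0
  · subst hv
    simp only [fejK]
    have a1 : ∫ t in (-1:ℝ)..0, (1 + t : ℂ) * Complex.exp (t * (0:ℝ) * Complex.I) = ((∫ t in (-1:ℝ)..0, (1 + t) : ℝ) : ℂ) := by
      rw [← intervalIntegral.integral_ofReal]; simp
    have a2 : ∫ t in (0:ℝ)..1, (1 - t : ℂ) * Complex.exp (t * (0:ℝ) * Complex.I) = ((∫ t in (0:ℝ)..1, (1 - t) : ℝ) : ℂ) := by
      rw [← intervalIntegral.integral_ofReal]; simp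
    rw [a1, a2, intervalIntegral.integral_add (by simp) (by simp), intervalIntegral.integral_sub (by simp) (by simp)]
    simp
    norm_num
  · have hv' : (v * Complex.I : ℂ) ≠ 0 := by simp [hv]
    set w : ℂ := v * Complex.I with hw
    have hE : ∀ t : ℝ, HasDerivAt (fun t : ℝ => Complex.exp (t * v * Complex.I)) (Complex.exp (t * v * Complex.I) * w) t := by
      intro t
      have h1 : HasDerivAt (fun t : ℝ => (t * v * Complex.I : ℂ)) w t := by
        have := ((Complex.ofRealCLM.hasDerivAt (x := t)).mul_const (v:ℂ)).mul_const Complex.I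
        simpa [hw] using this
      exact h1.cexp
    have hI : ∀ t : ℝ, HasDerivAt (fun t : ℝ => (t : ℂ)) 1 t := fun t => Complex.ofRealCLM.hasDerivAt
    have f1 := intervalIntegral.integral_eq_sub_of_hasDerivAt (a := (-1:ℝ)) (b := 0)
      (f := fun t : ℝ => (1 + t : ℂ) * Complex.exp (t * v * Complex.I) / w - Complex.exp (t * v * Complex.I) / w ^ 2)
      (f' := fun t : ℝ => (1 + t : ℂ) * Complex.exp (t * v * Complex.I)) (by
        intro t _
        have := ((((hI t).const_add 1).mul (hE t)).div_const w).sub ((hE t).div_const (w^2))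
        exact this.congr_deriv (by field_simp; ring)) (Continuous.intervalIntegrable (by fun_prop) _ _)
    have f2 := intervalIntegral.integral_eq_sub_of_hasDerivAt (a := (0:ℝ)) (b := 1)
      (f := fun t : ℝ => (1 - t : ℂ) * Complex.exp (t * v * Complex.I) / w + Complex.exp (t * v * Complex.I) / w ^ 2)
      (f' := fun t : ℝ => (1 - t : ℂ) * Complex.exp (t * v * Complex.I)) (by
        intro t _
        have := ((((hI t).const_sub 1).mul (hE t)).div_const w).add ((hE t).div_const (w^2))
        exact this.congr_deriv (by field_simp; ring)) (Continuous.intervalIntegrable (by fun_prop) _ _)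
    rw [f1, f2]
    simp only [fejK, hv, if_false]
    push_cast
    have hcos : Complex.cos v = (Complex.exp (v * Complex.I) + Complex.exp (-v * Complex.I)) / 2 := by
      rw [Complex.cos]
    rw [hcos]
    have hv2 : (v:ℂ) ≠ 0 := by exact_mod_cast hv
    simp only [hw]
    have hI2 : Complex.I ^ 2 = -1 := Complex.I_sq
    simp
    field_simp
    rw [hI2]; ring

lemma fejK_nonneg (v : ℝ) : 0 ≤ fejK v := by
  unfold fejK; split_ifs
  · norm_num
  · have := cos_le_one v
    apply div_nonneg <;> nlinarith [sq_nonneg v]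
lemma fejK_le_one (v : ℝ) : fejK v ≤ 1 := by
  unfold fejK; split_ifs with h
  · norm_num
  · have := one_sub_sq_div_two_le_cos (x := v)
    have h2 : 0 < v ^ 2 := by positivity
    rw [div_le_one h2]; linarith
lemma fejK_le (v : ℝ) : fejK v ≤ 8 / (1 + v ^ 2) := by
  have h1 := fejK_le_one v
  by_cases hv : |v| ≤ 1
  · have : v ^ 2 ≤ 1 := by rw [← sq_abs]; nlinarith [abs_nonneg v]
    refine h1.trans ?_
    rw [le_div_iff₀ (by positivity)]; linarith
  · push Not at hv
    have : 1 < v ^ 2 := by rw [← sq_abs]; nlinarith [abs_nonneg v]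
    have h0 : v ≠ 0 := by rintro rfl; simp at hv; linarith
    unfold fejK; rw [if_neg h0, div_le_div_iff₀ (by positivity) (by positivity)]
    have := neg_one_le_cos v
    nlinarith
lemma fejK_meas : Measurable fejK := by
  unfold fejK
  exact Measurable.ite (measurableSet_singleton 0) measurable_const (by fun_prop)
lemma fejK_integrable : Integrable fejK := by
  refine Integrable.mono' ((integrable_inv_one_add_sq).const_mul 8) fejK_meas.aestronglyMeasurable ?_
  refine Eventually.of_forall fun v => ?_
  rw [norm_of_nonneg (fejK_nonneg v)]
  have := fejK_le v
  rwa [div_eq_mul_inv] at this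
lemma fejK_integral_pos : 0 < ∫ v, fejK v := by
  rw [integral_pos_iff_support_of_nonneg fejK_nonneg fejK_integrable]
  have : Ioo (0:ℝ) 1 ⊆ Function.support fejK := by
    intro v hv
    simp only [Function.mem_support, fejK, hv.1.ne', if_false]
    have : cos v < 1 := by
      have := cos_lt_cos_of_nonneg_of_le_pi (x := 0) (y := v) le_rfl (by linarith [pi_gt_three, hv.2]) hv.1
      simpa using this
    have h2 := hv.1
    have : 0 < 2 * (1 - cos v) / v ^ 2 := by apply div_pos <;> nlinarith [sq_pos_of_pos h2]
    exact this.ne'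
  refine lt_of_lt_of_le ?_ (measure_mono this)
  simp
end

section
open Real Set Filter Topology MeasureTheory

lemma tb_int (b : ℝ → ℝ) (hbm : Measurable b) (hb0 : ∀ u ≤ 0, b u = 0) (B : ℝ)
    (hB : ∀ u, |b u| ≤ B) (s : ℝ) (hs : 0 < s) : Integrable (fun u => b u * exp (-s * u)) := by
  have h1 : IntegrableOn (fun u => B * exp (-s * u)) (Ioi 0) := (exp_neg_integrableOn_Ioi 0 hs).const_mul B
  rw [← integrable_indicator_iff measurableSet_Ioi] at h1
  refine h1.mono' (by fun_prop) (Eventually.of_forall fun u => ?_)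
  by_cases hu : u ≤ 0
  · rw [hb0 u hu, indicator_of_notMem (by simpa using hu)]; simp
  · push Not at hu
    rw [indicator_of_mem (by simpa using hu), norm_mul, norm_eq_abs, norm_of_nonneg (exp_pos _).le]
    exact mul_le_mul_of_nonneg_right (hB u) (exp_pos _).le

lemma tb_fub (b : ℝ → ℝ) (hbm : Measurable b) (hb0 : ∀ u ≤ 0, b u = 0) (B : ℝ)
    (hB : ∀ u, |b u| ≤ B) (H : ℂ → ℂ)
    (hL : ∀ w : ℂ, 0 < w.re → ∫ u : ℝ, (b u : ℂ) * Complex.exp (-w * u) = H w)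
    (lam y s : ℝ) (hs : 0 < s) :
    ((∫ u, b u * exp (-s * u) * fejK (lam * (y - u)) : ℝ) : ℂ) =
      ∫ t : ℝ, (fejD t : ℂ) * (Complex.exp (t * (lam * y : ℝ) * Complex.I) * H (s + lam * t * Complex.I)) := by
  have h1 := tb_int b hbm hb0 B hB s hs
  have hD : Integrable (fun t : ℝ => (fejD t : ℂ)) := by
    refine Integrable.ofReal ?_
    refine Continuous.integrable_of_hasCompactSupport fejD_cont ?_
    refine HasCompactSupport.of_support_subset_isCompact (isCompact_Icc (a := (-1:ℝ)) (b := 1)) ?_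
    intro t ht
    by_contra h
    exact ht (fejD_zero h)
  have h2 : Integrable (Function.uncurry fun u t : ℝ => (((b u * exp (-s * u) : ℝ) : ℂ) * (fejD t : ℂ)) * Complex.exp (t * (lam * (y - u) : ℝ) * Complex.I)) := by
    have h3 := (h1.ofReal (𝕜 := ℂ)).mul_prod hD
    have : Continuous fun z : ℝ × ℝ => Complex.exp (z.2 * (lam * (y - z.1) : ℝ) * Complex.I) := by fun_prop
    refine (h3.mul_bdd (c := 1) this.aestronglyMeasurable (Eventually.of_forall fun z => ?_))
    rw [show ((z.2:ℂ) * (lam * (y - z.1) : ℝ) * Complex.I) = ((z.2 * (lam * (y - z.1)) : ℝ) : ℂ) * Complex.I by push_cast; ring]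
    rw [Complex.norm_exp_ofReal_mul_I]
  have h4 := integral_integral_swap h2
  calc _ = ∫ u : ℝ, (((b u * exp (-s * u) : ℝ) : ℂ) * (fejK (lam * (y - u)) : ℂ)) := by
        refine (integral_ofReal (𝕜 := ℂ)).symm.trans ?_
        simp
    _ = ∫ u : ℝ, ∫ t : ℝ, (((b u * exp (-s * u) : ℝ) : ℂ) * (fejD t : ℂ)) * Complex.exp (t * (lam * (y - u) : ℝ) * Complex.I) := by
        congr 1; ext u
        rw [← fejK_eq, ← integral_const_mul]
        congr 1; ext t; ring
    _ = _ := by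
        rw [h4]
        congr 1; ext t
        rw [← hL _ (by simp [hs]), ← integral_const_mul, ← integral_const_mul]
        congr 1; ext u
        push_cast
        rw [show Complex.exp (t * (lam * (y - u)) * Complex.I) = Complex.exp (t * (lam * y) * Complex.I) * Complex.exp (-(t * lam * u * Complex.I)) by rw [← Complex.exp_add]; ring_nf]
        rw [show Complex.exp (-(s + lam * t * Complex.I) * u) = Complex.exp (-s * u) * Complex.exp (-(t * lam * u * Complex.I)) by rw [← Complex.exp_add]; ring_nf]
        ring

theorem tb_conv (b : ℝ → ℝ) (hbm : Measurable b) (hb0 : ∀ u ≤ 0, b u = 0) (B : ℝ)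
    (hB : ∀ u, |b u| ≤ B) (H : ℂ → ℂ) (hH : ContinuousOn H {w | 0 ≤ w.re})
    (hL : ∀ w : ℂ, 0 < w.re → ∫ u : ℝ, (b u : ℂ) * Complex.exp (-w * u) = H w)
    (lam : ℝ) (hl : 0 < lam) :
    Tendsto (fun y => ∫ u, b u * fejK (lam * (y - u))) atTop (𝓝 0) := by
  have hKi : ∀ y, Integrable fun u => fejK (lam * (y - u)) := by
    intro y
    have := (fejK_integrable.comp_mul_left' hl.ne').comp_sub_left y
    exact this
  have key : ∀ y : ℝ, ((∫ u, b u * fejK (lam * (y - u)) : ℝ) : ℂ) =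
      ∫ t : ℝ, (fejD t : ℂ) * (Complex.exp (t * (lam * y : ℝ) * Complex.I) * H (lam * t * Complex.I)) := by
    intro y
    have l1 : Tendsto (fun s : ℝ => ∫ u, b u * exp (-s * u) * fejK (lam * (y - u))) (𝓝[>] 0) (𝓝 (∫ u, b u * fejK (lam * (y - u)))) := by
      refine tendsto_integral_filter_of_dominated_convergence (fun u => B * fejK (lam * (y - u))) ?_ ?_ ((hKi y).const_mul B) ?_
      · refine Eventually.of_forall fun s => Measurable.aestronglyMeasurable ?_
        have := fejK_meas
        fun_prop
      · filter_upwards [self_mem_nhdsWithin] with s hs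
        refine Eventually.of_forall fun u => ?_
        rw [norm_mul, norm_mul, norm_of_nonneg (fejK_nonneg _), norm_of_nonneg (exp_pos _).le, norm_eq_abs]
        refine mul_le_mul_of_nonneg_right ?_ (fejK_nonneg _)
        by_cases hu : u ≤ 0
        · rw [hb0 u hu]; simp; exact (abs_nonneg _).trans (hB 0)
        · push Not at hu
          have : exp (-s * u) ≤ 1 := exp_le_one_iff.2 (by have : 0 < s := hs; nlinarith)
          calc |b u| * exp (-s * u) ≤ |b u| * 1 := by gcongr
            _ ≤ B := by simpa using hB u
      · refine Eventually.of_forall fun u => ?_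
        have : Continuous fun s : ℝ => b u * exp (-s * u) * fejK (lam * (y - u)) := by fun_prop
        have := (this.tendsto 0).mono_left (nhdsWithin_le_nhds (s := Ioi 0))
        simpa using this
    have hcpt : IsCompact ((fun z : ℝ × ℝ => (z.1 : ℂ) + lam * z.2 * Complex.I) '' (Icc 0 1 ×ˢ Icc (-1) 1)) :=
      (isCompact_Icc.prod isCompact_Icc).image (by fun_prop)
    obtain ⟨C, hC⟩ := hcpt.exists_bound_of_continuousOn (hH.mono (by
      rintro _ ⟨z, hz, rfl⟩
      simpa using hz.1.1))
    have l2 : Tendsto (fun s : ℝ => ∫ t : ℝ, (fejD t : ℂ) * (Complex.exp (t * (lam * y : ℝ) * Complex.I) * H (s + lam * t * Complex.I))) (𝓝[>] 0) (𝓝 (∫ t : ℝ, (fejD t : ℂ) * (Complex.exp (t * (lam * y : ℝ) * Complex.I) * H (lam * t * Complex.I)))) := by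
      refine tendsto_integral_filter_of_dominated_convergence (fun t => (Icc (-1:ℝ) 1).indicator (fun _ => C) t) ?_ ?_ ?_ ?_
      · filter_upwards [self_mem_nhdsWithin] with s hs
        refine Continuous.aestronglyMeasurable ?_
        have h1 : Continuous fun t : ℝ => H (s + lam * t * Complex.I) :=
          hH.comp_continuous (by fun_prop) (fun t => by have : 0 < s := hs; simp [this.le])
        have h2 := fejD_cont
        exact (Complex.continuous_ofReal.comp h2).mul (Continuous.mul (by fun_prop) h1)
      · have : Ioo (0:ℝ) 1 ∈ 𝓝[>] (0:ℝ) := Ioo_mem_nhdsGT (by norm_num)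
        filter_upwards [this] with s hs
        refine Eventually.of_forall fun t => ?_
        by_cases ht : t ∈ Icc (-1:ℝ) 1
        · rw [indicator_of_mem ht, norm_mul, norm_mul]
          rw [show ((t:ℂ) * (lam * y : ℝ) * Complex.I) = ((t * (lam * y) : ℝ) : ℂ) * Complex.I by push_cast; ring]
          rw [Complex.norm_exp_ofReal_mul_I, one_mul, Complex.norm_real, norm_of_nonneg (fejD_nonneg t)]
          have := hC _ ⟨(s, t), ⟨⟨hs.1.le, hs.2.le⟩, ht⟩, rfl⟩
          calc fejD t * ‖H (s + lam * t * Complex.I)‖ ≤ 1 * ‖H (s + lam * t * Complex.I)‖ := by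
                gcongr; exact fejD_le t
            _ ≤ C := by simpa using this
        · rw [indicator_of_notMem ht, fejD_zero ht]; simp
      · rw [integrable_indicator_iff measurableSet_Icc]
        exact integrableOn_const (by simp)
      · refine Eventually.of_forall fun t => ?_
        have h1 : Tendsto (fun s : ℝ => H (s + lam * t * Complex.I)) (𝓝[>] 0) (𝓝 (H (lam * t * Complex.I))) := by
          have h2 := hH (lam * t * Complex.I) (by simp)
          refine h2.tendsto.comp ?_
          refine tendsto_nhdsWithin_iff.2 ⟨?_, ?_⟩
          · have : Continuous fun s : ℝ => (s : ℂ) + lam * t * Complex.I := by fun_prop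
            have := (this.tendsto 0).mono_left (nhdsWithin_le_nhds (s := Ioi 0))
            simpa using this
          · filter_upwards [self_mem_nhdsWithin] with s hs
            have : 0 < s := hs
            simp [this.le]
        exact (h1.const_mul _).const_mul _
    have l3 := (Complex.continuous_ofReal.tendsto _).comp l1
    refine tendsto_nhds_unique (l3.congr' ?_) l2
    filter_upwards [self_mem_nhdsWithin] with s hs
    exact tb_fub b hbm hb0 B hB H hL lam y s hs
  have rl := Real.tendsto_integral_exp_smul_cocompact (fun t : ℝ => (fejD t : ℂ) * H (lam * t * Complex.I))
  have l4 : Tendsto (fun y : ℝ => -(lam * y / (2 * π))) atTop (cocompact ℝ) := by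
    refine Tendsto.mono_right ?_ atBot_le_cocompact
    refine tendsto_neg_atTop_atBot.comp ?_
    exact (tendsto_id.const_mul_atTop hl).atTop_div_const (by positivity)
  have l5 := rl.comp l4
  have l6 : Tendsto (fun y => ((∫ u, b u * fejK (lam * (y - u)) : ℝ) : ℂ)) atTop (𝓝 0) := by
    refine l5.congr fun y => ?_
    rw [key y]
    simp only [Function.comp]
    congr 1; ext t
    rw [Circle.smul_def, Real.fourierChar_apply, smul_eq_mul]
    rw [show ((2 * π * -(t * -(lam * y / (2 * π))) : ℝ) : ℂ) * Complex.I = t * (lam * y : ℝ) * Complex.I by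
      push_cast
      have : (π : ℂ) ≠ 0 := by exact_mod_cast pi_ne_zero
      field_simp]
    ring
  have := (Complex.continuous_re.tendsto _).comp l6
  simpa [Function.comp_def] using this
end

section
open Real Set Filter Topology MeasureTheory

lemma tb_J (b : ℝ → ℝ) (lam : ℝ) (hl : 0 < lam)
    (h : Tendsto (fun y => ∫ u, b u * fejK (lam * (y - u))) atTop (𝓝 0)) :
    Tendsto (fun y => ∫ v, b (y - v / lam) * fejK v) atTop (𝓝 0) := by
  have := h.const_mul lam
  rw [mul_zero] at this
  refine this.congr fun y => ?_
  have e1 := integral_sub_left_eq_self (fun u => b u * fejK (lam * (y - u))) volume y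
  rw [← e1]
  have e2 := Measure.integral_comp_div (fun x => b (y - x) * fejK (lam * (y - (y - x)))) lam
  simp only [sub_sub_cancel, smul_eq_mul, abs_of_pos hl] at e2 ⊢
  rw [← e2]
  congr 1; ext v
  rw [mul_div_cancel₀ _ hl.ne']

lemma tb_tail (ε : ℝ) (hε : 0 < ε) : ∃ V : ℝ, 0 < V ∧ (∫ v, fejK v) - ε < ∫ v in Icc (-V) V, fejK v := by
  have := intervalIntegral_tendsto_integral fejK_integrable tendsto_neg_atTop_atBot tendsto_id
  have h1 := this.eventually (lt_mem_nhds (show (∫ v, fejK v) - ε < ∫ v, fejK v by linarith))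
  obtain ⟨V, hV, hV0⟩ := (h1.and (eventually_gt_atTop 0)).exists
  refine ⟨V, hV0, ?_⟩
  rwa [intervalIntegral.integral_of_le (by simp; linarith), ← integral_Icc_eq_integral_Ioc] at hV

theorem tb_final (a : ℝ → ℝ) (ham : Measurable a) (ha0 : ∀ u, 0 ≤ a u) (B : ℝ) (hB : ∀ u, a u ≤ B)
    (hmono : ∀ u v, u ≤ v → a u * exp u ≤ a v * exp v)
    (hc : ∀ lam > 0, Tendsto (fun y => ∫ u, (if u ≤ 0 then 0 else a u - 1) * fejK (lam * (y - u))) atTop (𝓝 0)) :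
    Tendsto a atTop (𝓝 1) := by
  set b : ℝ → ℝ := fun u => if u ≤ 0 then 0 else a u - 1 with hb
  have hbm : Measurable b := Measurable.ite measurableSet_Iic measurable_const (by fun_prop)
  have hB0 : 0 ≤ B := (ha0 0).trans (hB 0)
  have hb1 : ∀ u, -1 ≤ b u := by
    intro u; simp only [hb]; split_ifs
    · norm_num
    · linarith [ha0 u]
  have hb2 : ∀ u, b u ≤ B := by
    intro u; simp only [hb]; split_ifs
    · exact hB0
    · linarith [hB u]
  have hbi : ∀ y lam : ℝ, Integrable fun v => b (y - v / lam) * fejK v := by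
    intro y lam
    refine fejK_integrable.bdd_mul (c := B + 1) (hbm.comp (by fun_prop)).aestronglyMeasurable (Eventually.of_forall fun v => ?_)
    rw [norm_eq_abs, abs_le]
    constructor <;> linarith [hb1 (y - v / lam), hb2 (y - v / lam)]
  set I := ∫ v, fejK v with hI
  have hIpos : 0 < I := fejK_integral_pos
  have hindI : ∀ V : ℝ, Integrable ((Icc (-V) V).indicator fejK) := fun V => fejK_integrable.indicator measurableSet_Icc
  have hupper : ∀ η > 0, ∀ᶠ y in atTop, a y < 1 + η := by
    intro η hη
    obtain ⟨V, hV0, hV⟩ := tb_tail (η / 2 * I / (η / 2 + 1)) (by positivity)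
    have hpos : 0 < (η / 2 + 1) * (∫ v in Icc (-V) V, fejK v) - I := by
      have : (η / 2 + 1) * (I - η / 2 * I / (η / 2 + 1)) = I := by field_simp; ring
      nlinarith
    set δ := log ((1 + η) / (1 + η / 2)) / 2 with hδ
    have hδ0 : 0 < δ := by
      apply div_pos (log_pos _) (by norm_num)
      rw [one_lt_div (by positivity)]; linarith
    have hexp : exp (2 * δ) = (1 + η) / (1 + η / 2) := by
      rw [hδ, mul_div_cancel₀ _ (by norm_num), exp_log (by positivity)]
    have hlam : 0 < V / δ := by positivity
    have hJ := tb_J b _ hlam (hc _ hlam)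
    have hJ2 := (hJ.comp (tendsto_atTop_add_const_right _ δ tendsto_id)).eventually (gt_mem_nhds hpos)
    filter_upwards [hJ2, eventually_gt_atTop 0] with y hy hy0
    by_contra hcon
    push Not at hcon
    have : (η / 2 + 1) * (∫ v in Icc (-V) V, fejK v) - I ≤ ∫ v, b (y + δ - v / (V / δ)) * fejK v := by
      rw [← integral_indicator measurableSet_Icc, ← integral_const_mul, hI, ← integral_sub ((hindI V).const_mul _) fejK_integrable]
      refine integral_mono (((hindI V).const_mul _).sub fejK_integrable) (hbi _ _) fun v => ?_
      have hk := fejK_nonneg v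
      by_cases hv : v ∈ Icc (-V) V
      · simp only [indicator_of_mem hv]
        have h1 : |v / (V / δ)| ≤ δ := by
          rw [abs_div, abs_of_pos hlam, div_le_iff₀ hlam, mul_div_cancel₀ _ hδ0.ne']
          exact abs_le.2 hv
        obtain ⟨h2, h3⟩ := abs_le.1 h1
        set u := y + δ - v / (V / δ) with hu
        have h4 : y ≤ u := by linarith
        have h5 := hmono y u h4
        have h6 : exp u ≤ exp y * exp (2 * δ) := by rw [← exp_add]; apply exp_le_exp.2; linarith
        rw [hexp] at h6
        have h7 : 1 + η / 2 ≤ a u := by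
          have : (1 + η) * exp y ≤ a u * (exp y * ((1 + η) / (1 + η / 2))) :=
            calc _ ≤ a y * exp y := by gcongr
              _ ≤ _ := h5
              _ ≤ _ := by gcongr; exact ha0 u
          have hy := exp_pos y
          rw [show a u * (exp y * ((1 + η) / (1 + η / 2))) = (a u / (1 + η / 2)) * ((1 + η) * exp y) by field_simp] at this
          have h8 : 1 ≤ a u / (1 + η / 2) := by
            by_contra h9
            push Not at h9
            have : 0 < (1 + η) * exp y := by positivity
            nlinarith
          rwa [one_le_div (by positivity)] at h8
        have h8 : η / 2 ≤ b u := by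
          simp only [hb]; rw [if_neg (by linarith)]; linarith
        nlinarith
      · simp only [indicator_of_notMem hv]
        nlinarith [hb1 (y + δ - v / (V / δ))]
    simp only [Function.comp, id] at hy
    linarith
  have hlower : ∀ η > 0, η < 1 → ∀ᶠ y in atTop, 1 - η < a y := by
    intro η hη hη1
    obtain ⟨V, hV0, hV⟩ := tb_tail (η / 2 * I / (B + η / 2)) (by positivity)
    have hpos : B * I - (B + η / 2) * (∫ v in Icc (-V) V, fejK v) < 0 := by
      have : (B + η / 2) * (I - η / 2 * I / (B + η / 2)) = B * I := by field_simp; ring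
      nlinarith
    have hq : 0 < 1 - η := by linarith
    set δ := log ((1 - η / 2) / (1 - η)) / 2 with hδ
    have hq2 : 0 < 1 - η / 2 := by linarith
    have hδ0 : 0 < δ := by
      apply div_pos (log_pos _) (by norm_num)
      rw [one_lt_div (by positivity)]; linarith
    have hexp : exp (2 * δ) = (1 - η / 2) / (1 - η) := by
      rw [hδ, mul_div_cancel₀ _ (by norm_num), exp_log (by positivity)]
    have hlam : 0 < V / δ := by positivity
    have hJ := tb_J b _ hlam (hc _ hlam)
    have hJ2 := (hJ.comp (tendsto_atTop_add_const_right _ (-δ) tendsto_id)).eventually (lt_mem_nhds hpos)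
    filter_upwards [hJ2, eventually_gt_atTop (2 * δ)] with y hy hy0
    by_contra hcon
    push Not at hcon
    have : ∫ v, b (y + -δ - v / (V / δ)) * fejK v ≤ B * I - (B + η / 2) * (∫ v in Icc (-V) V, fejK v) := by
      rw [← integral_indicator measurableSet_Icc, hI, ← integral_const_mul, ← integral_const_mul, ← integral_sub (fejK_integrable.const_mul _) ((hindI V).const_mul _)]
      refine integral_mono (hbi _ _) ((fejK_integrable.const_mul _).sub ((hindI V).const_mul _)) fun v => ?_
      have hk := fejK_nonneg v
      by_cases hv : v ∈ Icc (-V) V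
      · simp only [indicator_of_mem hv]
        have h1 : |v / (V / δ)| ≤ δ := by
          rw [abs_div, abs_of_pos hlam, div_le_iff₀ hlam, mul_div_cancel₀ _ hδ0.ne']
          exact abs_le.2 hv
        obtain ⟨h2, h3⟩ := abs_le.1 h1
        set u := y + -δ - v / (V / δ) with hu
        have h4 : u ≤ y := by linarith
        have h5 := hmono u y h4
        have h6 : exp y ≤ exp u * exp (2 * δ) := by rw [← exp_add]; apply exp_le_exp.2; linarith
        rw [hexp] at h6
        have h7 : a u ≤ 1 - η / 2 := by
          have : a u * exp u ≤ (1 - η) * (exp u * ((1 - η / 2) / (1 - η))) :=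
            calc _ ≤ a y * exp y := h5
              _ ≤ (1 - η) * exp y := by gcongr
              _ ≤ _ := by gcongr
          rw [show (1 - η) * (exp u * ((1 - η / 2) / (1 - η))) = (1 - η / 2) * exp u by field_simp] at this
          exact le_of_mul_le_mul_right this (exp_pos u)
        have h8 : b u ≤ - (η / 2) := by
          simp only [hb]; rw [if_neg (by linarith)]; linarith
        nlinarith
      · simp only [indicator_of_notMem hv]
        nlinarith [hb2 (y + -δ - v / (V / δ))]
    simp only [Function.comp, id] at hy
    linarith
  rw [Metric.tendsto_nhds]
  intro ε hε
  filter_upwards [hupper ε hε, hlower (min ε (1/2)) (by positivity) (by linarith [min_le_right ε (1/2)])] with y h1 h2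
  rw [Real.dist_eq, abs_lt]
  constructor <;> linarith [min_le_left ε (1/2)]
end

section
open Real Set Filter Topology MeasureTheory

noncomputable def pntA (u : ℝ) : ℝ := Chebyshev.psi (exp u) * exp (-u)

lemma pntA_meas : Measurable pntA := by
  unfold pntA
  exact (Chebyshev.psi_mono.measurable.comp measurable_exp).mul (by fun_prop)

lemma pntA_nonneg (u : ℝ) : 0 ≤ pntA u := mul_nonneg (Chebyshev.psi_nonneg _) (exp_pos _).le

lemma pntA_bdd : ∃ B, ∀ u, pntA u ≤ B := by
  refine ⟨log 4 + 4, fun u => ?_⟩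
  have := Chebyshev.psi_le_const_mul_self (x := exp u) (exp_pos u).le
  unfold pntA
  rw [exp_neg, ← div_eq_mul_inv, div_le_iff₀ (exp_pos u)]
  exact this

lemma pnt_subst (w : ℂ) (hw : 0 < w.re) :
    ∫ t in Ioi (1:ℝ), ((Chebyshev.psi t : ℝ) : ℂ) * (t:ℂ) ^ (-(1 + w + 1)) =
    ∫ u in Ioi (0:ℝ), (pntA u : ℂ) * Complex.exp (-w * u) := by
  have himg : exp '' Ioi (0:ℝ) = Ioi 1 := by
    ext x; constructor
    · rintro ⟨u, hu, rfl⟩; exact one_lt_exp_iff.2 hu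
    · intro hx; exact ⟨log x, log_pos hx, exp_log (zero_lt_one.trans hx)⟩
  rw [← himg, integral_image_eq_integral_abs_deriv_smul measurableSet_Ioi (fun x _ => (hasDerivAt_exp x).hasDerivWithinAt) exp_injective.injOn]
  refine setIntegral_congr_fun measurableSet_Ioi fun u hu => ?_
  simp only [abs_of_pos (exp_pos u), pntA, Complex.real_smul]
  rw [Complex.cpow_def_of_ne_zero (by exact_mod_cast (exp_pos u).ne'), ← Complex.ofReal_log (exp_pos u).le, log_exp]
  push_cast
  have : Complex.exp (u:ℂ) * Complex.exp (u * (-(1 + w + 1))) = Complex.exp (-u) * Complex.exp (-w * u) := by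
    rw [← Complex.exp_add, ← Complex.exp_add]; ring_nf
  linear_combination ((Chebyshev.psi (exp u) : ℝ) : ℂ) * this

lemma pnt_exp_int (w : ℂ) (hw : 0 < w.re) : IntegrableOn (fun u : ℝ => Complex.exp (-w * u)) (Ioi 0) ∧
    ∫ u in Ioi (0:ℝ), Complex.exp (-w * u) = 1 / w := by
  have h : (-w).re < 0 := by simpa using hw
  refine ⟨integrableOn_exp_mul_complex_Ioi h 0, ?_⟩
  rw [integral_exp_mul_complex_Ioi h 0]
  simp

noncomputable def pntH (w : ℂ) : ℂ :=
  (ArithmeticFunction.vonMangoldt.LFunctionResidueClassAux (1 : ZMod 1) (1 + w) - 1) / (1 + w)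

lemma pntH_cont : ContinuousOn pntH {w | 0 ≤ w.re} := by
  have := ArithmeticFunction.vonMangoldt.continuousOn_LFunctionResidueClassAux (1 : ZMod 1)
  unfold pntH
  refine ContinuousOn.div ((this.comp (f := fun w => 1 + w) (by fun_prop) ?_).sub continuousOn_const) (by fun_prop) ?_
  · intro w hw; simp only [mem_ofPred_eq] at hw ⊢; simpa using hw
  · intro w hw h
    have := congrArg Complex.re h
    simp only [mem_ofPred_eq] at hw
    simp at this; linarith

lemma pnt_H (w : ℂ) (hw : 0 < w.re) :
    ∫ u : ℝ, ((if u ≤ 0 then 0 else pntA u - 1 : ℝ) : ℂ) * Complex.exp (-w * u) = pntH w := by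
  obtain ⟨B, hB⟩ := pntA_bdd
  have hs : 1 < (1 + w).re := by simpa using hw
  have hw0 : w ≠ 0 := by rintro rfl; simp at hw
  have hs0 : 1 + w ≠ 0 := by intro h; rw [h] at hs; simp at hs; linarith
  have h1 := ArithmeticFunction.vonMangoldt.eqOn_LFunctionResidueClassAux (q := 1) (a := 1) isUnit_one hs
  have hres : ∀ n, ArithmeticFunction.vonMangoldt.residueClass (1 : ZMod 1) n = ArithmeticFunction.vonMangoldt n := by
    intro n
    simp [ArithmeticFunction.vonMangoldt.residueClass, Set.indicator, eq_iff_true_of_subsingleton]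
  simp only [hres] at h1
  have h2 := LSeries_eq_mul_integral_of_nonneg (fun n => ArithmeticFunction.vonMangoldt n) (r := 1) zero_le_one hs (by
    have hb : (fun n : ℕ => Chebyshev.psi n) =O[atTop] fun n : ℕ => (n:ℝ) := by
      refine Asymptotics.IsBigO.of_bound (log 4 + 4) (Eventually.of_forall fun n => ?_)
      rw [norm_of_nonneg (Chebyshev.psi_nonneg _), norm_of_nonneg (Nat.cast_nonneg _)]
      exact Chebyshev.psi_le_const_mul_self (Nat.cast_nonneg _)
    have e : ∀ n : ℕ, Finset.Icc 1 n = Finset.Ioc 0 n := fun n => rfl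
    simpa [Chebyshev.psi, e] using hb) (fun n => ArithmeticFunction.vonMangoldt_nonneg)
  have h3 : ∫ t in Ioi (1:ℝ), (∑ k ∈ Finset.Icc 1 ⌊t⌋₊, ((ArithmeticFunction.vonMangoldt k : ℝ) : ℂ)) * (t:ℂ) ^ (-(1 + w + 1)) = ∫ t in Ioi (1:ℝ), ((Chebyshev.psi t : ℝ) : ℂ) * (t:ℂ) ^ (-(1 + w + 1)) := by
    refine setIntegral_congr_fun measurableSet_Ioi fun u hu => ?_
    simp only [Chebyshev.psi]
    push_cast
    rfl
  rw [h3, pnt_subst w hw] at h2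
  obtain ⟨hi, hiv⟩ := pnt_exp_int w hw
  have h4 : ∫ u : ℝ, ((if u ≤ 0 then 0 else pntA u - 1 : ℝ) : ℂ) * Complex.exp (-w * u) =
      ∫ u in Ioi (0:ℝ), ((pntA u : ℂ) * Complex.exp (-w * u) - Complex.exp (-w * u)) := by
    rw [← integral_indicator measurableSet_Ioi]
    congr 1; ext u
    by_cases hu : u ≤ 0
    · simp [hu]
    · rw [indicator_of_mem (by simpa using hu), if_neg hu]; push_cast; ring
  rw [h4, integral_sub _ hi, hiv]
  · simp only [Nat.totient_one, Nat.cast_one, inv_one, add_sub_cancel_left] at h1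
    rw [h2] at h1
    unfold pntH
    rw [h1]
    field_simp
    ring
  · refine hi.bdd_mul (c := B) (by exact (Complex.measurable_ofReal.comp pntA_meas).aestronglyMeasurable) (Eventually.of_forall fun u => ?_)
    rw [Complex.norm_real, norm_of_nonneg (pntA_nonneg u)]; exact hB u

theorem pnt_A : Tendsto pntA atTop (𝓝 1) := by
  obtain ⟨B, hB⟩ := pntA_bdd
  have hB0 : 0 ≤ B := (pntA_nonneg 0).trans (hB 0)
  refine tb_final pntA pntA_meas pntA_nonneg B hB ?_ ?_
  · intro u v huv
    have h (u : ℝ) : pntA u * exp u = Chebyshev.psi (exp u) := by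
      unfold pntA; rw [mul_assoc, ← exp_add]; simp
    rw [h, h]; exact Chebyshev.psi_mono (exp_le_exp.2 huv)
  · intro lam hlam
    refine tb_conv _ (Measurable.ite measurableSet_Iic measurable_const (pntA_meas.sub_const 1)) (fun u hu => if_pos hu) (B + 1) ?_ pntH pntH_cont pnt_H lam hlam
    intro u
    split_ifs
    · simp; linarith
    · rw [abs_le]; constructor <;> linarith [pntA_nonneg u, hB u]

theorem pnt_psi : Tendsto (fun x => Chebyshev.psi x / x) atTop (𝓝 1) := by
  refine (pnt_A.comp tendsto_log_atTop).congr' ?_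
  filter_upwards [eventually_gt_atTop 0] with x hx
  simp [pntA, exp_log hx, exp_neg, div_eq_mul_inv]

theorem pnt_theta : Tendsto (fun x => Chebyshev.theta x / x) atTop (𝓝 1) := by
  have h := Chebyshev.isBigO_psi_sub_theta_sqrt
  have h2 : (fun x : ℝ => Chebyshev.psi x - Chebyshev.theta x) =o[atTop] fun x : ℝ => x := by
    refine h.trans_isLittleO ?_
    refine Asymptotics.isLittleO_of_tendsto' ?_ ?_
    · filter_upwards [eventually_gt_atTop 0] with x hx h; exact absurd h hx.ne'
    · have : Tendsto (fun x => 1 / sqrt x) atTop (𝓝 0) := by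
        simpa [Function.comp_def] using tendsto_inv_atTop_zero.comp tendsto_sqrt_atTop
      refine this.congr' ?_
      filter_upwards [eventually_gt_atTop 0] with x hx
      rw [div_eq_div_iff (sqrt_pos.2 hx).ne' hx.ne', one_mul, mul_self_sqrt hx.le]
  have h3 := h2.tendsto_div_nhds_zero
  have := pnt_psi.sub h3
  simp only [sub_zero] at this
  refine this.congr fun x => ?_
  ring
end

section
open Real Set Filter Topology

lemma irr_final (α σ τ κ : ℝ) (hσ : 0 < σ) (hτ : 0 < τ) (hκ : 1 + σ / τ < κ)
    (h : ∀ᶠ N : ℕ in atTop, ∀ (p : ℤ) (q : ℕ+), ∃ A B : ℤ, A * (q : ℤ) + B * p ≠ 0 ∧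
      |(B : ℝ)| ≤ exp (σ * N) ∧ |A + B * α| ≤ exp (-(τ * N))) :
    {pq : ℤ × ℕ+ | |α - (pq.1 : ℝ) / ((pq.2 : ℕ) : ℝ)| < ((pq.2 : ℕ) : ℝ) ^ (-κ)}.Finite := by
  obtain ⟨N0, hN0⟩ := eventually_atTop.1 h
  have hκ0 : 0 < κ := lt_trans (by positivity) hκ
  -- bound on q
  have hq : ∃ M : ℕ, ∀ (p : ℤ) (q : ℕ+), |α - (p : ℝ) / ((q : ℕ) : ℝ)| < ((q : ℕ) : ℝ) ^ (-κ) → (q : ℕ) ≤ M := by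
    set δ := κ - (1 + σ / τ) with hδ
    have hδ0 : 0 < δ := by linarith
    have ht : Tendsto (fun q : ℕ => ((q : ℝ)) ^ δ) atTop atTop :=
      (tendsto_rpow_atTop hδ0).comp tendsto_natCast_atTop_atTop
    have ht2 : Tendsto (fun q : ℕ => log (2 * q) / τ) atTop atTop :=
      (tendsto_log_atTop.comp (tendsto_natCast_atTop_atTop.const_mul_atTop (by norm_num : (0:ℝ) < 2))).atTop_div_const hτ
    obtain ⟨M, hM⟩ := eventually_atTop.1 ((ht.eventually_ge_atTop (exp σ * 2 ^ (1 + σ / τ))).and (ht2.eventually_ge_atTop (N0 : ℝ)))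
    refine ⟨M, fun p q hpq => ?_⟩
    by_contra hlt
    push Not at hlt
    obtain ⟨h1, h2⟩ := hM q hlt.le
    set Q : ℝ := ((q : ℕ) : ℝ) with hQ
    have hQ0 : 0 < Q := by rw [hQ]; exact_mod_cast q.pos
    have hQ1 : 1 ≤ Q := by rw [hQ]; exact_mod_cast q.pos
    set N := ⌈log (2 * Q) / τ⌉₊ with hN
    have hNge : log (2 * Q) / τ ≤ N := Nat.le_ceil _
    have hlog0 : 0 ≤ log (2 * Q) / τ := div_nonneg (log_nonneg (by linarith)) hτ.le
    have hNlt : (N : ℝ) < log (2 * Q) / τ + 1 := Nat.ceil_lt_add_one hlog0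
    have hNN : N0 ≤ N := by exact_mod_cast h2.trans hNge
    obtain ⟨A, B, hAB, hB, hL⟩ := hN0 N hNN p q
    have hint : (1 : ℝ) ≤ |A * Q + B * p| := by
      have := Int.one_le_abs hAB
      rw [hQ]; exact_mod_cast this
    have hid : A * Q + B * p = Q * (A + B * α) - Q * B * (α - p / Q) := by field_simp; ring
    have hle : |A * Q + B * p| ≤ Q * |A + B * α| + Q * |(B : ℝ)| * |α - p / Q| := by
      rw [hid]
      refine (abs_sub _ _).trans ?_
      rw [abs_mul, abs_mul, abs_mul, abs_of_pos hQ0]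
    have h3 : Q * exp (-(τ * N)) ≤ 1 / 2 := by
      have : 2 * Q ≤ exp (τ * N) := by
        rw [← exp_log (by positivity : 0 < 2 * Q)]
        apply exp_le_exp.2
        rw [div_le_iff₀ hτ] at hNge; linarith
      rw [exp_neg, ← div_eq_mul_inv, div_le_iff₀ (exp_pos _)]; linarith
    have h4 : exp (σ * N) ≤ exp σ * (2 * Q) ^ (σ / τ) := by
      rw [rpow_def_of_pos (by positivity), ← exp_add]
      apply exp_le_exp.2
      have := mul_le_mul_of_nonneg_left hNlt.le hσ.le
      calc _ ≤ _ := this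
        _ = _ := by ring
    have h5 : Q * |(B : ℝ)| * |α - p / Q| < Q * (exp σ * (2 * Q) ^ (σ / τ)) * Q ^ (-κ) := by
      calc _ ≤ Q * (exp σ * (2 * Q) ^ (σ / τ)) * |α - p / Q| := by
            gcongr; exact hB.trans h4
        _ < _ := by gcongr
    have h6 : Q * (exp σ * (2 * Q) ^ (σ / τ)) * Q ^ (-κ) ≤ 1 / 2 := by
      have e1 : Q * Q ^ (σ / τ) * Q ^ (-κ) = (Q ^ δ)⁻¹ := by
        rw [← rpow_neg hQ0.le, hδ]
        nth_rewrite 1 [← rpow_one Q]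
        rw [← rpow_add hQ0, ← rpow_add hQ0]; congr 1; ring
      have e2 : (2 * Q) ^ (σ / τ) = 2 ^ (σ / τ) * Q ^ (σ / τ) := mul_rpow (by norm_num) hQ0.le
      have e3 : (2 : ℝ) ^ (1 + σ / τ) = 2 * 2 ^ (σ / τ) := by rw [rpow_add (by norm_num), rpow_one]
      rw [e2]
      calc _ = exp σ * 2 ^ (σ / τ) * (Q * Q ^ (σ / τ) * Q ^ (-κ)) := by ring
        _ = exp σ * 2 ^ (σ / τ) / Q ^ δ := by rw [e1]; rfl
        _ ≤ _ := by
          rw [div_le_iff₀ (by positivity)]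
          rw [e3] at h1; nlinarith
    have h7 : Q * |A + B * α| ≤ 1 / 2 := (mul_le_mul_of_nonneg_left hL hQ0.le).trans h3
    linarith
  obtain ⟨M, hM⟩ := hq
  set W : ℤ := ⌈(|α| + 1) * M⌉ with hW
  have hfin : ((Icc (-W) W) ×ˢ {q : ℕ+ | (q : ℕ) ≤ M}).Finite := by
    refine (finite_Icc _ _).prod ?_
    exact Set.Finite.preimage (f := fun q : ℕ+ => (q : ℕ)) PNat.coe_injective.injOn (finite_Iic M)
  refine hfin.subset ?_
  rintro ⟨p, q⟩ hpq
  have hpq' : |α - (p : ℝ) / ((q : ℕ) : ℝ)| < ((q : ℕ) : ℝ) ^ (-κ) := hpq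
  have hqM := hM p q hpq'
  refine ⟨?_, hqM⟩
  have hQ1 : (1:ℝ) ≤ ((q : ℕ) : ℝ) := by exact_mod_cast q.pos
  have hQM : ((q : ℕ) : ℝ) ≤ M := by exact_mod_cast hqM
  have h1 : ((q : ℕ) : ℝ) ^ (-κ) ≤ 1 := rpow_le_one_of_one_le_of_nonpos hQ1 (by linarith)
  have h2 : |(p : ℝ) / ((q : ℕ) : ℝ)| ≤ |α| + 1 := by
    have := abs_sub_abs_le_abs_sub ((p : ℝ) / ((q : ℕ) : ℝ)) α
    rw [abs_sub_comm] at this; linarith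
  have h3 : |(p : ℝ)| ≤ (|α| + 1) * M := by
    rw [abs_div, abs_of_pos (by linarith : (0:ℝ) < ((q : ℕ) : ℝ)), div_le_iff₀ (by linarith)] at h2
    exact h2.trans (by gcongr)
  have h4 : |(p : ℝ)| ≤ W := h3.trans (Int.le_ceil _)
  have h5 : |p| ≤ W := by exact_mod_cast h4
  exact abs_le.1 h5
end

section
open Polynomial

noncomputable def bpol (m : ℕ) : ℚ[X] := C ((m.factorial : ℚ)⁻¹) * ∏ i ∈ Finset.range m, (X + C ((i : ℚ) + 1))

noncomputable def bpol' (m : ℕ) : ℚ[X] := bpol m * (C ((m + 1 : ℚ)⁻¹) * (C 2 * X + C (m + 1 : ℚ)))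

lemma bpol_eval (m : ℕ) (x : ℚ) : (bpol m).eval x = (m.factorial : ℚ)⁻¹ * ∏ i ∈ Finset.range m, (x + (i + 1)) := by
  simp [bpol, eval_prod]

lemma bpol'_eval (m : ℕ) (x : ℚ) : (bpol' m).eval x = (bpol m).eval x * ((m + 1 : ℚ)⁻¹ * (2 * x + (m + 1))) := by
  simp [bpol']

lemma bpol_nat (m j : ℕ) : (bpol m).eval (j : ℚ) = ((j + m).choose m : ℕ) := by
  rw [bpol_eval]
  have h : ((j + 1).ascFactorial m : ℚ) = ∏ i ∈ Finset.range m, ((j : ℚ) + (i + 1)) := by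
    rw [Nat.ascFactorial_eq_prod_range]; push_cast
    exact Finset.prod_congr rfl fun i _ => by ring
  rw [← h, Nat.ascFactorial_eq_factorial_mul_choose]
  push_cast
  have : (m.factorial : ℚ) ≠ 0 := by exact_mod_cast m.factorial_ne_zero
  field_simp

lemma bpol'_nat (m j : ℕ) : (bpol' m).eval (j : ℚ) = ((j + (m + 1)).choose (m + 1) + (j + m).choose (m + 1) : ℕ) := by
  rw [bpol'_eval, bpol_nat]
  have h1 : ((j + (m + 1)).choose (m + 1) : ℚ) * (m + 1) = (j + m + 1) * (j + m).choose m := by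
    have := Nat.add_one_mul_choose_eq (j + m) m
    rw [← add_assoc]; exact_mod_cast this.symm
  have h2 : ((j + m).choose (m + 1) : ℚ) * (m + 1) = (j + m).choose m * j := by
    have := Nat.choose_succ_right_eq (j + m) m
    rw [Nat.add_sub_cancel] at this
    exact_mod_cast this
  have : (m + 1 : ℚ) ≠ 0 := by positivity
  push_cast
  field_simp
  linear_combination -h1 - h2

lemma bpol_symm (m : ℕ) (x : ℚ) : (bpol m).eval (-(m + 1) - x) = (-1) ^ m * (bpol m).eval x := by
  rw [bpol_eval, bpol_eval, ← Finset.prod_range_reflect (fun i : ℕ => x + ((i : ℚ) + 1))]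
  have : ∏ i ∈ Finset.range m, (-(m + 1 : ℚ) - x + (i + 1)) = ∏ i ∈ Finset.range m, ((-1) * (x + (((m - 1 - i : ℕ) : ℚ) + 1))) := by
    refine Finset.prod_congr rfl fun i hi => ?_
    have hi' := Finset.mem_range.1 hi
    rw [Nat.cast_sub (by omega), Nat.cast_sub (by omega)]
    push_cast; ring
  rw [this, Finset.prod_mul_distrib]
  simp; ring

lemma bpol'_symm (m : ℕ) (x : ℚ) : (bpol' m).eval (-(m + 1) - x) = -(-1) ^ m * (bpol' m).eval x := by
  rw [bpol'_eval, bpol'_eval, bpol_symm]; ring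

lemma bpol_zero (m i : ℕ) (h1 : 1 ≤ i) (h2 : i ≤ m) : (bpol m).eval (-(i : ℚ)) = 0 := by
  rw [bpol_eval, Finset.prod_eq_zero (i := i - 1) (Finset.mem_range.2 (by omega)), mul_zero]
  rw [Nat.cast_sub h1]; simp

lemma bpol'_zero (m i : ℕ) (h1 : 1 ≤ i) (h2 : i ≤ m) : (bpol' m).eval (-(i : ℚ)) = 0 := by
  rw [bpol'_eval, bpol_zero m i h1 h2, zero_mul]

lemma bpol_deg (m : ℕ) : (bpol m).natDegree ≤ m := by
  unfold bpol
  refine (natDegree_C_mul_le _ _).trans ?_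
  refine (natDegree_prod_le _ _).trans ?_
  refine (Finset.sum_le_card_nsmul _ _ 1 fun i _ => (natDegree_X_add_C _).le).trans ?_
  simp

lemma bpol'_deg (m : ℕ) : (bpol' m).natDegree ≤ m + 1 := by
  unfold bpol'
  refine natDegree_mul_le.trans (add_le_add (bpol_deg m) ?_)
  compute_degree

section
variable (r s : ℝ) (hr0 : 0 < r) (hr1 : r < 1) (hr : r / (1 - r ^ 2) = 2) (hs : (1 + r ^ 2) / (1 - r ^ 2) = s)
include hr0 hr1 hr

lemma bpol_sum (m : ℕ) : HasSum (fun j : ℕ => (((bpol m).eval (j : ℚ) : ℚ) : ℝ) * r ^ (2 * j + m + 1)) (2 ^ (m + 1)) := by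
  have hz : ‖r ^ 2‖ < 1 := by rw [Real.norm_of_nonneg (by positivity)]; nlinarith
  have h := (hasSum_choose_mul_geometric_of_norm_lt_one m hz).mul_right (r ^ (m + 1))
  have e : 1 / (1 - r ^ 2) ^ (m + 1) * r ^ (m + 1) = 2 ^ (m + 1) := by
    rw [← hr, div_pow]; ring
  rw [e] at h
  refine h.congr_fun ?_
  intro j
  rw [bpol_nat]; push_cast
  rw [pow_add, pow_add, pow_mul]; ring

include hs in
lemma bpol'_sum (m : ℕ) : HasSum (fun j : ℕ => (((bpol' m).eval (j : ℚ) : ℚ) : ℝ) * r ^ (2 * j + m + 1)) (s * 2 ^ (m + 1)) := by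
  have hz : ‖r ^ 2‖ < 1 := by rw [Real.norm_of_nonneg (by positivity)]; nlinarith
  have h := hasSum_choose_mul_geometric_of_norm_lt_one (m + 1) hz
  have h2 : HasSum (fun j : ℕ => ((j + m).choose (m + 1) : ℝ) * (r ^ 2) ^ j) (r ^ 2 * (1 / (1 - r ^ 2) ^ (m + 1 + 1))) := by
    rw [← hasSum_nat_add_iff' 1]
    simp only [Finset.range_one, Finset.sum_singleton, zero_add, Nat.choose_succ_self, Nat.cast_zero, zero_mul, sub_zero]
    refine (h.mul_left (r ^ 2)).congr_fun ?_
    intro j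
    rw [show j + 1 + m = j + (m + 1) by ring, pow_succ]; ring
  have h3 := (h.add h2).mul_right (r ^ (m + 1))
  have h1z : 1 - r ^ 2 ≠ 0 := by nlinarith
  have e : (1 / (1 - r ^ 2) ^ (m + 1 + 1) + r ^ 2 * (1 / (1 - r ^ 2) ^ (m + 1 + 1))) * r ^ (m + 1) = s * 2 ^ (m + 1) := by
    rw [← hs, ← hr, div_pow]; field_simp; ring
  rw [e] at h3
  refine h3.congr_fun ?_
  intro j
  rw [bpol'_nat]; push_cast
  rw [pow_add, pow_add, pow_mul]; ring

lemma alg_step (t : ℝ) (m f : ℕ) (b T : ℚ[X]) (ε : ℚ) (hbsym : ∀ x : ℚ, b.eval (-(m + 1) - x) = ε * b.eval x)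
    (hbz : ∀ i : ℕ, 1 ≤ i → i ≤ m → b.eval (-(i : ℚ)) = 0)
    (hbi : ∀ j : ℕ, ∃ a : ℤ, b.eval (j : ℚ) = a) (hb0 : b.eval 0 = 1) (hbd : b.natDegree ≤ m + 1)
    (hbs : HasSum (fun j : ℕ => ((b.eval (j : ℚ) : ℚ) : ℝ) * r ^ (2 * j + m + 1)) (t * 2 ^ (m + 1)))
    (hTsym : ∀ x : ℚ, T.eval (-(m + 1) - x) = ε * T.eval x)
    (hTz : ∀ i : ℕ, 1 ≤ i → i ≤ m → T.eval (-(i : ℚ)) = 0)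
    (hTi : ∀ j : ℕ, ∃ a : ℤ, T.eval (j : ℚ) = a) (hTd : T.natDegree < m + 2 * (f + 1))
    (ih : ∀ U : ℚ[X], (∀ x : ℚ, U.eval (-(((m + 2 : ℕ) : ℚ) + 1) - x) = ε * U.eval x) →
      (∀ i : ℕ, 1 ≤ i → i ≤ m + 2 → U.eval (-(i : ℚ)) = 0) → (∀ j : ℕ, ∃ a : ℤ, U.eval (j : ℚ) = a) →
      U.natDegree < m + 2 + 2 * f → ∃ A : ℤ, HasSum (fun j : ℕ => ((U.eval (j : ℚ) : ℚ) : ℝ) * r ^ (2 * j + (m + 2) + 1)) (t * 2 ^ (m + 2 + 1) * A)) :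
    ∃ A : ℤ, HasSum (fun j : ℕ => ((T.eval (j : ℚ) : ℚ) : ℝ) * r ^ (2 * j + m + 1)) (t * 2 ^ (m + 1) * A) := by
  obtain ⟨a0, ha0⟩ := hTi 0
  simp only [Nat.cast_zero] at ha0
  set U : ℚ[X] := (T - C (a0 : ℚ) * b).comp (X + C 1) with hU
  have hUe : ∀ x, U.eval x = T.eval (x + 1) - a0 * b.eval (x + 1) := by intro x; simp [hU]
  have k0 : ∀ x : ℚ, U.eval (-(((m + 2 : ℕ) : ℚ) + 1) - x) = ε * U.eval x := by
    intro x
    rw [hUe, hUe]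
    have e : -(((m + 2 : ℕ) : ℚ) + 1) - x + 1 = -(m + 1) - (x + 1) := by push_cast; ring
    rw [e, hTsym, hbsym]; ring
  have k1 : ∀ i : ℕ, 1 ≤ i → i ≤ m + 2 → U.eval (-(i : ℚ)) = 0 := by
    intro i h1 h2
    rw [hUe]
    rcases Nat.eq_or_lt_of_le h1 with rfl | h1
    · simp [ha0, hb0]
    rcases Nat.eq_or_lt_of_le h2 with rfl | h2
    · have e : -(((m + 2 : ℕ) : ℚ)) + 1 = -(m + 1) - 0 := by push_cast; ring
      rw [e, hTsym, hbsym, ha0, hb0]; ring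
    · have e : -(i : ℚ) + 1 = -((i - 1 : ℕ) : ℚ) := by rw [Nat.cast_sub (by omega)]; push_cast; ring
      rw [e, hTz _ (by omega) (by omega), hbz _ (by omega) (by omega)]; simp
  have k2 : ∀ j : ℕ, ∃ a : ℤ, U.eval (j : ℚ) = a := by
    intro j
    obtain ⟨u, hu⟩ := hTi (j + 1)
    obtain ⟨v, hv⟩ := hbi (j + 1)
    refine ⟨u - a0 * v, ?_⟩
    rw [hUe]; push_cast at hu hv ⊢; rw [hu, hv]
  have k3 : U.natDegree < m + 2 + 2 * f := by
    have : U.natDegree ≤ max T.natDegree (m + 1) := by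
      rw [hU, natDegree_comp, natDegree_X_add_C, mul_one]
      refine (natDegree_sub_le _ _).trans (max_le_max le_rfl ((natDegree_C_mul_le _ _).trans hbd))
    omega
  obtain ⟨A, hA⟩ := ih U k0 k1 k2 k3
  · refine ⟨a0 + 4 * A, ?_⟩
    have h1 : HasSum (fun j : ℕ => ((T.eval (j : ℚ) - a0 * b.eval (j : ℚ) : ℚ) : ℝ) * r ^ (2 * j + m + 1)) (t * 2 ^ (m + 2 + 1) * A) := by
      rw [← hasSum_nat_add_iff' 1]
      simp only [Finset.range_one, Finset.sum_singleton, Nat.cast_zero, ha0, hb0, mul_one, sub_self, Rat.cast_zero, zero_mul, sub_zero]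
      refine hA.congr_fun ?_
      intro j
      rw [hUe]; push_cast
      rw [show 2 * (j + 1) + m + 1 = 2 * j + (m + 2) + 1 by ring]
    have h2 := h1.add (hbs.mul_left (a0 : ℝ))
    convert h2 using 1
    · ext j; push_cast; ring
    · push_cast; ring

lemma alg_base (t : ℝ) (m : ℕ) (T : ℚ[X])
    (hTz : ∀ i : ℕ, 1 ≤ i → i ≤ m → T.eval (-(i : ℚ)) = 0) (hTd : T.natDegree < m) :
    ∃ A : ℤ, HasSum (fun j : ℕ => ((T.eval (j : ℚ) : ℚ) : ℝ) * r ^ (2 * j + m + 1)) (t * 2 ^ (m + 1) * A) := by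
  have : T = 0 := by
    refine eq_zero_of_natDegree_lt_card_of_eval_eq_zero T (f := fun i : Fin m => -((i : ℚ) + 1)) ?_ ?_ ?_
    · intro i j hij
      simp only [neg_inj, add_left_inj, Nat.cast_inj] at hij
      exact Fin.ext hij
    · intro i
      have := hTz (i + 1) (by omega) (by omega)
      push_cast at this; exact this
    · simpa using hTd
  refine ⟨0, ?_⟩
  simp [this, hasSum_zero]

theorem alg_even (f : ℕ) : ∀ (m : ℕ) (T : ℚ[X]), (∀ x : ℚ, T.eval (-(m + 1) - x) = (-1) ^ m * T.eval x) →
    (∀ i : ℕ, 1 ≤ i → i ≤ m → T.eval (-(i : ℚ)) = 0) → (∀ j : ℕ, ∃ a : ℤ, T.eval (j : ℚ) = a) → T.natDegree < m + 2 * f →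
    ∃ A : ℤ, HasSum (fun j : ℕ => ((T.eval (j : ℚ) : ℚ) : ℝ) * r ^ (2 * j + m + 1)) (1 * 2 ^ (m + 1) * A) := by
  induction f with
  | zero => intro m T _ h2 _ h4; exact alg_base r hr0 hr1 hr 1 m T h2 (by simpa using h4)
  | succ f ih =>
    intro m T h1 h2 h3 h4
    refine alg_step r hr0 hr1 hr 1 m f (bpol m) T _ (bpol_symm m) (bpol_zero m) (fun j => ⟨_, by rw [bpol_nat]; norm_cast⟩) ?_ ((bpol_deg m).trans (by omega)) ?_ h1 h2 h3 h4 ?_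
    · simpa using bpol_nat m 0
    · simpa using bpol_sum r hr0 hr1 hr m
    · intro U u1 u2 u3 u4
      exact ih (m + 2) U (by intro x; rw [u1]; ring) u2 u3 u4

include hs in
theorem alg_odd (f : ℕ) : ∀ (m : ℕ) (T : ℚ[X]), (∀ x : ℚ, T.eval (-(m + 1) - x) = -(-1) ^ m * T.eval x) →
    (∀ i : ℕ, 1 ≤ i → i ≤ m → T.eval (-(i : ℚ)) = 0) → (∀ j : ℕ, ∃ a : ℤ, T.eval (j : ℚ) = a) → T.natDegree < m + 2 * f →
    ∃ A : ℤ, HasSum (fun j : ℕ => ((T.eval (j : ℚ) : ℚ) : ℝ) * r ^ (2 * j + m + 1)) (s * 2 ^ (m + 1) * A) := by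
  induction f with
  | zero => intro m T _ h2 _ h4; exact alg_base r hr0 hr1 hr s m T h2 (by simpa using h4)
  | succ f ih =>
    intro m T h1 h2 h3 h4
    refine alg_step r hr0 hr1 hr s m f (bpol' m) T _ (bpol'_symm m) (bpol'_zero m) (fun j => ⟨_, by rw [bpol'_nat]; norm_cast⟩) ?_ (bpol'_deg m) ?_ h1 h2 h3 h4 ?_
    · simpa using bpol'_nat m 0
    · exact bpol'_sum r s hr0 hr1 hr hs m
    · intro U u1 u2 u3 u4
      exact ih (m + 2) U (by intro x; rw [u1]; ring) u2 u3 u4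
end
end

section
open Polynomial

noncomputable def binP (m : ℕ) : ℚ[X] := C ((m.factorial : ℚ)⁻¹) * ∏ i ∈ Finset.range m, (X - C (i : ℚ))

lemma binP_eval (m : ℕ) (x : ℚ) : (binP m).eval x = (m.factorial : ℚ)⁻¹ * ∏ i ∈ Finset.range m, (x - i) := by
  simp [binP, eval_prod]

lemma binP_pascal (m : ℕ) (x : ℚ) : (binP (m + 1)).eval (x + 1) = (binP (m + 1)).eval x + (binP m).eval x := by
  simp only [binP_eval]
  rw [Finset.prod_range_succ' , Finset.prod_range_succ]
  have : ∏ k ∈ Finset.range m, (x + 1 - ((k + 1 : ℕ) : ℚ)) = ∏ k ∈ Finset.range m, (x - k) :=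
    Finset.prod_congr rfl fun i _ => by push_cast; ring
  rw [this, Nat.factorial_succ]
  have : (m.factorial : ℚ) ≠ 0 := by exact_mod_cast m.factorial_ne_zero
  push_cast
  field_simp
  ring

lemma binP_pascal' (m : ℕ) : (binP (m + 1)).comp (X + C 1) = binP (m + 1) + binP m := by
  refine Polynomial.funext fun x => ?_
  simpa using binP_pascal m x

lemma binP_nat (m ν : ℕ) : (binP m).eval (ν : ℚ) = (ν.choose m : ℕ) := by
  induction ν generalizing m with
  | zero =>
    rcases m with _ | m
    · simp [binP]
    · rw [binP_eval, Finset.prod_eq_zero (i := 0) (by simp)] <;> simp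
  | succ ν ih =>
    rcases m with _ | m
    · simp [binP]
    · push_cast
      rw [binP_pascal, ih, ih, Nat.choose_succ_succ]; push_cast; ring

lemma binP_der_zero (m : ℕ) : (derivative (binP (m + 1))).eval 0 = (-1) ^ m / (m + 1) := by
  have h : binP (m + 1) = C (((m + 1).factorial : ℚ)⁻¹) * ((∏ i ∈ Finset.range m, (X - C ((i + 1 : ℕ) : ℚ))) * X) := by
    rw [binP, Finset.prod_range_succ']; simp
  rw [h, derivative_C_mul, derivative_mul]
  simp only [eval_mul, eval_C, eval_add, derivative_X, eval_X, mul_zero, zero_add, eval_one, mul_one, eval_prod, eval_sub]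
  have h2 : ∏ i ∈ Finset.range m, ((0:ℚ) - ((i + 1 : ℕ) : ℚ)) = (-1) ^ m * m.factorial := by
    rw [← Finset.prod_range_add_one_eq_factorial]; push_cast
    rw [← Finset.card_range m, ← Finset.prod_const, Finset.card_range, ← Finset.prod_mul_distrib]
    exact Finset.prod_congr rfl fun i _ => by ring
  rw [h2, Nat.factorial_succ]
  have : (m.factorial : ℚ) ≠ 0 := by exact_mod_cast m.factorial_ne_zero
  push_cast
  field_simp

lemma binP_der (m ν : ℕ) : (derivative (binP m)).eval (ν : ℚ) =
    ∑ i ∈ Finset.range m, (-1) ^ i / ((i : ℚ) + 1) * (ν.choose (m - 1 - i) : ℕ) := by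
  induction ν generalizing m with
  | zero =>
    rcases m with _ | m
    · simp [binP]
    · rw [Nat.cast_zero, binP_der_zero, Finset.sum_range_succ, Finset.sum_eq_zero]
      · simp
      · intro i hi
        have := Finset.mem_range.1 hi
        rw [Nat.choose_eq_zero_of_lt (by omega)]; simp
  | succ ν ih =>
    rcases m with _ | m
    · simp [binP]
    · have h := congrArg derivative (binP_pascal' m)
      rw [derivative_comp] at h
      have h2 := congrArg (eval (ν : ℚ)) h
      simp only [derivative_add, derivative_X, derivative_C, add_zero, one_mul, eval_comp, eval_add, eval_X, eval_C] at h2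
      push_cast
      rw [h2, ih, ih, Finset.sum_range_succ, Finset.sum_range_succ, add_right_comm, ← Finset.sum_add_distrib]
      congr 1
      · refine Finset.sum_congr rfl fun i hi => ?_
        have := Finset.mem_range.1 hi
        rw [show m + 1 - 1 - i = (m - 1 - i) + 1 by omega, show m - i = (m - 1 - i) + 1 by omega, Nat.choose_succ_succ]
        push_cast; ring
      · simp

/-- integer representing `D * C(·,m)'(ν)` -/
lemma binP_der_int (D m ν : ℕ) (hD : ∀ i, 1 ≤ i → i ≤ m → i ∣ D) :
    ∃ a : ℤ, (D : ℚ) * (derivative (binP m)).eval (ν : ℚ) = a ∧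
      ∀ p : ℕ, p.Prime → p ∣ D → ν % p < m % p → (p : ℤ) ∣ a := by
  refine ⟨∑ i ∈ Finset.range m, (-1) ^ i * ((D / (i + 1) : ℕ) : ℤ) * (ν.choose (m - 1 - i) : ℕ), ?_, ?_⟩
  · rw [binP_der, Finset.mul_sum]; push_cast
    refine Finset.sum_congr rfl fun i hi => ?_
    have h := Finset.mem_range.1 hi
    have hd := hD (i + 1) (by omega) (by omega)
    have hq : ((D : ℤ) / ((i : ℤ) + 1) : ℤ) = ((D / (i + 1) : ℕ) : ℤ) := by push_cast; rfl
    rw [hq, Int.cast_natCast, Nat.cast_div hd (by positivity)]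
    push_cast
    field_simp
  · intro p hp hpD hlt
    haveI : Fact p.Prime := ⟨hp⟩
    refine Finset.dvd_sum fun i hi => ?_
    have h := Finset.mem_range.1 hi
    have hd := hD (i + 1) (by omega) (by omega)
    by_cases hpi : p ∣ i + 1
    · refine Dvd.dvd.mul_left ?_ _
      have hc : p ∣ ν.choose (m - 1 - i) := by
        have hL := Choose.choose_modEq_choose_mod_mul_choose_div_nat (n := ν) (k := m - 1 - i) (p := p)
        have e : (m - 1 - i) % p = m % p := by
          obtain ⟨c, hc⟩ := hpi
          have : m = (m - 1 - i) + p * c := by omega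
          conv_rhs => rw [this, Nat.add_mul_mod_self_left]
        rw [e, Nat.choose_eq_zero_of_lt hlt, zero_mul] at hL
        exact (Nat.modEq_zero_iff_dvd).1 hL
      exact_mod_cast hc
    · refine Dvd.dvd.mul_right (Dvd.dvd.mul_left ?_ _) _
      have hc : p ∣ D / (i + 1) := by
        have : p ∣ (i + 1) * (D / (i + 1)) := by rw [Nat.mul_div_cancel' hd]; exact hpD
        exact (hp.dvd_mul.1 this).resolve_left hpi
      exact_mod_cast hc

lemma choose_dvd_of_mod (p ν m : ℕ) (hp : p.Prime) (hlt : ν % p < m % p) : p ∣ ν.choose m := by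
  haveI : Fact p.Prime := ⟨hp⟩
  have hL := Choose.choose_modEq_choose_mod_mul_choose_div_nat (n := ν) (k := m) (p := p)
  rw [Nat.choose_eq_zero_of_lt hlt, zero_mul] at hL
  exact (Nat.modEq_zero_iff_dvd).1 hL

lemma quot_bounds (p r x k a b : ℤ) (hp : 0 < p) (hr0 : 0 ≤ r) (hr : r < p) (h : r = x - p * k)
    (ha : a * p ≤ x) (hb : x < b * p) : a ≤ k ∧ k < b := by
  constructor
  · by_contra hk
    push Not at hk
    have : p * k ≤ p * (a - 1) := by gcongr; omega
    nlinarith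
  · by_contra hk
    push Not at hk
    have : p * b ≤ p * k := by gcongr
    nlinarith

lemma saved_core (p t v x1 x2 r7 r5 r3 k7 k5 k3 e1 e2 : ℤ) (hp : 0 < p)
    (ht0 : 0 ≤ t) (ht : t < p) (hv0 : 0 ≤ v) (hv : v < p) (hx10 : 0 ≤ x1) (hx1 : x1 < p) (hx20 : 0 ≤ x2) (hx2 : x2 < p)
    (hr70 : 0 ≤ r7) (hr7 : r7 < p) (hr50 : 0 ≤ r5) (hr5 : r5 < p) (hr30 : 0 ≤ r3) (hr3 : r3 < p)
    (h7 : r7 = 7 * t - p * k7) (h5 : r5 = 5 * t - p * k5) (h3 : r3 = 3 * t - p * k3)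
    (h1 : x1 = (v - t) - p * e1) (h2 : x2 = (v - 2 * t) - p * e2)
    (hI : (p < 6 * t ∧ 7 * t < 3 * p) ∨ (p < 2 * t ∧ 7 * t < 5 * p) ∨ (3 * p < 4 * t ∧ 7 * t < 6 * p)) :
    v < r7 ∨ x1 < r5 ∨ x2 < r3 := by
  by_contra hcon
  push Not at hcon
  obtain ⟨c1, c2, c3⟩ := hcon
  obtain ⟨u1, u2⟩ := quot_bounds p x1 (v - t) e1 (-1) 1 hp hx10 hx1 h1 (by linarith) (by linarith)
  obtain ⟨w1, w2⟩ := quot_bounds p x2 (v - 2 * t) e2 (-2) 1 hp hx20 hx2 h2 (by linarith) (by linarith)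
  rcases hI with ⟨i1, i2⟩ | ⟨i1, i2⟩ | ⟨i1, i2⟩
  · obtain ⟨a1, a2⟩ := quot_bounds p r7 (7 * t) k7 1 3 hp hr70 hr7 h7 (by linarith) (by linarith)
    obtain ⟨b1, b2⟩ := quot_bounds p r5 (5 * t) k5 0 3 hp hr50 hr5 h5 (by linarith) (by linarith)
    obtain ⟨d1, d2⟩ := quot_bounds p r3 (3 * t) k3 0 2 hp hr30 hr3 h3 (by linarith) (by linarith)
    interval_cases k7 <;> interval_cases e1 <;> interval_cases k5 <;> interval_cases e2 <;> interval_cases k3 <;> omega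
  · obtain ⟨a1, a2⟩ := quot_bounds p r7 (7 * t) k7 3 5 hp hr70 hr7 h7 (by linarith) (by linarith)
    obtain ⟨b1, b2⟩ := quot_bounds p r5 (5 * t) k5 2 4 hp hr50 hr5 h5 (by linarith) (by linarith)
    obtain ⟨d1, d2⟩ := quot_bounds p r3 (3 * t) k3 1 3 hp hr30 hr3 h3 (by linarith) (by linarith)
    interval_cases k7 <;> interval_cases e1 <;> interval_cases k5 <;> interval_cases e2 <;> interval_cases k3 <;> omega
  · obtain ⟨a1, a2⟩ := quot_bounds p r7 (7 * t) k7 5 6 hp hr70 hr7 h7 (by linarith) (by linarith)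
    obtain ⟨b1, b2⟩ := quot_bounds p r5 (5 * t) k5 3 5 hp hr50 hr5 h5 (by linarith) (by linarith)
    obtain ⟨d1, d2⟩ := quot_bounds p r3 (3 * t) k3 2 3 hp hr30 hr3 h3 (by linarith) (by linarith)
    interval_cases k7 <;> interval_cases e1 <;> interval_cases k5 <;> interval_cases e2 <;> interval_cases k3 <;> omega

/-- the "saved" condition on a prime -/
def savedP (n p : ℕ) : Prop :=
  (p < 6 * (n % p) ∧ 7 * (n % p) < 3 * p) ∨ (p < 2 * (n % p) ∧ 7 * (n % p) < 5 * p) ∨ (3 * p < 4 * (n % p) ∧ 7 * (n % p) < 6 * p)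

lemma saved_mod (n p ν : ℕ) (hp : 0 < p) (h : savedP n p) (hν : 6 * n ≤ ν) :
    ν % p < (7 * n) % p ∨ (ν - n) % p < (5 * n) % p ∨ (ν - 2 * n) % p < (3 * n) % p := by
  have hdm : ∀ a : ℕ, ((a % p : ℕ) : ℤ) = a - p * (a / p : ℕ) := by
    intro a; have := Nat.mod_add_div a p; have h2 : ((a % p : ℕ) : ℤ) + p * (a / p : ℕ) = a := by exact_mod_cast this
    linarith
  have hlt : ∀ a : ℕ, ((a % p : ℕ) : ℤ) < p := fun a => by exact_mod_cast Nat.mod_lt a hp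
  have hnn : ∀ a : ℕ, 0 ≤ ((a % p : ℕ) : ℤ) := fun a => by positivity
  have key := saved_core p (n % p : ℕ) (ν % p : ℕ) ((ν - n) % p : ℕ) ((ν - 2 * n) % p : ℕ) ((7 * n) % p : ℕ) ((5 * n) % p : ℕ) ((3 * n) % p : ℕ)
    ((7 * n) / p - 7 * (n / p) : ℤ) ((5 * n) / p - 5 * (n / p) : ℤ) ((3 * n) / p - 3 * (n / p) : ℤ)
    (((ν - n : ℕ) / p : ℕ) - (ν / p : ℕ) + (n / p : ℕ)) (((ν - 2 * n : ℕ) / p : ℕ) - (ν / p : ℕ) + 2 * (n / p : ℕ))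
    (by exact_mod_cast hp) (hnn _) (hlt _) (hnn _) (hlt _) (hnn _) (hlt _) (hnn _) (hlt _) (hnn _) (hlt _) (hnn _) (hlt _) (hnn _) (hlt _)
    (by rw [hdm, hdm]; push_cast; ring) (by rw [hdm, hdm]; push_cast; ring) (by rw [hdm, hdm]; push_cast; ring)
    (by rw [hdm, hdm, hdm, Nat.cast_sub (by omega)]; ring) (by rw [hdm, hdm, hdm, Nat.cast_sub (by omega)]; push_cast; ring)
    (by unfold savedP at h; exact_mod_cast h)
  exact_mod_cast key
end

section
open Polynomial

noncomputable def Rp (n : ℕ) : ℚ[X] := binP (7 * n) * (binP (5 * n)).comp (X - C (n : ℚ)) * (binP (3 * n)).comp (X - C (2 * n : ℚ))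

noncomputable def Lp (n : ℕ) : ℚ[X] := C 2 * X - C (7 * n - 1 : ℚ)

noncomputable def Rk (n k : ℕ) : ℚ[X] := Rp n * Lp n ^ k

noncomputable def Qn (n : ℕ) (P : Finset ℕ) : ℕ := Nat.lcmUpto (7 * n) / ∏ p ∈ P, p

lemma dvd_lcmUpto (m i : ℕ) (h1 : 1 ≤ i) (h2 : i ≤ m) : i ∣ Nat.lcmUpto m :=
  Finset.dvd_lcm (f := id) (Finset.mem_Icc.2 ⟨h1, h2⟩)

lemma savedP_le (n p : ℕ) (h : savedP n p) : p ≤ 7 * n := by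
  have : n % p ≤ n := Nat.mod_le _ _
  unfold savedP at h; omega

lemma prod_primes_dvd (P : Finset ℕ) (hP : ∀ p ∈ P, p.Prime) (a : ℤ) (h : ∀ p ∈ P, (p : ℤ) ∣ a) :
    ((∏ p ∈ P, p : ℕ) : ℤ) ∣ a := by
  push_cast
  refine Finset.prod_dvd_of_coprime ?_ h
  intro p hp q hq hpq
  have := (Nat.coprime_primes (hP p hp) (hP q hq)).2 hpq
  exact Nat.isCoprime_iff_coprime.2 this

lemma Rp_eval_nat (n ν : ℕ) (hν : 2 * n ≤ ν) : (Rp n).eval (ν : ℚ) = (ν.choose (7 * n) * (ν - n).choose (5 * n) * (ν - 2 * n).choose (3 * n) : ℕ) := by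
  have e1 : ((ν : ℚ) - n) = ((ν - n : ℕ) : ℚ) := by rw [Nat.cast_sub (by omega)]
  have e2 : ((ν : ℚ) - 2 * n) = ((ν - 2 * n : ℕ) : ℚ) := by rw [Nat.cast_sub (by omega)]; push_cast; rfl
  simp only [Rp, eval_mul, eval_comp, eval_sub, eval_X, eval_C, binP_nat]
  rw [e1, e2, binP_nat, binP_nat]; push_cast; rfl

lemma Rp_der_nat (n ν : ℕ) (hν : 2 * n ≤ ν) : (derivative (Rp n)).eval (ν : ℚ) =
    (derivative (binP (7 * n))).eval (ν : ℚ) * (ν - n).choose (5 * n) * (ν - 2 * n).choose (3 * n)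
    + (derivative (binP (5 * n))).eval ((ν - n : ℕ) : ℚ) * ν.choose (7 * n) * (ν - 2 * n).choose (3 * n)
    + (derivative (binP (3 * n))).eval ((ν - 2 * n : ℕ) : ℚ) * ν.choose (7 * n) * (ν - n).choose (5 * n) := by
  have e1 : ((ν : ℚ) - n) = ((ν - n : ℕ) : ℚ) := by rw [Nat.cast_sub (by omega)]
  have e2 : ((ν : ℚ) - 2 * n) = ((ν - 2 * n : ℕ) : ℚ) := by rw [Nat.cast_sub (by omega)]; push_cast; rfl
  simp only [Rp, derivative_mul, derivative_comp, derivative_sub, derivative_X, derivative_C, sub_zero, one_mul, eval_add, eval_mul, eval_comp, eval_sub, eval_X, eval_C, binP_nat]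
  rw [e1, e2, binP_nat, binP_nat]; ring

section
variable (n : ℕ) (P : Finset ℕ) (hP : ∀ p ∈ P, p.Prime ∧ savedP n p)
include hP

lemma prod_dvd_lcm : (∏ p ∈ P, p) ∣ Nat.lcmUpto (7 * n) := by
  have := prod_primes_dvd P (fun p hp => (hP p hp).1) (Nat.lcmUpto (7 * n)) (fun p hp => by
    exact_mod_cast dvd_lcmUpto _ p (hP p hp).1.one_le (savedP_le n p (hP p hp).2))
  exact_mod_cast this

lemma Qn_mul : (Qn n P : ℚ) * (∏ p ∈ P, p : ℕ) = Nat.lcmUpto (7 * n) := by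
  unfold Qn; exact_mod_cast Nat.div_mul_cancel (prod_dvd_lcm n P hP)

lemma prodP_ne : ((∏ p ∈ P, p : ℕ) : ℚ) ≠ 0 := by
  have : (∏ p ∈ P, p) ≠ 0 := Finset.prod_ne_zero_iff.2 fun p hp => (hP p hp).1.ne_zero
  exact_mod_cast this

lemma Rp_der_int (ν : ℕ) (hν : 6 * n ≤ ν) : ∃ a : ℤ, (Qn n P : ℚ) * (derivative (Rp n)).eval (ν : ℚ) = a := by
  set D := Nat.lcmUpto (7 * n) with hD
  obtain ⟨a7, h7, d7⟩ := binP_der_int D (7 * n) ν (fun i h1 h2 => dvd_lcmUpto _ _ h1 (by omega))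
  obtain ⟨a5, h5, d5⟩ := binP_der_int D (5 * n) (ν - n) (fun i h1 h2 => dvd_lcmUpto _ _ h1 (by omega))
  obtain ⟨a3, h3, d3⟩ := binP_der_int D (3 * n) (ν - 2 * n) (fun i h1 h2 => dvd_lcmUpto _ _ h1 (by omega))
  set M : ℤ := a7 * (ν - n).choose (5 * n) * (ν - 2 * n).choose (3 * n) + a5 * ν.choose (7 * n) * (ν - 2 * n).choose (3 * n)
    + a3 * ν.choose (7 * n) * (ν - n).choose (5 * n) with hM
  have hDM : (D : ℚ) * (derivative (Rp n)).eval (ν : ℚ) = M := by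
    rw [Rp_der_nat n ν (by omega), hM]; push_cast
    rw [← h7, ← h5, ← h3]; ring
  have hdiv : ((∏ p ∈ P, p : ℕ) : ℤ) ∣ M := by
    refine prod_primes_dvd P (fun p hp => (hP p hp).1) M fun p hp => ?_
    obtain ⟨hpp, hs⟩ := hP p hp
    have hpD : p ∣ D := dvd_lcmUpto _ p hpp.one_le (savedP_le n p hs)
    rcases saved_mod n p ν hpp.pos hs hν with h | h | h
    · have k1 := d7 p hpp hpD h
      have k2 : (p : ℤ) ∣ (ν.choose (7 * n) : ℕ) := by exact_mod_cast choose_dvd_of_mod p _ _ hpp h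
      exact dvd_add (dvd_add ((k1.mul_right _).mul_right _) ((k2.mul_left _).mul_right _)) ((k2.mul_left _).mul_right _)
    · have k1 := d5 p hpp hpD h
      have k2 : (p : ℤ) ∣ ((ν - n).choose (5 * n) : ℕ) := by exact_mod_cast choose_dvd_of_mod p _ _ hpp h
      exact dvd_add (dvd_add ((k2.mul_left _).mul_right _) ((k1.mul_right _).mul_right _)) (k2.mul_left _)
    · have k1 := d3 p hpp hpD h
      have k2 : (p : ℤ) ∣ ((ν - 2 * n).choose (3 * n) : ℕ) := by exact_mod_cast choose_dvd_of_mod p _ _ hpp h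
      exact dvd_add (dvd_add (k2.mul_left _) (k2.mul_left _)) ((k1.mul_right _).mul_right _)
  obtain ⟨c, hc⟩ := hdiv
  refine ⟨c, ?_⟩
  have h0 := prodP_ne n P hP
  have hQ := Qn_mul n P hP
  apply mul_left_cancel₀ h0
  have : ((∏ p ∈ P, p : ℕ) : ℚ) * c = M := by rw [hc]; push_cast; ring
  rw [this, ← hDM, hD, ← hQ]; ring

lemma Rk_int (k ν : ℕ) (hν : 6 * n ≤ ν) : ∃ a : ℤ, (Qn n P : ℚ) * (Rk n k).eval (ν : ℚ) = a := by
  refine ⟨(Qn n P : ℤ) * (ν.choose (7 * n) * (ν - n).choose (5 * n) * (ν - 2 * n).choose (3 * n) : ℕ) * (2 * ν - (7 * n - 1)) ^ k, ?_⟩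
  simp only [Rk, eval_mul, eval_pow, Rp_eval_nat n ν (by omega), Lp, eval_sub, eval_C, eval_X]
  push_cast; ring

lemma Rk_der_int (k ν : ℕ) (hν : 6 * n ≤ ν) : ∃ a : ℤ, (Qn n P : ℚ) * (derivative (Rk n k)).eval (ν : ℚ) = a := by
  obtain ⟨a, ha⟩ := Rp_der_int n P hP ν hν
  refine ⟨a * (2 * ν - (7 * n - 1)) ^ k + (Qn n P : ℤ) * (ν.choose (7 * n) * (ν - n).choose (5 * n) * (ν - 2 * n).choose (3 * n) : ℕ) * (2 * k * (2 * ν - (7 * n - 1)) ^ (k - 1)), ?_⟩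
  rw [Rk, derivative_mul, derivative_pow]
  simp only [eval_add, eval_mul, eval_pow, Rp_eval_nat n ν (by omega), Lp, eval_sub, eval_C, eval_X, derivative_sub, derivative_mul, derivative_C, derivative_X, eval_one, eval_zero]
  push_cast
  rw [← ha]; ring
end

lemma binP_symm (m : ℕ) (x : ℚ) : (binP m).eval (m - 1 - x) = (-1) ^ m * (binP m).eval x := by
  rw [binP_eval, binP_eval, ← Finset.prod_range_reflect (fun i : ℕ => x - (i : ℚ))]
  have : ∏ i ∈ Finset.range m, ((m : ℚ) - 1 - x - i) = ∏ i ∈ Finset.range m, ((-1) * (x - ((m - 1 - i : ℕ) : ℚ))) := by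
    refine Finset.prod_congr rfl fun i hi => ?_
    have hi' := Finset.mem_range.1 hi
    rw [Nat.cast_sub (by omega), Nat.cast_sub (by omega)]
    push_cast; ring
  rw [this, Finset.prod_mul_distrib]
  simp; ring

lemma Rp_symm (n : ℕ) (x : ℚ) : (Rp n).eval (7 * n - 1 - x) = (-1) ^ n * (Rp n).eval x := by
  simp only [Rp, eval_mul, eval_comp, eval_sub, eval_X, eval_C]
  have h7 := binP_symm (7 * n) x
  have h5 := binP_symm (5 * n) (x - n)
  have h3 := binP_symm (3 * n) (x - 2 * n)
  push_cast at h7 h5 h3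
  rw [show (7 * n - 1 - x - n : ℚ) = 5 * n - 1 - (x - n) by ring, show (7 * n - 1 - x - 2 * n : ℚ) = 3 * n - 1 - (x - 2 * n) by ring, h7, h5, h3]
  have : ((-1 : ℚ)) ^ (7 * n) * (-1) ^ (5 * n) * (-1) ^ (3 * n) = (-1) ^ n := by
    rw [← pow_add, ← pow_add, show 7 * n + 5 * n + 3 * n = 2 * (7 * n) + n by ring, pow_add, pow_mul]; simp
  linear_combination (eval x (binP (7 * n)) * eval (x - n) (binP (5 * n)) * eval (x - 2 * n) (binP (3 * n))) * this

lemma Rk_symm (n k : ℕ) (x : ℚ) : (Rk n k).eval (7 * n - 1 - x) = (-1) ^ (n + k) * (Rk n k).eval x := by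
  simp only [Rk, eval_mul, eval_pow, Rp_symm, Lp, eval_sub, eval_X, eval_C]
  rw [show (2 * (7 * n - 1 - x) - (7 * n - 1) : ℚ) = (-1) * (2 * x - (7 * n - 1)) by ring, mul_pow]; ring

lemma Rk_der_symm (n k : ℕ) (x : ℚ) : (derivative (Rk n k)).eval (7 * n - 1 - x) = -(-1) ^ (n + k) * (derivative (Rk n k)).eval x := by
  have h : (Rk n k).comp (C (7 * n - 1 : ℚ) - X) = C ((-1 : ℚ) ^ (n + k)) * Rk n k := by
    refine Polynomial.funext fun x => ?_
    simpa using Rk_symm n k x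
  have h2 := congrArg (fun p => eval x (derivative p)) h
  simp only [derivative_comp, derivative_C_mul, derivative_sub, derivative_C, derivative_X, eval_mul, eval_comp, eval_sub, eval_C, eval_X, eval_zero, eval_one] at h2
  linarith

lemma Rk_zero (n k ν : ℕ) (h1 : n ≤ ν) (h2 : ν < 6 * n) : (Rk n k).eval (ν : ℚ) = 0 ∧ (derivative (Rk n k)).eval (ν : ℚ) = 0 := by
  have z7 : (binP (7 * n)).eval (ν : ℚ) = 0 := by
    rw [binP_nat, Nat.choose_eq_zero_of_lt (by omega)]; simp
  have z5 : (binP (5 * n)).eval ((ν : ℚ) - n) = 0 := by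
    rw [← Nat.cast_sub h1, binP_nat, Nat.choose_eq_zero_of_lt (by omega)]; simp
  constructor
  · simp [Rk, Rp, z7]
  · simp only [Rk, Rp, derivative_mul, eval_add, eval_mul, eval_comp, eval_sub, eval_X, eval_C, z7, z5]
    ring

theorem forms (r s : ℝ) (hr0 : 0 < r) (hr1 : r < 1) (hr : r / (1 - r ^ 2) = 2) (hs : (1 + r ^ 2) / (1 - r ^ 2) = s)
    (n : ℕ) (P : Finset ℕ) (hP : ∀ p ∈ P, p.Prime ∧ savedP n p) (k : ℕ) :
    ∃ A B : ℤ, HasSum (fun j : ℕ => (((Qn n P : ℚ) * (Rk n k).eval ((6 * n + j : ℕ) : ℚ) : ℚ) : ℝ) * r ^ (2 * j + 5 * n + 1)) ((if Even k then 1 else s) * 2 ^ (5 * n + 1) * B) ∧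
     HasSum (fun j : ℕ => (((Qn n P : ℚ) * (derivative (Rk n k)).eval ((6 * n + j : ℕ) : ℚ) : ℚ) : ℝ) * r ^ (2 * j + 5 * n + 1)) ((if Even k then s else 1) * 2 ^ (5 * n + 1) * A) := by
  set T : ℚ[X] := C (Qn n P : ℚ) * (Rk n k).comp (X + C (6 * n : ℚ)) with hT
  set U : ℚ[X] := C (Qn n P : ℚ) * (derivative (Rk n k)).comp (X + C (6 * n : ℚ)) with hU
  have hTe : ∀ x, T.eval x = Qn n P * (Rk n k).eval (x + 6 * n) := by intro x; simp [hT]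
  have hUe : ∀ x, U.eval x = Qn n P * (derivative (Rk n k)).eval (x + 6 * n) := by intro x; simp [hU]
  have hc : ∀ j : ℕ, (j : ℚ) + 6 * n = ((6 * n + j : ℕ) : ℚ) := by intro j; push_cast; ring
  have hm : (-1 : ℚ) ^ (5 * n) = (-1) ^ n := by
    rw [show 5 * n = 2 * (2 * n) + n by ring, pow_add, pow_mul]; simp
  have hTz : ∀ i : ℕ, 1 ≤ i → i ≤ 5 * n → T.eval (-(i : ℚ)) = 0 := by
    intro i h1 h2
    rw [hTe, show -(i : ℚ) + 6 * n = ((6 * n - i : ℕ) : ℚ) by rw [Nat.cast_sub (by omega)]; push_cast; ring,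
      (Rk_zero n k _ (by omega) (by omega)).1, mul_zero]
  have hUz : ∀ i : ℕ, 1 ≤ i → i ≤ 5 * n → U.eval (-(i : ℚ)) = 0 := by
    intro i h1 h2
    rw [hUe, show -(i : ℚ) + 6 * n = ((6 * n - i : ℕ) : ℚ) by rw [Nat.cast_sub (by omega)]; push_cast; ring,
      (Rk_zero n k _ (by omega) (by omega)).2, mul_zero]
  have hTi : ∀ j : ℕ, ∃ a : ℤ, T.eval (j : ℚ) = a := by
    intro j; rw [hTe, hc]; exact Rk_int n P hP k _ (by omega)
  have hUi : ∀ j : ℕ, ∃ a : ℤ, U.eval (j : ℚ) = a := by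
    intro j; rw [hUe, hc]; exact Rk_der_int n P hP k _ (by omega)
  have hTs : ∀ x : ℚ, T.eval (-((5 * n : ℕ) + 1) - x) = (-1) ^ (n + k) * T.eval x := by
    intro x; rw [hTe, hTe, show (-((5 * n : ℕ) + 1) - x + 6 * n : ℚ) = 7 * n - 1 - (x + 6 * n) by push_cast; ring, Rk_symm]; ring
  have hUs : ∀ x : ℚ, U.eval (-((5 * n : ℕ) + 1) - x) = -(-1) ^ (n + k) * U.eval x := by
    intro x; rw [hUe, hUe, show (-((5 * n : ℕ) + 1) - x + 6 * n : ℚ) = 7 * n - 1 - (x + 6 * n) by push_cast; ring, Rk_der_symm]; ring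
  simp only [← hc, ← hTe, ← hUe]
  have dT : T.natDegree < 5 * n + 2 * (T.natDegree + 1) := by omega
  have dU : U.natDegree < 5 * n + 2 * (U.natDegree + 1) := by omega
  by_cases hk : Even k
  · simp only [hk, if_true]
    rw [pow_add, hk.neg_one_pow, mul_one, ← hm] at hTs hUs
    obtain ⟨B, hB⟩ := alg_even r hr0 hr1 hr _ (5 * n) T hTs hTz hTi dT
    obtain ⟨A, hA⟩ := alg_odd r s hr0 hr1 hr hs _ (5 * n) U hUs hUz hUi dU
    exact ⟨A, B, hB, hA⟩
  · simp only [hk, if_false]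
    rw [pow_add, (Nat.not_even_iff_odd.1 hk).neg_one_pow, ← hm] at hTs hUs
    obtain ⟨B, hB⟩ := alg_odd r s hr0 hr1 hr hs _ (5 * n) T (by intro x; rw [hTs]; ring) hTz hTi dT
    obtain ⟨A, hA⟩ := alg_even r hr0 hr1 hr _ (5 * n) U (by intro x; rw [hUs]; ring) hUz hUi dU
    exact ⟨A, B, hB, hA⟩
end

section
open Real Set Filter Topology

lemma theta_sub (x y : ℝ) (hxy : y ≤ x) : Chebyshev.theta x - Chebyshev.theta y = ∑ p ∈ (Finset.Ioc ⌊y⌋₊ ⌊x⌋₊).filter Nat.Prime, log p := by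
  unfold Chebyshev.theta
  have hf : ⌊y⌋₊ ≤ ⌊x⌋₊ := Nat.floor_mono hxy
  have : (Finset.Ioc 0 ⌊x⌋₊).filter Nat.Prime = (Finset.Ioc 0 ⌊y⌋₊).filter Nat.Prime ∪ (Finset.Ioc ⌊y⌋₊ ⌊x⌋₊).filter Nat.Prime := by
    rw [← Finset.filter_union, Finset.Ioc_union_Ioc_eq_Ioc (Nat.zero_le _) hf]
  rw [this, Finset.sum_union]
  · ring
  · refine Finset.disjoint_filter_filter ?_
    rw [Finset.disjoint_left]; intro p h1 h2
    simp only [Finset.mem_Ioc] at h1 h2; omega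

lemma save_one (n K : ℕ) (hn : 2 * (K + 1) < n) (a b : ℝ) (ha : 0 < a) (hab : a < b) (hb : b < 1) (P : Finset ℕ)
    (hP : ∀ p : ℕ, p.Prime → p ≠ 2 → a * p ≤ (n % p : ℕ) → ((n % p : ℕ) : ℝ) < b * p → p ∈ P) (hP1 : ∀ p ∈ P, 1 ≤ p) :
    ∑ j ∈ Finset.range K, (Chebyshev.theta (n / (j + a)) - Chebyshev.theta (n / (j + b))) ≤ ∑ p ∈ P, log p := by
  classical
  have hb0 : 0 < b := ha.trans hab
  have hlog : ∀ p ∈ P, 0 ≤ log (p : ℝ) := fun p hp => log_nonneg (by exact_mod_cast hP1 p hp)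
  calc _ ≤ ∑ j ∈ Finset.range K, ∑ p ∈ (P.filter fun p => n / p < K).filter (fun p => n / p = j), log p := by
        refine Finset.sum_le_sum fun j hj => ?_
        have hj' := Finset.mem_range.1 hj
        rw [theta_sub _ _ (by gcongr)]
        refine Finset.sum_le_sum_of_subset_of_nonneg ?_ (fun p hp _ => hlog p (Finset.mem_filter.1 (Finset.mem_filter.1 hp).1).1)
        intro p hp
        simp only [Finset.mem_filter, Finset.mem_Ioc] at hp
        obtain ⟨⟨h1, h2⟩, hpp⟩ := hp
        have hp0 : (0:ℝ) < p := by exact_mod_cast hpp.pos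
        have h1' : n / (j + b) < (p : ℝ) := (Nat.floor_lt (by positivity)).1 h1
        have h2' : (p : ℝ) ≤ n / (j + a) := (Nat.le_floor_iff (by positivity)).1 h2
        have hjb : (0:ℝ) < j + b := by positivity
        rw [div_lt_iff₀ hjb] at h1'
        rw [le_div_iff₀ (by positivity)] at h2'
        have hle : p * j ≤ n := by
          have : (p : ℝ) * j ≤ n := by nlinarith
          exact_mod_cast this
        have hlt : n < p * (j + 1) := by
          have : (n : ℝ) < p * (j + 1) := by nlinarith
          exact_mod_cast this
        have hq : n / p = j := by
          rw [Nat.div_eq_iff hpp.pos]; constructor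
          · rw [mul_comm]; exact hle
          · rw [mul_comm] at hlt; rw [Nat.add_mul] at hlt; omega
        have hmod : ((n % p : ℕ) : ℝ) = n - p * j := by
          have := Nat.mod_add_div n p
          rw [hq] at this
          have h3 : ((n % p : ℕ) : ℝ) + p * j = n := by exact_mod_cast this
          linarith
        simp only [Finset.mem_filter]
        refine ⟨⟨hP p hpp ?_ ?_ ?_, by omega⟩, hq⟩
        · rintro rfl; omega
        · rw [hmod]; nlinarith
        · rw [hmod]; nlinarith
    _ = ∑ p ∈ P.filter fun p => n / p < K, log p :=
        Finset.sum_fiberwise_of_maps_to (fun p hp => Finset.mem_range.2 (Finset.mem_filter.1 hp).2) _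
    _ ≤ _ := Finset.sum_le_sum_of_subset_of_nonneg (Finset.filter_subset _ _) (fun p hp _ => hlog p hp)

open Classical in
noncomputable def savedSet (n : ℕ) : Finset ℕ := (Finset.range (7 * n + 1)).filter fun p => p.Prime ∧ savedP n p

lemma savedSet_spec (n : ℕ) : ∀ p ∈ savedSet n, p.Prime ∧ savedP n p := by
  intro p hp; classical
  unfold savedSet at hp
  exact (Finset.mem_filter.1 hp).2

lemma Qn_pos (n : ℕ) : 0 < Qn n (savedSet n) := by
  have h := prod_dvd_lcm n _ (savedSet_spec n)
  exact Nat.div_pos (Nat.le_of_dvd (Nat.lcmUpto_pos _) h) (Nat.pos_of_dvd_of_pos h (Nat.lcmUpto_pos _))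

lemma log_Qn (n : ℕ) : log (Qn n (savedSet n)) = Chebyshev.psi (7 * n : ℕ) - ∑ p ∈ savedSet n, log p := by
  have h := Qn_mul n _ (savedSet_spec n)
  have h' : (Qn n (savedSet n) : ℝ) * ((∏ p ∈ savedSet n, p : ℕ) : ℝ) = (Nat.lcmUpto (7 * n) : ℝ) := by exact_mod_cast h
  rw [Chebyshev.psi_eq_log_lcmUpto, ← h', log_mul]
  · push_cast
    rw [log_prod]
    · ring
    · intro p hp; exact_mod_cast (savedSet_spec n p hp).1.ne_zero
  · exact_mod_cast (Qn_pos n).ne'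
  · have := prodP_ne n _ (savedSet_spec n); exact_mod_cast this

lemma saved_sum (n K : ℕ) (hn : 2 * (K + 1) < n) :
    ∑ j ∈ Finset.range K, (Chebyshev.theta (n / (j + 1/6)) - Chebyshev.theta (n / (j + 3/7)))
    + ∑ j ∈ Finset.range K, (Chebyshev.theta (n / (j + 1/2)) - Chebyshev.theta (n / (j + 5/7)))
    + ∑ j ∈ Finset.range K, (Chebyshev.theta (n / (j + 3/4)) - Chebyshev.theta (n / (j + 6/7))) ≤ ∑ p ∈ savedSet n, log p := by
  classical
  have hone : ∀ p ∈ savedSet n, 1 ≤ p := fun p hp => (savedSet_spec n p hp).1.one_le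
  set S1 := (savedSet n).filter fun p => p < 6 * (n % p) ∧ 7 * (n % p) < 3 * p with hS1
  set S2 := (savedSet n).filter fun p => p < 2 * (n % p) ∧ 7 * (n % p) < 5 * p with hS2
  set S3 := (savedSet n).filter fun p => 3 * p < 4 * (n % p) ∧ 7 * (n % p) < 6 * p with hS3
  have hmem : ∀ p, p.Prime → savedP n p → p ∈ savedSet n := by
    intro p hp hs
    unfold savedSet
    have := savedP_le n p hs
    exact Finset.mem_filter.2 ⟨Finset.mem_range.2 (by omega), hp, hs⟩
  have h1 := save_one n K hn (1/6) (3/7) (by norm_num) (by norm_num) (by norm_num) S1 (by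
    intro p hp h2 ha hb
    have hodd := hp.eq_two_or_odd.resolve_left h2
    have ha' : p ≤ 6 * (n % p) := by have : (p : ℝ) ≤ 6 * (n % p : ℕ) := by linarith
                                     exact_mod_cast this
    have hb' : 7 * (n % p) < 3 * p := by have : 7 * ((n % p : ℕ) : ℝ) < 3 * p := by linarith
                                         exact_mod_cast this
    have hc : p < 6 * (n % p) ∧ 7 * (n % p) < 3 * p := ⟨by omega, hb'⟩
    exact Finset.mem_filter.2 ⟨hmem p hp (Or.inl hc), hc⟩) (fun p hp => hone p (Finset.mem_filter.1 hp).1)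
  have h2 := save_one n K hn (1/2) (5/7) (by norm_num) (by norm_num) (by norm_num) S2 (by
    intro p hp h2 ha hb
    have hodd := hp.eq_two_or_odd.resolve_left h2
    have ha' : p ≤ 2 * (n % p) := by have : (p : ℝ) ≤ 2 * (n % p : ℕ) := by linarith
                                     exact_mod_cast this
    have hb' : 7 * (n % p) < 5 * p := by have : 7 * ((n % p : ℕ) : ℝ) < 5 * p := by linarith
                                         exact_mod_cast this
    have hc : p < 2 * (n % p) ∧ 7 * (n % p) < 5 * p := ⟨by omega, hb'⟩
    exact Finset.mem_filter.2 ⟨hmem p hp (Or.inr (Or.inl hc)), hc⟩) (fun p hp => hone p (Finset.mem_filter.1 hp).1)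
  have h3 := save_one n K hn (3/4) (6/7) (by norm_num) (by norm_num) (by norm_num) S3 (by
    intro p hp h2 ha hb
    have hodd := hp.eq_two_or_odd.resolve_left h2
    have ha' : 3 * p ≤ 4 * (n % p) := by have : 3 * (p : ℝ) ≤ 4 * (n % p : ℕ) := by linarith
                                         exact_mod_cast this
    have hb' : 7 * (n % p) < 6 * p := by have : 7 * ((n % p : ℕ) : ℝ) < 6 * p := by linarith
                                         exact_mod_cast this
    have hc : 3 * p < 4 * (n % p) ∧ 7 * (n % p) < 6 * p := ⟨by omega, hb'⟩
    exact Finset.mem_filter.2 ⟨hmem p hp (Or.inr (Or.inr hc)), hc⟩) (fun p hp => hone p (Finset.mem_filter.1 hp).1)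
  have d12 : Disjoint S1 S2 := by
    rw [Finset.disjoint_left]; intro p hp hq
    have a := (Finset.mem_filter.1 hp).2; have b := (Finset.mem_filter.1 hq).2; omega
  have d123 : Disjoint (S1 ∪ S2) S3 := by
    rw [Finset.disjoint_left]; intro p hp hq
    have b := (Finset.mem_filter.1 hq).2
    rcases Finset.mem_union.1 hp with hp | hp <;> have a := (Finset.mem_filter.1 hp).2 <;> omega
  have hsub : S1 ∪ S2 ∪ S3 ⊆ savedSet n :=
    Finset.union_subset (Finset.union_subset (Finset.filter_subset _ _) (Finset.filter_subset _ _)) (Finset.filter_subset _ _)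
  calc _ ≤ ∑ p ∈ S1 ∪ S2 ∪ S3, log (p : ℝ) := by
        rw [Finset.sum_union d123, Finset.sum_union d12]; linarith
    _ ≤ _ := Finset.sum_le_sum_of_subset_of_nonneg hsub (fun p hp _ => log_nonneg (by exact_mod_cast hone p hp))

noncomputable def costK (K : ℕ) : ℝ := 7 - ∑ j ∈ Finset.range K, ((1 / ((j : ℝ) + 1/6) - 1 / ((j : ℝ) + 3/7)) + (1 / ((j : ℝ) + 1/2) - 1 / ((j : ℝ) + 5/7)) + (1 / ((j : ℝ) + 3/4) - 1 / ((j : ℝ) + 6/7)))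

lemma theta_lim (c : ℝ) (hc : 0 < c) : Tendsto (fun n : ℕ => Chebyshev.theta (n / c) / n) atTop (𝓝 (1 / c)) := by
  have h1 : Tendsto (fun n : ℕ => (n : ℝ) / c) atTop atTop := tendsto_natCast_atTop_atTop.atTop_div_const hc
  have h2 := (pnt_theta.comp h1).mul_const (1 / c)
  rw [one_mul] at h2
  refine h2.congr fun n => ?_
  simp only [Function.comp]
  rcases eq_or_ne (n : ℝ) 0 with h | h
  · simp [h]
  · field_simp

theorem cost_bound (K : ℕ) (ε : ℝ) (hε : 0 < ε) : ∀ᶠ n : ℕ in atTop, log (Qn n (savedSet n)) ≤ (costK K + ε) * n := by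
  have hpsi : Tendsto (fun n : ℕ => Chebyshev.psi (7 * n : ℕ) / n) atTop (𝓝 7) := by
    have h1 : Tendsto (fun n : ℕ => ((7 * n : ℕ) : ℝ)) atTop atTop :=
      tendsto_natCast_atTop_atTop.comp (tendsto_id.const_mul_atTop' (by norm_num : 0 < 7))
    have h2 := (pnt_psi.comp h1).mul_const 7
    rw [one_mul] at h2
    refine h2.congr fun n => ?_
    simp only [Function.comp]
    rcases eq_or_ne (n : ℝ) 0 with h | h
    · have : n = 0 := by exact_mod_cast h
      subst this; simp
    · push_cast; field_simp
  have hdiff : ∀ a b : ℝ, 0 < a → 0 < b → Tendsto (fun n : ℕ => (∑ j ∈ Finset.range K, (Chebyshev.theta (n / (j + a)) - Chebyshev.theta (n / (j + b)))) / n) atTop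
      (𝓝 (∑ j ∈ Finset.range K, (1 / ((j : ℝ) + a) - 1 / (j + b)))) := by
    intro a b ha hb
    have := tendsto_finsetSum (Finset.range K) fun j _ => (theta_lim (j + a) (by positivity)).sub (theta_lim (j + b) (by positivity))
    refine this.congr fun n => ?_
    rw [Finset.sum_div]
    exact Finset.sum_congr rfl fun j _ => by rw [sub_div]
  have hlim := hpsi.sub (((hdiff (1/6) (3/7) (by norm_num) (by norm_num)).add (hdiff (1/2) (5/7) (by norm_num) (by norm_num))).add (hdiff (3/4) (6/7) (by norm_num) (by norm_num)))
  have heq : 7 - (∑ j ∈ Finset.range K, (1 / ((j : ℝ) + 1/6) - 1 / (j + 3/7)) + ∑ j ∈ Finset.range K, (1 / ((j : ℝ) + 1/2) - 1 / (j + 5/7)) + ∑ j ∈ Finset.range K, (1 / ((j : ℝ) + 3/4) - 1 / (j + 6/7))) = costK K := by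
    unfold costK; rw [← Finset.sum_add_distrib, ← Finset.sum_add_distrib]
  rw [heq] at hlim
  filter_upwards [hlim.eventually (gt_mem_nhds (lt_add_of_pos_right _ hε)), eventually_gt_atTop (2 * (K + 1))] with n h1 h2
  have hn : (0:ℝ) < n := by have : 0 < n := by omega
                            exact_mod_cast this
  rw [log_Qn]
  have h3 := saved_sum n K h2
  rw [← add_div, ← add_div, ← sub_div, div_lt_iff₀ hn] at h1
  linarith
end

section
open Real Set Filter Topology

noncomputable def tailG (x : ℝ) : ℝ := (11/42) / (x + (-17/84 + 1/240)) + (3/14) / (x + (3/28 + 1/240)) + (3/28) / (x + (17/56 + 1/240))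

lemma tail_one (a b d x : ℝ) (ha : 0 < a) (hab : a < b) (hx : 30 ≤ x) (hd : -1 < d) (h : (x + a) * (x + b) ≤ (x + d) * (x + 1 + d)) :
    (b - a) / (x + d) - (b - a) / (x + 1 + d) ≤ 1 / (x + a) - 1 / (x + b) := by
  have h1 : 0 < x + d := by linarith
  have h2 : 0 < x + 1 + d := by linarith
  have h3 : 0 < x + a := by linarith
  have h4 : 0 < x + b := by linarith
  rw [div_sub_div _ _ h1.ne' h2.ne', div_sub_div _ _ h3.ne' h4.ne']
  have e1 : (b - a) * (x + 1 + d) - (x + d) * (b - a) = b - a := by ring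
  have e2 : 1 * (x + b) - (x + a) * 1 = b - a := by ring
  rw [e1, e2]
  have : 0 < b - a := by linarith
  gcongr

lemma tail_step (x : ℝ) (hx : 30 ≤ x) : tailG x - tailG (x + 1) ≤
    (1 / (x + 1/6) - 1 / (x + 3/7)) + (1 / (x + 1/2) - 1 / (x + 5/7)) + (1 / (x + 3/4) - 1 / (x + 6/7)) := by
  have h1 := tail_one (1/6) (3/7) (-17/84 + 1/240) x (by norm_num) (by norm_num) hx (by norm_num) (by nlinarith)
  have h2 := tail_one (1/2) (5/7) (3/28 + 1/240) x (by norm_num) (by norm_num) hx (by norm_num) (by nlinarith)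
  have h3 := tail_one (3/4) (6/7) (17/56 + 1/240) x (by norm_num) (by norm_num) hx (by norm_num) (by nlinarith)
  have e1 : (3/7 - 1/6 : ℝ) = 11/42 := by norm_num
  have e2 : (5/7 - 1/2 : ℝ) = 3/14 := by norm_num
  have e3 : (6/7 - 3/4 : ℝ) = 3/28 := by norm_num
  rw [e1] at h1; rw [e2] at h2; rw [e3] at h3
  unfold tailG
  linarith

lemma cost_tail (K : ℕ) (hK : 30 ≤ K) : costK K ≤ costK 30 - tailG 30 + tailG K := by
  induction K, hK using Nat.le_induction with
  | base => push_cast; linarith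
  | succ K hK ih =>
    have h := tail_step K (by exact_mod_cast hK)
    have : costK (K + 1) = costK K - ((1 / ((K : ℝ) + 1/6) - 1 / ((K : ℝ) + 3/7)) + (1 / ((K : ℝ) + 1/2) - 1 / ((K : ℝ) + 5/7)) + (1 / ((K : ℝ) + 3/4) - 1 / ((K : ℝ) + 6/7))) := by
      unfold costK; rw [Finset.sum_range_succ]; ring
    push_cast
    linarith

lemma cost_num : ∃ K, costK K ≤ 2.0049 := by
  refine ⟨10000000, (cost_tail _ (by norm_num)).trans ?_⟩
  have h1 : tailG ((10000000 : ℕ) : ℝ) ≤ 1e-7 := by unfold tailG; norm_num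
  have h2 : costK 30 - tailG 30 ≤ 2.0048987 := by
    unfold costK tailG
    simp only [Finset.sum_range_succ, Finset.sum_range_zero]
    norm_num
  norm_num at h1 h2 ⊢
  linarith

theorem cost_final (ε : ℝ) (hε : 0 < ε) : ∀ᶠ n : ℕ in atTop, log (Qn n (savedSet n)) ≤ (2.0049 + ε) * n := by
  obtain ⟨K, hK⟩ := cost_num
  filter_upwards [cost_bound K ε hε] with n hn
  refine hn.trans ?_
  gcongr
end

section
open Polynomial

lemma choose_le_exp (N m : ℕ) (y : ℝ) (hy : 0 < y) : (N.choose m : ℝ) ≤ (1 + y) ^ N / y ^ m := by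
  rw [le_div_iff₀ (by positivity)]
  rcases le_or_gt m N with h | h
  · rw [add_comm, add_pow]
    have := Finset.single_le_sum (f := fun k => y ^ k * 1 ^ (N - k) * (N.choose k : ℝ)) (fun i _ => by positivity) (Finset.mem_range.2 (Nat.lt_succ_of_le h))
    simp only [one_pow, mul_one] at this ⊢
    linarith
  · rw [Nat.choose_eq_zero_of_lt h]; simp; positivity

lemma B_bound (r s y1 y2 y3 : ℝ) (hr0 : 0 < r) (hr1 : r < 1) (hs : 1 ≤ s) (h1 : 0 < y1) (h2 : 0 < y2) (h3 : 0 < y3)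
    (hρ : r ^ 2 * ((1 + y1) * (1 + y2) * (1 + y3)) < 1) :
    ∃ C : ℝ, 0 < C ∧ ∀ (n Q k : ℕ) (B : ℤ), k ≤ 2 →
      HasSum (fun j : ℕ => (((Q : ℚ) * (Rk n k).eval ((6 * n + j : ℕ) : ℚ) : ℚ) : ℝ) * r ^ (2 * j + 5 * n + 1)) ((if Even k then 1 else s) * 2 ^ (5 * n + 1) * B) →
      |(B : ℝ)| ≤ C * (n + 1) ^ 2 * Q * ((r / 2) ^ 5 * ((1 + y1) ^ 6 * (1 + y2) ^ 5 * (1 + y3) ^ 4 / (y1 ^ 7 * y2 ^ 5 * y3 ^ 3))) ^ n := by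
  set ρ := r ^ 2 * ((1 + y1) * (1 + y2) * (1 + y3)) with hρd
  have hρ0 : 0 < ρ := by positivity
  have hsum : Summable fun j : ℕ => ((j : ℝ) + 1) ^ 2 * ρ ^ j := by
    have hn : ‖ρ‖ < 1 := by rwa [Real.norm_of_nonneg hρ0.le]
    have a2 := summable_pow_mul_geometric_of_norm_lt_one 2 hn
    have a1 := summable_pow_mul_geometric_of_norm_lt_one 1 hn
    have a0 := summable_pow_mul_geometric_of_norm_lt_one 0 hn
    refine ((a2.add (a1.mul_left 2)).add a0).congr fun j => ?_
    ring
  set C0 := ∑' j : ℕ, ((j : ℝ) + 1) ^ 2 * ρ ^ j with hC0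
  have hC0p : 0 < C0 := hsum.tsum_pos (fun j => by positivity) 0 (by simp)
  refine ⟨144 * C0, by positivity, ?_⟩
  intro n Q k B hk hB
  set G := (1 + y1) ^ 6 * (1 + y2) ^ 5 * (1 + y3) ^ 4 / (y1 ^ 7 * y2 ^ 5 * y3 ^ 3) with hG
  have hG0 : 0 < G := by positivity
  have hterm : ∀ j : ℕ, 0 ≤ (((Q : ℚ) * (Rk n k).eval ((6 * n + j : ℕ) : ℚ) : ℚ) : ℝ) * r ^ (2 * j + 5 * n + 1) ∧
     (((Q : ℚ) * (Rk n k).eval ((6 * n + j : ℕ) : ℚ) : ℚ) : ℝ) * r ^ (2 * j + 5 * n + 1) ≤ (Q * (144 * (n + 1) ^ 2) * (r ^ 5 * G) ^ n) * (((j : ℝ) + 1) ^ 2 * ρ ^ j) := by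
    intro j
    have e : (((Q : ℚ) * (Rk n k).eval ((6 * n + j : ℕ) : ℚ) : ℚ) : ℝ) = Q * (((6 * n + j).choose (7 * n) * (5 * n + j).choose (5 * n) * (4 * n + j).choose (3 * n) : ℕ) : ℝ) * (5 * n + 2 * j + 1) ^ k := by
      simp only [Rk, eval_mul, eval_pow, Rp_eval_nat n (6 * n + j) (by omega), Lp, eval_sub, eval_C, eval_X]
      rw [show 6 * n + j - n = 5 * n + j by omega, show 6 * n + j - 2 * n = 4 * n + j by omega]
      push_cast; ring
    rw [e]
    refine ⟨by positivity, ?_⟩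
    have c1 := choose_le_exp (6 * n + j) (7 * n) y1 h1
    have c2 := choose_le_exp (5 * n + j) (5 * n) y2 h2
    have c3 := choose_le_exp (4 * n + j) (3 * n) y3 h3
    have hL : ((5 * n + 2 * j + 1 : ℝ)) ^ k ≤ 144 * (n + 1) ^ 2 * (j + 1) ^ 2 := by
      have hb : (5 * n + 2 * j + 1 : ℝ) ≤ 12 * (n + 1) * (j + 1) := by
        have : (0:ℝ) ≤ n * j := by positivity
        nlinarith [(Nat.cast_nonneg n : (0:ℝ) ≤ n), (Nat.cast_nonneg j : (0:ℝ) ≤ j)]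
      calc _ ≤ (5 * n + 2 * j + 1 : ℝ) ^ 2 := pow_le_pow_right₀ (by linarith [(Nat.cast_nonneg n : (0:ℝ) ≤ n), (Nat.cast_nonneg j : (0:ℝ) ≤ j)]) hk
        _ ≤ (12 * (n + 1) * (j + 1)) ^ 2 := by gcongr
        _ = _ := by ring
    have hr' : r ^ (2 * j + 5 * n + 1) ≤ r ^ (2 * j + 5 * n) := pow_le_pow_of_le_one hr0.le hr1.le (by omega)
    push_cast
    calc _ ≤ Q * (((1 + y1) ^ (6 * n + j) / y1 ^ (7 * n)) * ((1 + y2) ^ (5 * n + j) / y2 ^ (5 * n)) * ((1 + y3) ^ (4 * n + j) / y3 ^ (3 * n))) * (144 * (n + 1) ^ 2 * (j + 1) ^ 2) * r ^ (2 * j + 5 * n) := by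
          gcongr
      _ = _ := by
          rw [hG, hρd, mul_pow, mul_pow, mul_pow, mul_pow, div_pow, mul_pow, mul_pow, mul_pow, mul_pow]
          simp only [pow_add, pow_mul]
          field_simp
  have hle : (if Even k then 1 else s) * 2 ^ (5 * n + 1) * B ≤ (Q * (144 * (n + 1) ^ 2) * (r ^ 5 * G) ^ n) * C0 :=
    hasSum_le (fun j => (hterm j).2) hB (hsum.hasSum.mul_left _)
  have hge : 0 ≤ (if Even k then 1 else s) * 2 ^ (5 * n + 1) * (B : ℝ) := hB.nonneg (fun j => (hterm j).1)
  have hc : (1:ℝ) ≤ (if Even k then 1 else s) := by split_ifs <;> linarith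
  have hBn : 0 ≤ (B : ℝ) := by
    by_contra hneg
    push Not at hneg
    have : 0 < (if Even k then 1 else s) * (2:ℝ) ^ (5 * n + 1) := by positivity
    nlinarith
  rw [abs_of_nonneg hBn]
  have h2 : (2:ℝ) ^ (5 * n) * B ≤ (if Even k then 1 else s) * 2 ^ (5 * n + 1) * (B : ℝ) := by
    rw [pow_succ]
    have h3 : (2:ℝ) ^ (5 * n) * B ≤ (if Even k then 1 else s) * ((2:ℝ) ^ (5 * n) * B) := le_mul_of_one_le_left (by positivity) hc
    have h4 : 0 ≤ (if Even k then 1 else s) * ((2:ℝ) ^ (5 * n) * B) := by positivity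
    nlinarith
  have h5 := h2.trans hle
  have h6 : ((r / 2) ^ 5 * G) ^ n = (r ^ 5 * G) ^ n / 2 ^ (5 * n) := by
    rw [pow_mul, ← div_pow]; congr 1; ring
  rw [h6, mul_div_assoc', le_div_iff₀ (by positivity)]
  linarith
end

section
open MeasureTheory Set Filter Topology

lemma lap_deriv (a : ℂ) (ha : 0 < a.re) (r : ℂ) (hr : 0 < r.re) :
    DifferentiableAt ℂ (fun r : ℂ => ∫ t in Ioi (0:ℝ), (t : ℂ) ^ (a - 1) * Complex.exp (-(r * t))) r := by
  set b := r.re / 2 with hb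
  have hb0 : 0 < b := by positivity
  have hs : {w : ℂ | b < w.re} ∈ 𝓝 r := (isOpen_lt continuous_const Complex.continuous_re).mem_nhds (by show b < r.re; linarith)
  have hm : ∀ w : ℂ, AEStronglyMeasurable (fun t : ℝ => (t : ℂ) ^ (a - 1) * Complex.exp (-(w * t))) (volume.restrict (Ioi 0)) := by
    intro w
    refine ContinuousOn.aestronglyMeasurable (fun t ht => ?_) measurableSet_Ioi
    have h0 : (0:ℝ) < t := ht
    refine ContinuousAt.continuousWithinAt ?_
    refine ContinuousAt.mul ?_ (by fun_prop)
    exact (Complex.continuous_ofReal.continuousAt).cpow continuousAt_const (Or.inl (by simpa using h0))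
  have hn : ∀ (w : ℂ) (t : ℝ), 0 < t → ‖(t : ℂ) ^ (a - 1) * Complex.exp (-(w * t))‖ = t ^ (a.re - 1) * Real.exp (-(w.re * t)) := by
    intro w t ht
    rw [norm_mul, Complex.norm_cpow_eq_rpow_re_of_pos ht, Complex.norm_exp]; simp
  have hint : ∀ (c : ℝ), 0 < c → ∀ x : ℝ, 0 < x → IntegrableOn (fun t : ℝ => t ^ (x - 1) * Real.exp (-(c * t))) (Ioi 0) := by
    intro c hc x hx
    simpa using integrableOn_rpow_mul_exp_neg_mul_rpow (p := 1) (s := x - 1) (b := c) (by linarith) (by norm_num) hc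
  have h := hasDerivAt_integral_of_dominated_loc_of_deriv_le (μ := volume.restrict (Ioi (0:ℝ)))
    (F := fun (w : ℂ) (t : ℝ) => (t : ℂ) ^ (a - 1) * Complex.exp (-(w * t)))
    (F' := fun (w : ℂ) (t : ℝ) => (t : ℂ) ^ (a - 1) * (Complex.exp (-(w * t)) * (-t)))
    (x₀ := r) (s := {w : ℂ | b < w.re}) (bound := fun t => t ^ (a.re + 1 - 1) * Real.exp (-(b * t))) hs
    (Eventually.of_forall hm) ?_ ?_ ?_ (hint b hb0 _ (by linarith)) ?_
  · exact h.2.differentiableAt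
  · refine Integrable.mono' (hint r.re hr a.re ha) (hm r) ?_
    filter_upwards [ae_restrict_mem measurableSet_Ioi] with t ht
    rw [hn r t ht]
  · have := (hm r).mul (Complex.measurable_ofReal.neg.aestronglyMeasurable (μ := volume.restrict (Ioi (0:ℝ))))
    refine this.congr (Eventually.of_forall fun t => ?_)
    simp [mul_assoc]
  · filter_upwards [ae_restrict_mem measurableSet_Ioi] with t ht w hw
    have h0 : (0:ℝ) < t := ht
    rw [← mul_assoc, norm_mul, hn w t ht]
    have : ‖(-(t:ℂ))‖ = t := by simp [abs_of_pos h0]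
    rw [this, mul_right_comm, ← Real.rpow_add_one h0.ne']
    rw [show a.re - 1 + 1 = a.re + 1 - 1 by ring]
    have : b < w.re := hw
    gcongr
  · refine Eventually.of_forall fun t w _ => ?_
    have h1 : HasDerivAt (fun w : ℂ => -(w * t)) (-(t:ℂ)) w := by
      have := ((hasDerivAt_id w).mul_const (-(t:ℂ)))
      refine (this.congr_deriv (one_mul _)).congr_of_eventuallyEq (Eventually.of_forall fun x => ?_)
      simp
    exact (h1.cexp).const_mul _

lemma lap_eq (a : ℂ) (ha : 0 < a.re) (r : ℂ) (hr : 0 < r.re) :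
    ∫ t in Ioi (0:ℝ), (t : ℂ) ^ (a - 1) * Complex.exp (-(r * t)) = (1 / r) ^ a * Complex.Gamma a := by
  have hU : IsOpen {w : ℂ | 0 < w.re} := isOpen_lt continuous_const Complex.continuous_re
  have hpre : IsPreconnected {w : ℂ | 0 < w.re} := (convex_halfSpace_re_gt 0).isPreconnected
  have hf : AnalyticOnNhd ℂ (fun r : ℂ => ∫ t in Ioi (0:ℝ), (t : ℂ) ^ (a - 1) * Complex.exp (-(r * t))) {w : ℂ | 0 < w.re} :=
    DifferentiableOn.analyticOnNhd (fun w hw => (lap_deriv a ha w hw).differentiableWithinAt) hU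
  have hg : AnalyticOnNhd ℂ (fun r : ℂ => (1 / r) ^ a * Complex.Gamma a) {w : ℂ | 0 < w.re} := by
    refine DifferentiableOn.analyticOnNhd (fun w hw => ?_) hU
    have hw' : 0 < w.re := hw
    have hw0 : w ≠ 0 := by rintro rfl; simp at hw'
    refine DifferentiableAt.differentiableWithinAt ?_
    refine DifferentiableAt.mul_const ?_ _
    refine DifferentiableAt.cpow (by fun_prop (disch := exact hw0)) (by fun_prop) ?_
    left
    rw [one_div, Complex.inv_re]
    exact div_pos hw' (Complex.normSq_pos.2 hw0)
  have := hf.eqOn_of_preconnected_of_frequently_eq hg hpre (z₀ := 1) (by simp) ?_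
  · exact this hr
  · have ht : Tendsto (fun n : ℕ => (1:ℂ) + 1 / ((n:ℂ) + 1)) atTop (𝓝[≠] 1) := by
      refine tendsto_nhdsWithin_iff.2 ⟨?_, Eventually.of_forall fun n => ?_⟩
      · simpa using (tendsto_one_div_add_atTop_nhds_zero_nat (𝕜 := ℂ)).const_add 1
      · simp only [mem_compl_iff, mem_singleton_iff, add_eq_left]
        exact one_div_ne_zero (by exact_mod_cast Nat.succ_ne_zero n)
    refine ht.frequently (Eventually.of_forall fun n => ?_).frequently
    have := Complex.integral_cpow_mul_exp_neg_mul_Ioi (a := a) (r := 1 + 1 / ((n:ℝ) + 1)) ha (by positivity)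
    push_cast at this
    exact this

lemma Gamma_norm_bound0 (a : ℂ) (ha : 0 < a.re) (φ : ℝ) (h1 : -(Real.pi / 2) < φ) (h2 : φ < Real.pi / 2) :
    ‖Complex.Gamma a‖ ≤ Real.exp (-(φ * a.im)) * (Real.Gamma a.re / Real.cos φ ^ a.re) := by
  have hc : 0 < Real.cos φ := Real.cos_pos_of_mem_Ioo ⟨h1, h2⟩
  set r := Complex.exp (φ * Complex.I) with hr
  have hre : r.re = Real.cos φ := by rw [hr, Complex.exp_ofReal_mul_I_re]
  have h := lap_eq a ha r (by rw [hre]; exact hc)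
  have h3 : (1 / r) ^ a = Complex.exp (-(φ * Complex.I) * a) := by
    rw [hr, one_div, ← Complex.exp_neg, Complex.cpow_def_of_ne_zero (Complex.exp_ne_zero _), Complex.log_exp]
    · simp; linarith [Real.pi_pos]
    · simp; linarith [Real.pi_pos]
  have h4 : ‖Complex.exp (-(φ * Complex.I) * a)‖ = Real.exp (φ * a.im) := by
    rw [Complex.norm_exp]; simp
  have h5 : ‖∫ t in Ioi (0:ℝ), (t : ℂ) ^ (a - 1) * Complex.exp (-(r * t))‖ ≤ Real.Gamma a.re / Real.cos φ ^ a.re := by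
    refine (norm_integral_le_integral_norm _).trans (le_of_eq ?_)
    have := Real.integral_rpow_mul_exp_neg_mul_Ioi ha hc
    rw [one_div, Real.inv_rpow hc.le, inv_mul_eq_div] at this
    rw [← this]
    refine setIntegral_congr_fun measurableSet_Ioi fun t ht => ?_
    have ht' : (0:ℝ) < t := ht
    simp only [norm_mul]
    rw [Complex.norm_cpow_eq_rpow_re_of_pos ht', Complex.norm_exp]; simp [hre]
  rw [h, h3, norm_mul, h4] at h5
  rw [Real.exp_neg, inv_mul_eq_div, le_div_iff₀ (Real.exp_pos _)]
  linarith

/-- arctan form -/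
lemma Gamma_norm_bound (a : ℂ) (ha : 0 < a.re) (t : ℝ) (ht : 0 ≤ t) :
    ‖Complex.Gamma a‖ ≤ Real.exp (-(Real.arctan t * |a.im|)) * (Real.Gamma a.re * (√(1 + t ^ 2)) ^ a.re) := by
  have hp := Real.arctan_lt_pi_div_two t
  have hn := Real.neg_pi_div_two_lt_arctan t
  have hc : Real.Gamma a.re / Real.cos (Real.arctan t) ^ a.re = Real.Gamma a.re * (√(1 + t ^ 2)) ^ a.re := by
    rw [Real.cos_arctan, one_div, Real.inv_rpow (Real.sqrt_nonneg _), div_inv_eq_mul]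
  rcases le_total 0 a.im with h | h
  · have := Gamma_norm_bound0 a ha (Real.arctan t) hn hp
    rwa [abs_of_nonneg h, ← hc]
  · have := Gamma_norm_bound0 a ha (-Real.arctan t) (by linarith) (by linarith)
    rw [Real.cos_neg] at this
    rw [abs_of_nonpos h, ← hc]
    convert this using 3
    ring
end

section
open Polynomial

lemma Gamma_shift (w : ℂ) (m : ℕ) (h : ∀ i < m, w + i ≠ 0) :
    Complex.Gamma (w + m) = (∏ i ∈ Finset.range m, (w + i)) * Complex.Gamma w := by
  induction m with
  | zero => simp
  | succ m ih =>
    have h1 := ih (fun i hi => h i (by omega))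
    rw [Finset.prod_range_succ, Nat.cast_succ, ← add_assoc, Complex.Gamma_add_one _ (h m (by omega)), h1]
    ring

lemma norm_sin_half (k : ℤ) (y : ℝ) : ‖Complex.sin (Real.pi * ((k : ℂ) + 1 / 2 + y * Complex.I))‖ = Real.cosh (Real.pi * y) := by
  have : (Real.pi * ((k : ℂ) + 1 / 2 + y * Complex.I)) = (((Real.pi * y : ℝ) : ℂ) * Complex.I + Real.pi / 2) + k * Real.pi := by
    push_cast; ring
  have hk : ‖Complex.cos ((k : ℂ) * Real.pi)‖ = 1 := by
    have h := Complex.sin_sq_add_cos_sq ((k : ℂ) * Real.pi)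
    rw [Complex.sin_int_mul_pi] at h
    have h2 := congrArg norm h
    simp at h2
    rcases h2 with h2 | h2
    · exact h2
    · linarith [norm_nonneg (Complex.cos ((k : ℂ) * Real.pi))]
  rw [this, Complex.sin_add, Complex.sin_int_mul_pi, mul_zero, add_zero, norm_mul, hk, mul_one, Complex.sin_add_pi_div_two, Complex.cos_mul_I]
  rw [← Complex.ofReal_cosh, Complex.norm_real]
  simp [abs_of_pos (Real.cosh_pos _)]

lemma bin_bound (m a b : ℕ) (hm : m = a + b) (ha : 2 ≤ a) (hb : 2 ≤ b) (s : ℂ) (hs : s.re = a - 1 / 2) (t1 t2 : ℝ) (ht1 : 0 ≤ t1) (ht2 : 0 ≤ t2) :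
    ‖∏ i ∈ Finset.range m, (s - i)‖ * (Real.pi / Real.cosh (Real.pi * s.im)) ≤
      Real.exp (-((Real.arctan t1 + Real.arctan t2) * |s.im|)) * (a.factorial * √(1 + t1 ^ 2) ^ (a + 1) * (b.factorial * √(1 + t2 ^ 2) ^ (b + 1))) := by
  set w := s + 1 - m with hw
  have hwre : w.re = (a:ℝ) + 1 / 2 - m := by rw [hw]; simp [hs]; ring
  have hwne : ∀ i < m, w + i ≠ 0 := by
    intro i _ h
    have h2 := congrArg Complex.re h
    simp [hwre] at h2
    have h3 : (2:ℝ) * a + 1 + 2 * i = 2 * m := by linarith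
    have h4 : 2 * a + 1 + 2 * i = 2 * m := by exact_mod_cast h3
    omega
  have h1 := Gamma_shift w m hwne
  have hpr : ∏ i ∈ Finset.range m, (w + i) = ∏ i ∈ Finset.range m, (s - i) := by
    rw [← Finset.prod_range_reflect]
    refine Finset.prod_congr rfl fun i hi => ?_
    have := Finset.mem_range.1 hi
    rw [show m - 1 - i = m - (i + 1) by omega, Nat.cast_sub (by omega), hw]; push_cast; ring
  rw [hpr, show w + m = s + 1 by rw [hw]; ring] at h1
  have h2 := Complex.Gamma_mul_Gamma_one_sub w
  have hk : w = (((a:ℤ) - m : ℤ) : ℂ) + 1 / 2 + s.im * Complex.I := by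
    apply Complex.ext
    · rw [hwre]; simp; ring
    · rw [hw]; simp
  have h3 : ‖Complex.sin (Real.pi * w)‖ = Real.cosh (Real.pi * s.im) := by
    rw [hk]; exact norm_sin_half _ _
  have h4 : ‖∏ i ∈ Finset.range m, (s - i)‖ * (Real.pi / Real.cosh (Real.pi * s.im)) = ‖Complex.Gamma (s + 1)‖ * ‖Complex.Gamma (1 - w)‖ := by
    rw [h1, norm_mul, mul_assoc, ← norm_mul (Complex.Gamma w), h2, norm_div, h3]
    simp [abs_of_pos Real.pi_pos]
  have ham : (m:ℝ) = a + b := by rw [hm]; push_cast; ring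
  have e1 : (s + 1).re = (a:ℝ) + 1 / 2 := by simp [hs]; ring
  have e2 : (1 - w).re = (b:ℝ) + 1 / 2 := by simp [hwre, ham]; ring
  have i1 : (s + 1).im = s.im := by simp
  have i2 : (1 - w).im = -s.im := by simp [hw]
  have b1 := Gamma_norm_bound (s + 1) (by rw [e1]; positivity) t1 ht1
  have b2 := Gamma_norm_bound (1 - w) (by rw [e2]; positivity) t2 ht2
  rw [e1, i1] at b1
  rw [e2, i2, abs_neg] at b2
  have hG : ∀ c : ℕ, 2 ≤ c → Real.Gamma ((c:ℝ) + 1 / 2) ≤ c.factorial := by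
    intro c hc
    rw [← Real.Gamma_nat_eq_factorial]
    have : (2:ℝ) ≤ c := by exact_mod_cast hc
    exact Real.Gamma_strictMonoOn_Ici.monotoneOn (by simp; linarith) (by simp; linarith) (by linarith)
  have hS : ∀ (t : ℝ) (c : ℕ), √(1 + t ^ 2) ^ ((c:ℝ) + 1 / 2) ≤ √(1 + t ^ 2) ^ (c + 1) := by
    intro t c
    rw [← Real.rpow_natCast (√(1 + t ^ 2)) (c + 1)]
    refine Real.rpow_le_rpow_of_exponent_le ?_ (by push_cast; linarith)
    rw [Real.one_le_sqrt]; nlinarith [sq_nonneg t]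
  have g1 : ∀ (t : ℝ) (c : ℕ), 2 ≤ c → Real.Gamma ((c:ℝ) + 1 / 2) * √(1 + t ^ 2) ^ ((c:ℝ) + 1 / 2) ≤ c.factorial * √(1 + t ^ 2) ^ (c + 1) := by
    intro t c hc
    exact mul_le_mul (hG c hc) (hS t c) (by positivity) (by positivity)
  rw [h4]
  calc _ ≤ (Real.exp (-(Real.arctan t1 * |s.im|)) * (a.factorial * √(1 + t1 ^ 2) ^ (a + 1))) * (Real.exp (-(Real.arctan t2 * |s.im|)) * (b.factorial * √(1 + t2 ^ 2) ^ (b + 1))) := by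
        refine mul_le_mul (b1.trans ?_) (b2.trans ?_) (norm_nonneg _) (by positivity)
        · gcongr ?_ * ?_
          exact g1 t1 a ha
        · gcongr ?_ * ?_
          exact g1 t2 b hb
    _ = _ := by
        rw [show -((Real.arctan t1 + Real.arctan t2) * |s.im|) = -(Real.arctan t1 * |s.im|) + -(Real.arctan t2 * |s.im|) by ring, Real.exp_add]
        ring

lemma fact_le (n : ℕ) (hn : 1 ≤ n) : (n.factorial : ℝ) ≤ 3 * n * (n / Real.exp 1) ^ n := by
  obtain ⟨k, rfl⟩ : ∃ k, n = k + 1 := ⟨n - 1, by omega⟩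
  have h := Stirling.stirlingSeq'_antitone (Nat.zero_le k)
  simp only [Function.comp, Nat.succ_eq_add_one, zero_add, Stirling.stirlingSeq_one] at h
  rw [Stirling.stirlingSeq, div_le_iff₀ (by positivity)] at h
  refine h.trans ?_
  rw [Real.sqrt_mul (by norm_num)]
  have : Real.exp 1 / √2 * (√2 * √((k + 1 : ℕ) : ℝ) * (((k + 1 : ℕ) : ℝ) / Real.exp 1) ^ (k + 1)) = Real.exp 1 * √((k + 1 : ℕ) : ℝ) * (((k + 1 : ℕ) : ℝ) / Real.exp 1) ^ (k + 1) := by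
    have : √2 ≠ 0 := by positivity
    field_simp
  rw [this]
  gcongr
  · linarith [Real.exp_one_lt_d9]
  · rw [Real.sqrt_le_left (by positivity)]
    have : (1:ℝ) ≤ ((k + 1 : ℕ) : ℝ) := by exact_mod_cast Nat.succ_pos k
    nlinarith

lemma fact_ge (n : ℕ) (hn : 1 ≤ n) : ((n:ℝ) / Real.exp 1) ^ n ≤ n.factorial := by
  refine le_trans ?_ (Stirling.le_factorial_stirling n)
  have h1 : (1:ℝ) ≤ n := by exact_mod_cast hn
  have : (1:ℝ) ≤ √(2 * Real.pi * n) := by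
    rw [Real.one_le_sqrt]; nlinarith [Real.pi_gt_three]
  exact le_mul_of_one_le_left (by positivity) this

noncomputable def Kf (T : ℝ) (a b : ℕ) : ℝ := (a:ℝ) ^ a * b ^ b / ((a + b : ℕ) : ℝ) ^ (a + b) * (√(1 + (T / a) ^ 2) ^ a * √(1 + (T / b) ^ 2) ^ b)
noncomputable def Df (T : ℝ) (a b : ℕ) : ℝ := 9 * a * b * (√(1 + (T / a) ^ 2) * √(1 + (T / b) ^ 2))

lemma fact_ratio (a b N : ℕ) (ha : 1 ≤ a) (hb : 1 ≤ b) (hN : 1 ≤ N) :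
    ((a * N).factorial : ℝ) * (b * N).factorial / ((a + b) * N).factorial ≤ 9 * a * b * N ^ 2 * ((a:ℝ) ^ a * b ^ b / ((a + b : ℕ) : ℝ) ^ (a + b)) ^ N := by
  have h1 := fact_le (a * N) (by nlinarith)
  have h2 := fact_le (b * N) (by nlinarith)
  have h3 := fact_ge ((a + b) * N) (by nlinarith)
  have ha0 : (0:ℝ) < a := by exact_mod_cast ha
  have hb0 : (0:ℝ) < b := by exact_mod_cast hb
  have hN0 : (0:ℝ) < N := by exact_mod_cast hN
  have hp : (0:ℝ) < ((((a + b) * N : ℕ) : ℝ) / Real.exp 1) ^ ((a + b) * N) := by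
    have : (0:ℝ) < (((a + b) * N : ℕ) : ℝ) := by push_cast; positivity
    positivity
  calc _ ≤ (3 * (a * N : ℕ) * ((a * N : ℕ) / Real.exp 1) ^ (a * N)) * (3 * (b * N : ℕ) * ((b * N : ℕ) / Real.exp 1) ^ (b * N)) / ((((a + b) * N : ℕ) : ℝ) / Real.exp 1) ^ ((a + b) * N) := by
        gcongr
    _ = _ := by
        push_cast
        generalize hc : (a:ℝ) + b = c
        have hc0 : 0 < c := by rw [← hc]; positivity
        rw [add_mul, pow_add]
        simp only [div_pow, mul_pow, pow_mul, pow_add]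
        have := Real.exp_pos 1
        field_simp
        ring

lemma binP_bound (T : ℝ) (hT : 0 ≤ T) (a b N : ℕ) (ha : 2 ≤ a) (hb : 2 ≤ b) (hN : 1 ≤ N) (s : ℂ) (hs : s.re = ((a * N : ℕ) : ℝ) - 1 / 2) :
    ‖aeval s (binP ((a + b) * N))‖ * (Real.pi / Real.cosh (Real.pi * s.im)) ≤
      Real.exp (-((Real.arctan (T / a) + Real.arctan (T / b)) * |s.im|)) * (Df T a b * N ^ 2 * Kf T a b ^ N) := by
  have h := bin_bound ((a + b) * N) (a * N) (b * N) (by ring) (by nlinarith) (by nlinarith) s hs (T / a) (T / b) (by positivity) (by positivity)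
  have he : aeval s (binP ((a + b) * N)) = (((((a + b) * N).factorial : ℝ)⁻¹ : ℝ) : ℂ) * ∏ i ∈ Finset.range ((a + b) * N), (s - i) := by
    simp [binP, map_prod]
  have hf := fact_ratio a b N (by omega) (by omega) hN
  have hfp : (0:ℝ) < ((a + b) * N).factorial := by exact_mod_cast Nat.factorial_pos _
  rw [he, norm_mul, Complex.norm_real, Real.norm_of_nonneg (by positivity), mul_assoc]
  calc _ ≤ (((a + b) * N).factorial : ℝ)⁻¹ * _ := mul_le_mul_of_nonneg_left h (by positivity)
    _ = Real.exp (-((Real.arctan (T / a) + Real.arctan (T / b)) * |s.im|)) * ((((a * N).factorial : ℝ) * (b * N).factorial / ((a + b) * N).factorial) * (√(1 + (T / a) ^ 2) ^ (a * N + 1) * √(1 + (T / b) ^ 2) ^ (b * N + 1))) := by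
        field_simp
    _ ≤ Real.exp (-((Real.arctan (T / a) + Real.arctan (T / b)) * |s.im|)) * ((9 * a * b * N ^ 2 * ((a:ℝ) ^ a * b ^ b / ((a + b : ℕ) : ℝ) ^ (a + b)) ^ N) * (√(1 + (T / a) ^ 2) ^ (a * N + 1) * √(1 + (T / b) ^ 2) ^ (b * N + 1))) := by
        gcongr
    _ = _ := by
        rw [Df, Kf, mul_pow, mul_pow, pow_succ _ (a * N), pow_succ _ (b * N), pow_mul _ a N, pow_mul _ b N]; ring
end

section
open Polynomial Filter Topology

noncomputable def Pf (k : ℕ) (Q : ℚ[X]) (x : ℂ) : ℂ := ∑' j : ℕ, aeval ((k + j : ℕ) : ℂ) Q * Complex.exp (((k + j : ℕ) : ℂ) * x)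
noncomputable def Sf (k : ℕ) (Q : ℚ[X]) (x : ℂ) : ℂ := x * Pf k Q x + Pf k (derivative Q) x

lemma Pf_summable0 (Q : ℚ[X]) (x : ℂ) (hx : x.re < 0) :
    Summable (fun j : ℕ => ‖aeval (j : ℂ) Q * Complex.exp ((j : ℂ) * x)‖) := by
  have hr : ‖Complex.exp x‖ < 1 := by rw [Complex.norm_exp]; exact Real.exp_lt_one_iff.2 hx
  have h : ∀ j : ℕ, aeval (j : ℂ) Q * Complex.exp ((j : ℂ) * x) = ∑ i ∈ Finset.range (Q.natDegree + 1), (Q.coeff i : ℂ) * ((j:ℂ) ^ i * Complex.exp x ^ j) := by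
    intro j
    rw [aeval_eq_sum_range, Finset.sum_mul, ← Complex.exp_nat_mul]
    refine Finset.sum_congr rfl fun i _ => ?_
    rw [Algebra.smul_def]; simp [mul_assoc]
  simp_rw [h]
  refine Summable.of_nonneg_of_le (fun _ => norm_nonneg _) (fun j => norm_sum_le _ _) ?_
  refine summable_sum fun i _ => ?_
  simp_rw [norm_mul (Q.coeff i : ℂ)]
  exact (summable_norm_pow_mul_geometric_of_norm_lt_one i hr).mul_left _

lemma Pf_summable (k : ℕ) (Q : ℚ[X]) (x : ℂ) (hx : x.re < 0) :
    Summable (fun j : ℕ => ‖aeval ((k + j : ℕ) : ℂ) Q * Complex.exp (((k + j : ℕ) : ℂ) * x)‖) := by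
  have := (summable_nat_add_iff k).2 (Pf_summable0 Q x hx)
  simpa only [add_comm] using this

lemma Pf_add (k : ℕ) (Q1 Q2 : ℚ[X]) (x : ℂ) (hx : x.re < 0) : Pf k (Q1 + Q2) x = Pf k Q1 x + Pf k Q2 x := by
  rw [Pf, Pf, Pf, ← ((Pf_summable k Q1 x hx).of_norm).tsum_add ((Pf_summable k Q2 x hx).of_norm)]
  simp [add_mul]

lemma Pf_smul (k : ℕ) (c : ℚ) (Q : ℚ[X]) (x : ℂ) : Pf k (C c * Q) x = c * Pf k Q x := by
  rw [Pf, Pf, ← tsum_mul_left]; simp [mul_assoc]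

lemma Pf_deriv (k : ℕ) (Q : ℚ[X]) (x : ℂ) (hx : x.re < 0) : HasDerivAt (Pf k Q) (Pf k (X * Q) x) x := by
  set δ := x.re / 2 with hδ
  have hδ0 : δ < 0 := by linarith
  have hs := Pf_summable k (X * Q) (δ : ℂ) (by simpa using hδ0)
  have hU : IsOpen {w : ℂ | w.re < δ} := isOpen_lt Complex.continuous_re continuous_const
  have hpre : IsPreconnected {w : ℂ | w.re < δ} := (convex_halfSpace_re_lt δ).isPreconnected
  have hxU : x ∈ {w : ℂ | w.re < δ} := by show x.re < δ; linarith
  refine hasDerivAt_tsum_of_isPreconnected (g := fun (j : ℕ) (w : ℂ) => aeval ((k + j : ℕ) : ℂ) Q * Complex.exp (((k + j : ℕ) : ℂ) * w))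
    (g' := fun (j : ℕ) (w : ℂ) => aeval ((k + j : ℕ) : ℂ) (X * Q) * Complex.exp (((k + j : ℕ) : ℂ) * w)) hs hU hpre ?_ ?_ hxU (Pf_summable k Q x hx).of_norm hxU
  · intro j w _
    have h1 : HasDerivAt (fun w : ℂ => ((k + j : ℕ) : ℂ) * w) ((k + j : ℕ) : ℂ) w := by
      simpa using (hasDerivAt_id w).const_mul ((k + j : ℕ) : ℂ)
    refine (h1.cexp.const_mul (aeval ((k + j : ℕ) : ℂ) Q)).congr_deriv ?_
    simp; ring
  · intro j w hw
    have hw' : w.re < δ := hw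
    rw [norm_mul, norm_mul, Complex.norm_exp, Complex.norm_exp]
    simp only [Complex.mul_re, Complex.natCast_re, Complex.natCast_im, zero_mul, sub_zero, Complex.ofReal_re]
    gcongr

lemma Sf_deriv (k : ℕ) (Q : ℚ[X]) (x : ℂ) (hx : x.re < 0) : HasDerivAt (Sf k Q) (Sf k (X * Q) x) x := by
  have := ((hasDerivAt_id x).mul (Pf_deriv k Q x hx)).add (Pf_deriv k (derivative Q) x hx)
  refine this.congr_deriv ?_
  rw [Sf, derivative_mul, derivative_X, one_mul, Pf_add k _ _ x hx]
  simp; ring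

lemma Sf_add (k : ℕ) (Q1 Q2 : ℚ[X]) (x : ℂ) (hx : x.re < 0) : Sf k (Q1 + Q2) x = Sf k Q1 x + Sf k Q2 x := by
  rw [Sf, Sf, Sf, derivative_add, Pf_add k _ _ x hx, Pf_add k _ _ x hx]; ring

lemma Sf_smul (k : ℕ) (c : ℚ) (Q : ℚ[X]) (x : ℂ) : Sf k (C c * Q) x = c * Sf k Q x := by
  rw [Sf, Sf, derivative_C_mul, Pf_smul, Pf_smul]; ring

lemma Pf_one (k : ℕ) (x : ℂ) (hx : x.re < 0) : Pf k 1 x = Complex.exp (k * x) / (1 - Complex.exp x) := by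
  have hr : ‖Complex.exp x‖ < 1 := by rw [Complex.norm_exp]; exact Real.exp_lt_one_iff.2 hx
  have h : ∀ j : ℕ, aeval ((k + j : ℕ) : ℂ) (1 : ℚ[X]) * Complex.exp (((k + j : ℕ) : ℂ) * x) = Complex.exp (k * x) * Complex.exp x ^ j := by
    intro j
    rw [← Complex.exp_nat_mul, ← Complex.exp_add]; simp; ring_nf
  rw [Pf]
  simp_rw [h]
  rw [tsum_mul_left, tsum_geometric_of_norm_lt_one hr, div_eq_mul_inv]

/-- moving the start -/
lemma Pf_start (k l : ℕ) (hkl : k ≤ l) (Q : ℚ[X]) (x : ℂ) (hx : x.re < 0) (h : ∀ ν : ℕ, k ≤ ν → ν < l → Q.eval (ν : ℚ) = 0) : Pf k Q x = Pf l Q x := by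
  obtain ⟨d, rfl⟩ := Nat.exists_eq_add_of_le hkl
  rw [Pf, ← (Pf_summable k Q x hx).of_norm.sum_add_tsum_nat_add d, Finset.sum_eq_zero, zero_add, Pf]
  · refine tsum_congr fun j => ?_
    rw [show k + (j + d) = k + d + j by ring]
  · intro i hi
    have := Finset.mem_range.1 hi
    have h2 := h (k + i) (by omega) (by omega)
    have h3 : aeval ((k + i : ℕ) : ℂ) Q = ((Q.eval ((k + i : ℕ) : ℚ) : ℚ) : ℂ) := by
      have := aeval_algebraMap_apply_eq_algebraMap_eval (A := ℂ) ((k + i : ℕ) : ℚ) Q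
      simpa using this
    rw [h3, h2]; simp
end

section
open Polynomial Filter Topology MeasureTheory Set

lemma int_exp_abs (b : ℝ) (hb : 0 < b) : Integrable (fun y : ℝ => Real.exp (-(b * |y|))) := by
  rw [← integrableOn_univ, ← Iic_union_Ioi (a := (0:ℝ))]
  refine IntegrableOn.union ?_ ?_
  · refine (integrableOn_exp_mul_Iic hb 0).congr_fun (fun y hy => ?_) measurableSet_Iic
    have : y ≤ 0 := hy
    simp [abs_of_nonpos this]
  · refine (integrableOn_exp_mul_Ioi (a := -b) (by linarith) 0).congr_fun (fun y hy => ?_) measurableSet_Ioi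
    have : 0 < y := hy
    simp [abs_of_pos this]

lemma pow_exp_le (b : ℝ) (hb : 0 < b) (d : ℕ) (u : ℝ) (hu : 0 ≤ u) :
    (1 + u) ^ d * Real.exp (-(b * u)) ≤ (d.factorial * Real.exp (b / 2) / (b / 2) ^ d) * Real.exp (-(b / 2 * u)) := by
  have h := Real.pow_div_factorial_le_exp (b / 2 * (1 + u)) (by positivity) d
  rw [div_le_iff₀ (by positivity), mul_pow] at h
  have h2 : Real.exp (b / 2 * (1 + u)) * Real.exp (-(b * u)) = Real.exp (b / 2) * Real.exp (-(b / 2 * u)) := by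
    rw [← Real.exp_add, ← Real.exp_add]; ring_nf
  rw [div_mul_eq_mul_div, le_div_iff₀ (by positivity)]
  calc _ = (b / 2) ^ d * (1 + u) ^ d * Real.exp (-(b * u)) := by ring
    _ ≤ Real.exp (b / 2 * (1 + u)) * d.factorial * Real.exp (-(b * u)) := by gcongr
    _ = d.factorial * (Real.exp (b / 2 * (1 + u)) * Real.exp (-(b * u))) := by ring
    _ = _ := by rw [h2]; ring

lemma int_pow_exp (b : ℝ) (hb : 0 < b) (d : ℕ) : Integrable (fun y : ℝ => (1 + |y|) ^ d * Real.exp (-(b * |y|))) := by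
  refine Integrable.mono' ((int_exp_abs (b / 2) (by positivity)).const_mul (d.factorial * Real.exp (b / 2) / (b / 2) ^ d)) (by fun_prop) (Eventually.of_forall fun y => ?_)
  rw [Real.norm_of_nonneg (by positivity)]
  exact pow_exp_le b hb d |y| (abs_nonneg y)

lemma cosh_ge (u : ℝ) : Real.exp |u| / 2 ≤ Real.cosh u := by
  rw [← Real.cosh_abs, Real.cosh_eq]
  have := Real.exp_pos (-|u|)
  linarith

lemma sech_le (y : ℝ) : (Real.cosh (Real.pi * y) ^ 2)⁻¹ ≤ 4 * Real.exp (-(2 * Real.pi * |y|)) := by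
  have h := cosh_ge (Real.pi * y)
  have h2 := Real.exp_pos |Real.pi * y|
  have h3 : (Real.exp |Real.pi * y| / 2) ^ 2 ≤ Real.cosh (Real.pi * y) ^ 2 := by gcongr
  calc _ ≤ ((Real.exp |Real.pi * y| / 2) ^ 2)⁻¹ := by gcongr
    _ = 4 * Real.exp (-(2 * Real.pi * |y|)) := by
        rw [Real.exp_neg, abs_mul, abs_of_pos Real.pi_pos, div_pow, ← Real.exp_nat_mul, inv_div, div_eq_mul_inv]
        push_cast; norm_num; ring_nf

lemma aeval_bound (Q : ℚ[X]) (c : ℝ) : ∃ M, 0 ≤ M ∧ ∀ y : ℝ, ‖aeval ((c : ℂ) + y * Complex.I) Q‖ ≤ M * (1 + |y|) ^ Q.natDegree := by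
  refine ⟨∑ i ∈ Finset.range (Q.natDegree + 1), ‖(Q.coeff i : ℂ)‖ * (1 + |c|) ^ i, by positivity, fun y => ?_⟩
  rw [aeval_eq_sum_range, Finset.sum_mul]
  refine (norm_sum_le _ _).trans (Finset.sum_le_sum fun i hi => ?_)
  have hi' : i ≤ Q.natDegree := by have := Finset.mem_range.1 hi; omega
  rw [Algebra.smul_def, norm_mul, norm_pow]
  have h1 : ‖(c : ℂ) + y * Complex.I‖ ≤ (1 + |c|) * (1 + |y|) := by
    refine (norm_add_le _ _).trans ?_
    simp
    nlinarith [abs_nonneg c, abs_nonneg y]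
  have h2 : (1 + |y|) ^ i ≤ (1 + |y|) ^ Q.natDegree := pow_le_pow_right₀ (by linarith [abs_nonneg y]) hi'
  calc _ ≤ ‖(Q.coeff i : ℂ)‖ * ((1 + |c|) * (1 + |y|)) ^ i := by
        gcongr
        simp
    _ = ‖(Q.coeff i : ℂ)‖ * (1 + |c|) ^ i * (1 + |y|) ^ i := by rw [mul_pow]; ring
    _ ≤ _ := by gcongr

noncomputable def Jf (c : ℝ) (Q : ℚ[X]) (x : ℝ) : ℂ :=
  ∫ y : ℝ, (((Real.cosh (Real.pi * y) ^ 2)⁻¹ : ℝ) : ℂ) * (aeval ((c : ℂ) + y * Complex.I) Q * Complex.exp (((c : ℂ) + y * Complex.I) * x))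

lemma Jf_cont (c : ℝ) (Q : ℚ[X]) (x : ℝ) : Continuous (fun y : ℝ => (((Real.cosh (Real.pi * y) ^ 2)⁻¹ : ℝ) : ℂ) * (aeval ((c : ℂ) + y * Complex.I) Q * Complex.exp (((c : ℂ) + y * Complex.I) * x))) := by
  have h1 : Continuous (fun y : ℝ => (Real.cosh (Real.pi * y) ^ 2)⁻¹) := by
    refine Continuous.inv₀ (by fun_prop) fun y => ?_
    have := Real.cosh_pos (Real.pi * y)
    positivity
  have h2 : Continuous (fun y : ℝ => aeval ((c : ℂ) + y * Complex.I) Q) := Q.continuous_aeval.comp (by fun_prop)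
  exact (Complex.continuous_ofReal.comp h1).mul (h2.mul (by fun_prop))

lemma Jf_bound (c : ℝ) (Q : ℚ[X]) : ∃ M, 0 ≤ M ∧ ∀ x y : ℝ, ‖(((Real.cosh (Real.pi * y) ^ 2)⁻¹ : ℝ) : ℂ) * (aeval ((c : ℂ) + y * Complex.I) Q * Complex.exp (((c : ℂ) + y * Complex.I) * x))‖ ≤
    M * Real.exp (c * x) * ((1 + |y|) ^ Q.natDegree * Real.exp (-(2 * Real.pi * |y|))) := by
  obtain ⟨M, hM, h⟩ := aeval_bound Q c
  refine ⟨4 * M, by positivity, fun x y => ?_⟩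
  rw [norm_mul, norm_mul, Complex.norm_exp, Complex.norm_real, Real.norm_of_nonneg (by positivity)]
  have : (((c : ℂ) + y * Complex.I) * x).re = c * x := by simp
  rw [this]
  calc _ ≤ (4 * Real.exp (-(2 * Real.pi * |y|))) * ((M * (1 + |y|) ^ Q.natDegree) * Real.exp (c * x)) := by
        gcongr
        · exact sech_le y
        · exact h y
    _ = _ := by ring

lemma Jf_int (c : ℝ) (Q : ℚ[X]) (x : ℝ) : Integrable (fun y : ℝ => (((Real.cosh (Real.pi * y) ^ 2)⁻¹ : ℝ) : ℂ) * (aeval ((c : ℂ) + y * Complex.I) Q * Complex.exp (((c : ℂ) + y * Complex.I) * x))) := by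
  obtain ⟨M, hM, h⟩ := Jf_bound c Q
  exact Integrable.mono' ((int_pow_exp (2 * Real.pi) (by positivity) Q.natDegree).const_mul (M * Real.exp (c * x))) (Jf_cont c Q x).aestronglyMeasurable (Eventually.of_forall fun y => h x y)

lemma Jf_deriv (c : ℝ) (Q : ℚ[X]) (x : ℝ) : HasDerivAt (Jf c Q) (Jf c (X * Q) x) x := by
  obtain ⟨M, hM, h⟩ := Jf_bound c (X * Q)
  have hb : ∀ w ∈ Metric.ball x 1, Real.exp (c * w) ≤ Real.exp (|c| * (|x| + 1)) := by
    intro w hw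
    rw [Metric.mem_ball, Real.dist_eq] at hw
    refine Real.exp_le_exp.2 ((le_abs_self _).trans ?_)
    rw [abs_mul]
    gcongr
    have := abs_sub_abs_le_abs_sub w x
    linarith
  have := hasDerivAt_integral_of_dominated_loc_of_deriv_le (μ := (volume : Measure ℝ))
    (F := fun (x : ℝ) (y : ℝ) => (((Real.cosh (Real.pi * y) ^ 2)⁻¹ : ℝ) : ℂ) * (aeval ((c : ℂ) + y * Complex.I) Q * Complex.exp (((c : ℂ) + y * Complex.I) * x)))
    (F' := fun (x : ℝ) (y : ℝ) => (((Real.cosh (Real.pi * y) ^ 2)⁻¹ : ℝ) : ℂ) * (aeval ((c : ℂ) + y * Complex.I) (X * Q) * Complex.exp (((c : ℂ) + y * Complex.I) * x)))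
    (x₀ := x) (s := Metric.ball x 1) (bound := fun y => M * Real.exp (|c| * (|x| + 1)) * ((1 + |y|) ^ (X * Q).natDegree * Real.exp (-(2 * Real.pi * |y|))))
    (Metric.ball_mem_nhds x one_pos) (Eventually.of_forall fun w => (Jf_cont c Q w).aestronglyMeasurable) (Jf_int c Q x)
    (Jf_cont c (X * Q) x).aestronglyMeasurable ?_ ((int_pow_exp (2 * Real.pi) (by positivity) _).const_mul _) ?_
  · exact this.2
  · refine Eventually.of_forall fun y w hw => (h w y).trans ?_
    gcongr ?_ * ?_ * _
    exact hb w hw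
  · refine Eventually.of_forall fun y w _ => ?_
    have h1 : HasDerivAt (fun w : ℝ => ((c : ℂ) + y * Complex.I) * (w : ℂ)) ((c : ℂ) + y * Complex.I) w := by
      simpa using ((hasDerivAt_id w).ofReal_comp).const_mul ((c : ℂ) + y * Complex.I)
    refine ((h1.cexp.const_mul (aeval ((c : ℂ) + y * Complex.I) Q)).const_mul _).congr_deriv ?_
    simp only [map_mul, aeval_X]; ring

lemma Jf_add (c : ℝ) (Q1 Q2 : ℚ[X]) (x : ℝ) : Jf c (Q1 + Q2) x = Jf c Q1 x + Jf c Q2 x := by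
  rw [Jf, Jf, Jf, ← integral_add (Jf_int c Q1 x) (Jf_int c Q2 x)]
  congr 1; ext y; simp; ring

lemma Jf_smul (c : ℝ) (a : ℚ) (Q : ℚ[X]) (x : ℝ) : Jf c (C a * Q) x = a * Jf c Q x := by
  rw [Jf, Jf, ← integral_const_mul]
  congr 1; ext y; simp; ring
end

section
open Polynomial Filter Topology MeasureTheory Set

noncomputable def lgs (y : ℝ) : ℝ := (1 + Real.exp (-(2 * Real.pi * y)))⁻¹

lemma lgs_deriv (y : ℝ) : HasDerivAt lgs (Real.pi / 2 * (Real.cosh (Real.pi * y) ^ 2)⁻¹) y := by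
  have h1 : HasDerivAt (fun y : ℝ => -(2 * Real.pi * y)) (-(2 * Real.pi)) y := by
    have := (hasDerivAt_id y).const_mul (-(2 * Real.pi))
    refine (this.congr_deriv (mul_one _)).congr_of_eventuallyEq (Eventually.of_forall fun x => ?_)
    simp
  have h2 := (h1.exp.const_add 1).inv (by positivity)
  refine h2.congr_deriv ?_
  rw [Real.cosh_eq]
  have e1 : Real.exp (-(2 * Real.pi * y)) = Real.exp (-(Real.pi * y)) ^ 2 := by
    rw [← Real.exp_nat_mul]; push_cast; ring_nf
  have e2 : Real.exp (Real.pi * y) = (Real.exp (-(Real.pi * y)))⁻¹ := by rw [Real.exp_neg, inv_inv]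
  rw [e1, e2]
  have := Real.exp_pos (-(Real.pi * y))
  generalize Real.exp (-(Real.pi * y)) = E at *
  field_simp

lemma lgs_image : lgs '' univ = Ioo 0 1 := by
  ext t
  constructor
  · rintro ⟨y, -, rfl⟩
    have := Real.exp_pos (-(2 * Real.pi * y))
    exact ⟨by unfold lgs; positivity, by unfold lgs; exact inv_lt_one_of_one_lt₀ (by linarith)⟩
  · rintro ⟨h0, h1⟩
    refine ⟨-(Real.log (1 / t - 1)) / (2 * Real.pi), trivial, ?_⟩
    have h2 : 0 < 1 / t - 1 := by rw [sub_pos, lt_div_iff₀ h0]; linarith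
    unfold lgs
    rw [show -(2 * Real.pi * (-(Real.log (1 / t - 1)) / (2 * Real.pi))) = Real.log (1 / t - 1) by field_simp, Real.exp_log h2]
    field_simp; ring

lemma lgs_inj : Function.Injective lgs := by
  intro a b h
  unfold lgs at h
  have h2 := inv_injective h
  have h3 : Real.exp (-(2 * Real.pi * a)) = Real.exp (-(2 * Real.pi * b)) := by linarith
  have h4 := Real.exp_injective h3
  have := Real.pi_pos
  have h5 : 2 * Real.pi * a = 2 * Real.pi * b := by linarith
  exact mul_left_cancel₀ (by positivity) h5

lemma sech_fourier (x : ℝ) (hx : x ≠ 0) :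
    ∫ y : ℝ, (((Real.cosh (Real.pi * y) ^ 2)⁻¹ : ℝ) : ℂ) * Complex.exp (y * x * Complex.I) = ((x / (Real.pi * Real.sinh (x / 2)) : ℝ) : ℂ) := by
  set w : ℝ := x / (2 * Real.pi) with hw
  have hpi := Real.pi_pos
  have hw0 : w ≠ 0 := by rw [hw]; positivity
  have hwI : (w : ℂ) * Complex.I ≠ 0 := mul_ne_zero (by exact_mod_cast hw0) Complex.I_ne_zero
  have hb := Complex.Gamma_mul_Gamma_eq_betaIntegral (s := w * Complex.I + 1) (t := 1 - w * Complex.I) (by simp) (by simp)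
  rw [Complex.Gamma_add_one _ hwI, mul_assoc, Complex.Gamma_mul_Gamma_one_sub] at hb
  have hG : Complex.Gamma ((w : ℂ) * Complex.I + 1 + (1 - w * Complex.I)) = 1 := by
    rw [show (w : ℂ) * Complex.I + 1 + (1 - w * Complex.I) = ((1 : ℕ) : ℂ) + 1 by push_cast; ring, Complex.Gamma_nat_eq_factorial]; simp
  rw [hG, one_mul] at hb
  have hsin : Complex.sin (Real.pi * (w * Complex.I)) = ((Real.sinh (x / 2) : ℝ) : ℂ) * Complex.I := by
    rw [show (Real.pi : ℂ) * (w * Complex.I) = ((x / 2 : ℝ) : ℂ) * Complex.I by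
      rw [hw]; push_cast; field_simp, Complex.sin_mul_I, Complex.ofReal_sinh]
  have hs0 : Real.sinh (x / 2) ≠ 0 := by
    rw [Ne, Real.sinh_eq_zero]; intro h; exact hx (by linarith)
  have hbi : Complex.betaIntegral (w * Complex.I + 1) (1 - w * Complex.I) = ∫ y : ℝ, ((Real.pi / 2 : ℝ) : ℂ) * ((((Real.cosh (Real.pi * y) ^ 2)⁻¹ : ℝ) : ℂ) * Complex.exp (y * x * Complex.I)) := by
    rw [Complex.betaIntegral, intervalIntegral.integral_of_le zero_le_one, integral_Ioc_eq_integral_Ioo, ← lgs_image,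
      integral_image_eq_integral_abs_deriv_smul MeasurableSet.univ (fun y _ => (lgs_deriv y).hasDerivWithinAt) lgs_inj.injOn, setIntegral_univ]
    refine integral_congr_ae (Eventually.of_forall fun y => ?_)
    have hm : lgs y ∈ Ioo (0:ℝ) 1 := by rw [← lgs_image]; exact ⟨y, trivial, rfl⟩
    have h1 : 0 < 1 - lgs y := by linarith [hm.2]
    have hE := Real.exp_pos (-(2 * Real.pi * y))
    have hl : Real.log (lgs y) - Real.log (1 - lgs y) = 2 * Real.pi * y := by
      rw [← Real.log_div hm.1.ne' h1.ne']
      have : lgs y / (1 - lgs y) = Real.exp (2 * Real.pi * y) := by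
        have e : Real.exp (2 * Real.pi * y) = (Real.exp (-(2 * Real.pi * y)))⁻¹ := by rw [Real.exp_neg, inv_inv]
        rw [e]; unfold lgs; field_simp; simp
      rw [this, Real.log_exp]
    have hc : ((lgs y : ℝ) : ℂ) ^ ((w : ℂ) * Complex.I + 1 - 1) * (1 - ((lgs y : ℝ) : ℂ)) ^ (1 - (w : ℂ) * Complex.I - 1) = Complex.exp (y * x * Complex.I) := by
      rw [show (1 - ((lgs y : ℝ) : ℂ)) = ((1 - lgs y : ℝ) : ℂ) by push_cast; ring]
      rw [Complex.cpow_def_of_ne_zero (by exact_mod_cast hm.1.ne'), Complex.cpow_def_of_ne_zero (by exact_mod_cast h1.ne'), ← Complex.exp_add,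
        ← Complex.ofReal_log hm.1.le, ← Complex.ofReal_log h1.le]
      congr 1
      have : (((Real.log (lgs y) - Real.log (1 - lgs y) : ℝ) : ℂ)) * (w * Complex.I) = y * x * Complex.I := by
        rw [hl, hw]; push_cast; field_simp
      rw [← this]; push_cast; ring
    simp only []
    rw [hc, abs_of_nonneg (by positivity), Complex.real_smul]; push_cast; ring
  rw [hbi, integral_const_mul, hsin] at hb
  have hp2 : ((Real.pi / 2 : ℝ) : ℂ) ≠ 0 := by exact_mod_cast (by positivity : Real.pi / 2 ≠ 0)
  refine mul_left_cancel₀ hp2 (hb.symm.trans ?_)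
  have hsC : ((Real.sinh (x / 2) : ℝ) : ℂ) ≠ 0 := by exact_mod_cast hs0
  have hpC : (Real.pi : ℂ) ≠ 0 := by exact_mod_cast hpi.ne'
  rw [hw]
  push_cast at *
  field_simp

lemma J_base (k : ℕ) (x : ℝ) (hx : x < 0) : Jf ((k:ℝ) - 1 / 2) 1 x = -(2 / Real.pi : ℝ) * Sf k 1 x := by
  have h := sech_fourier x hx.ne
  have h1 : Jf ((k:ℝ) - 1 / 2) 1 x = Complex.exp (((((k:ℝ) - 1 / 2) * x : ℝ) : ℂ)) * ((x / (Real.pi * Real.sinh (x / 2)) : ℝ) : ℂ) := by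
    rw [← h, Jf, ← integral_const_mul]
    congr 1; ext y
    rw [map_one, one_mul, show (((((k:ℝ) - 1 / 2 : ℝ) : ℂ)) + y * Complex.I) * x = (((((k:ℝ) - 1 / 2) * x : ℝ) : ℂ)) + y * x * Complex.I by push_cast; ring, Complex.exp_add]
    ring
  rw [h1, Sf, derivative_one, Pf_one k x (by simpa using hx)]
  have h0 : Pf k 0 x = 0 := by simp [Pf]
  rw [h0, add_zero]
  have key : Real.exp (((k:ℝ) - 1 / 2) * x) * (x / (Real.pi * Real.sinh (x / 2))) = -(2 / Real.pi) * (x * (Real.exp (k * x) / (1 - Real.exp x))) := by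
    have e1 : Real.exp (((k:ℝ) - 1 / 2) * x) = Real.exp (k * x) * (Real.exp (x / 2))⁻¹ := by
      rw [← Real.exp_neg, ← Real.exp_add]; ring_nf
    have e2 : Real.exp x = Real.exp (x / 2) ^ 2 := by rw [← Real.exp_nat_mul]; push_cast; ring_nf
    have hlt : Real.exp (x / 2) < 1 := Real.exp_lt_one_iff.2 (by linarith)
    rw [Real.sinh_eq, Real.exp_neg, e1, e2]
    have hp := Real.exp_pos (x / 2)
    have hpi := Real.pi_pos
    generalize Real.exp (x / 2) = E at *
    have n1 : 1 - E ^ 2 ≠ 0 := by nlinarith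
    have n2 : E - E⁻¹ ≠ 0 := by
      have h3 : E - E⁻¹ = -(1 - E ^ 2) / E := by field_simp; ring
      rw [h3]; exact div_ne_zero (neg_ne_zero.2 n1) hp.ne'
    have n3 : E ^ 2 - 1 ≠ 0 := by intro h; apply n1; linarith
    field_simp
    ring
  rw [← Complex.ofReal_exp]
  have := congrArg (fun r : ℝ => (r : ℂ)) key
  push_cast at this ⊢
  exact this

lemma J_pow (k i : ℕ) : ∀ x : ℝ, x < 0 → Jf ((k:ℝ) - 1 / 2) (X ^ i) x = -(2 / Real.pi : ℝ) * Sf k (X ^ i) x := by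
  induction i with
  | zero => intro x hx; simpa using J_base k x hx
  | succ i ih =>
    intro x hx
    have h1 := Jf_deriv ((k:ℝ) - 1 / 2) (X ^ i) x
    have h2 := ((Sf_deriv k (X ^ i) x (by simpa using hx)).comp_ofReal).const_mul (-(2 / Real.pi : ℝ) : ℂ)
    rw [pow_succ']
    refine h1.unique (h2.congr_of_eventuallyEq ?_)
    filter_upwards [Iio_mem_nhds hx] with w hw
    exact ih w hw

theorem J_eq (k : ℕ) (Q : ℚ[X]) (x : ℝ) (hx : x < 0) : Jf ((k:ℝ) - 1 / 2) Q x = -(2 / Real.pi : ℝ) * Sf k Q x := by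
  induction Q using Polynomial.induction_on' with
  | add p q hp hq => rw [Jf_add, Sf_add k p q x (by simpa using hx), hp, hq]; ring
  | monomial i a => rw [← C_mul_X_pow_eq_monomial, Jf_smul, Sf_smul, J_pow k i x hx]; ring
end

section
open Polynomial Filter Topology MeasureTheory Set

noncomputable def ThT (T : ℝ) : ℝ := (Real.arctan (T / 64) + Real.arctan (T / 55)) + (Real.arctan (T / 47) + Real.arctan (T / 38)) + (Real.arctan (T / 30) + Real.arctan (T / 21))
noncomputable def KT (T : ℝ) : ℝ := Kf T 64 55 * Kf T 47 38 * Kf T 30 21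
noncomputable def DT (T : ℝ) : ℝ := Df T 64 55 * Df T 47 38 * Df T 30 21

lemma Rp_bound (T : ℝ) (hT : 0 ≤ T) (N : ℕ) (hN : 1 ≤ N) (s : ℂ) (hs : s.re = ((64 * N : ℕ) : ℝ) - 1 / 2) :
    ‖aeval s (Rp (17 * N))‖ * (Real.pi / Real.cosh (Real.pi * s.im)) ^ 3 ≤ Real.exp (-(ThT T * |s.im|)) * (DT T * N ^ 6 * KT T ^ N) := by
  have h1 := binP_bound T hT 64 55 N (by norm_num) (by norm_num) hN s hs
  have h2 := binP_bound T hT 47 38 N (by norm_num) (by norm_num) hN (s - (17 * N : ℕ)) (by simp [hs]; ring)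
  have h3 := binP_bound T hT 30 21 N (by norm_num) (by norm_num) hN (s - (34 * N : ℕ)) (by simp [hs]; ring)
  have i2 : (s - (17 * N : ℕ)).im = s.im := by simp
  have i3 : (s - (34 * N : ℕ)).im = s.im := by simp
  rw [i2] at h2
  rw [i3] at h3
  have e : aeval s (Rp (17 * N)) = aeval s (binP ((64 + 55) * N)) * aeval (s - (17 * N : ℕ)) (binP ((47 + 38) * N)) * aeval (s - (34 * N : ℕ)) (binP ((30 + 21) * N)) := by
    rw [Rp, map_mul, map_mul, aeval_comp, aeval_comp, show 7 * (17 * N) = (64 + 55) * N by ring, show 5 * (17 * N) = (47 + 38) * N by ring, show 3 * (17 * N) = (30 + 21) * N by ring]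
    congr 3
    · simp
    · simp; ring
  have hc : 0 < Real.pi / Real.cosh (Real.pi * s.im) := div_pos Real.pi_pos (Real.cosh_pos _)
  rw [e, norm_mul, norm_mul]
  push_cast at h1 h2 h3 ⊢
  calc _ = (‖aeval s (binP ((64 + 55) * N))‖ * (Real.pi / Real.cosh (Real.pi * s.im))) * (‖aeval (s - (17 * N)) (binP ((47 + 38) * N))‖ * (Real.pi / Real.cosh (Real.pi * s.im))) * (‖aeval (s - (34 * N)) (binP ((30 + 21) * N))‖ * (Real.pi / Real.cosh (Real.pi * s.im))) := by ring
    _ ≤ _ := mul_le_mul (mul_le_mul h1 h2 (by positivity) ((by positivity : (0:ℝ) ≤ _).trans h1)) h3 (by positivity) (mul_nonneg ((by positivity : (0:ℝ) ≤ _).trans h1) ((by positivity : (0:ℝ) ≤ _).trans h2))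
    _ = _ := by
      rw [ThT, DT, KT, mul_pow, mul_pow]
      generalize Real.arctan (T / 64) + Real.arctan (T / 55) = A
      generalize Real.arctan (T / 47) + Real.arctan (T / 38) = B
      generalize Real.arctan (T / 30) + Real.arctan (T / 21) = D
      rw [show -((A + B + D) * |s.im|) = -(A * |s.im|) + -(B * |s.im|) + -(D * |s.im|) by ring, Real.exp_add, Real.exp_add]; ring

lemma Kf_nonneg (T : ℝ) (a b : ℕ) : 0 ≤ Kf T a b := by unfold Kf; positivity
lemma Df_nonneg (T : ℝ) (a b : ℕ) : 0 ≤ Df T a b := by unfold Df; positivity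
lemma KT_nonneg (T : ℝ) : 0 ≤ KT T := mul_nonneg (mul_nonneg (Kf_nonneg ..) (Kf_nonneg ..)) (Kf_nonneg ..)
lemma DT_nonneg (T : ℝ) : 0 ≤ DT T := mul_nonneg (mul_nonneg (Df_nonneg ..) (Df_nonneg ..)) (Df_nonneg ..)

lemma integrand_bound (T : ℝ) (hT : 0 ≤ T) (x : ℝ) (N k : ℕ) (hN : 1 ≤ N) (hk : k ≤ 2) (y : ℝ) :
    ‖(((Real.cosh (Real.pi * y) ^ 2)⁻¹ : ℝ) : ℂ) * (aeval (((((64 * N : ℕ) : ℝ) - 1 / 2 : ℝ) : ℂ) + y * Complex.I) (Rk (17 * N) k) * Complex.exp ((((((64 * N : ℕ) : ℝ) - 1 / 2 : ℝ) : ℂ) + y * Complex.I) * x))‖ ≤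
    (81 * DT T * (N + 1) ^ 8 * KT T ^ N * Real.exp ((((64 * N : ℕ) : ℝ) - 1 / 2) * x)) * ((1 + |y|) ^ 2 * Real.exp (-((ThT T - Real.pi) * |y|))) := by
  set c : ℝ := ((64 * N : ℕ) : ℝ) - 1 / 2 with hc
  set s : ℂ := (c : ℂ) + y * Complex.I with hs
  have hre : s.re = c := by simp [hs]
  have him : s.im = y := by simp [hs]
  have hR := Rp_bound T hT N hN s (by rw [hre])
  rw [him] at hR
  have hL : ‖aeval s (_root_.Lp (17 * N))‖ ≤ 9 * (N + 1) * (1 + |y|) := by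
    have : aeval s (_root_.Lp (17 * N)) = ((9 * N : ℝ) : ℂ) + ((2 * y : ℝ) : ℂ) * Complex.I := by
      simp only [_root_.Lp, hs, hc]; simp; ring
    rw [this]
    refine (norm_add_le _ _).trans ?_
    rw [norm_mul, Complex.norm_real, Complex.norm_real, Complex.norm_I, Real.norm_eq_abs, Real.norm_eq_abs, abs_mul, abs_mul]
    have : (0:ℝ) ≤ N := by positivity
    simp
    nlinarith [abs_nonneg y]
  have h1 : (1:ℝ) ≤ 9 * (N + 1) * (1 + |y|) := by
    have : (0:ℝ) ≤ N := by positivity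
    nlinarith [abs_nonneg y]
  have hLk : ‖aeval s (_root_.Lp (17 * N))‖ ^ k ≤ 81 * (N + 1) ^ 2 * (1 + |y|) ^ 2 := by
    calc _ ≤ (9 * (N + 1) * (1 + |y|)) ^ k := by gcongr
      _ ≤ (9 * (N + 1) * (1 + |y|)) ^ 2 := pow_le_pow_right₀ h1 hk
      _ = _ := by ring
  have hch := Real.cosh_pos (Real.pi * y)
  have hpi := Real.pi_pos
  have hcosh : Real.cosh (Real.pi * y) ≤ Real.exp (Real.pi * |y|) := by
    rw [← Real.cosh_abs, abs_mul, abs_of_pos hpi, Real.cosh_eq]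
    have : Real.exp (-(Real.pi * |y|)) ≤ Real.exp (Real.pi * |y|) := Real.exp_le_exp.2 (by have := mul_nonneg hpi.le (abs_nonneg y); linarith)
    linarith
  have hRp : (Real.cosh (Real.pi * y) ^ 2)⁻¹ * ‖aeval s (Rp (17 * N))‖ ≤ Real.exp (-((ThT T - Real.pi) * |y|)) * (DT T * N ^ 6 * KT T ^ N) := by
    have h2 : ‖aeval s (Rp (17 * N))‖ ≤ Real.exp (-(ThT T * |y|)) * (DT T * N ^ 6 * KT T ^ N) * Real.cosh (Real.pi * y) ^ 3 := by
      rw [div_pow, mul_div_assoc', div_le_iff₀ (by positivity)] at hR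
      refine le_trans (le_mul_of_one_le_right (norm_nonneg _) ?_) hR
      exact one_le_pow₀ (by linarith [Real.pi_gt_three])
    have hnn : 0 ≤ DT T * N ^ 6 * KT T ^ N := mul_nonneg (mul_nonneg (DT_nonneg T) (by positivity)) (pow_nonneg (KT_nonneg T) _)
    calc _ ≤ (Real.cosh (Real.pi * y) ^ 2)⁻¹ * (Real.exp (-(ThT T * |y|)) * (DT T * N ^ 6 * KT T ^ N) * Real.cosh (Real.pi * y) ^ 3) := by gcongr
      _ = Real.exp (-(ThT T * |y|)) * Real.cosh (Real.pi * y) * (DT T * N ^ 6 * KT T ^ N) := by field_simp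
      _ ≤ Real.exp (-(ThT T * |y|)) * Real.exp (Real.pi * |y|) * (DT T * N ^ 6 * KT T ^ N) := by gcongr
      _ = _ := by rw [← Real.exp_add]; ring_nf
  have hex : ‖Complex.exp (s * x)‖ = Real.exp (c * x) := by
    rw [Complex.norm_exp]; congr 1; simp [hre]
  rw [norm_mul, norm_mul, hex, Rk, map_mul, map_pow, norm_mul, norm_pow, Complex.norm_real, Real.norm_of_nonneg (by positivity)]
  have hD := DT_nonneg T
  have hK := KT_nonneg T
  calc _ = ((Real.cosh (Real.pi * y) ^ 2)⁻¹ * ‖aeval s (Rp (17 * N))‖) * (‖aeval s (_root_.Lp (17 * N))‖ ^ k) * Real.exp (c * x) := by ring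
    _ ≤ (Real.exp (-((ThT T - Real.pi) * |y|)) * (DT T * (N + 1) ^ 6 * KT T ^ N)) * (81 * (N + 1) ^ 2 * (1 + |y|) ^ 2) * Real.exp (c * x) := by
        refine mul_le_mul_of_nonneg_right (mul_le_mul (hRp.trans ?_) hLk (by positivity) (by positivity)) (by positivity)
        gcongr
        linarith
    _ = _ := by ring

theorem Sf_bound (T : ℝ) (hT : 0 ≤ T) (hTh : Real.pi < ThT T) (x : ℝ) (hx : x < 0) : ∃ M > 0, ∀ N k : ℕ, 1 ≤ N → k ≤ 2 →
    ‖Sf (64 * N) (Rk (17 * N) k) x‖ ≤ M * (N + 1) ^ 8 * (KT T * Real.exp (64 * x)) ^ N := by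
  set I0 := ∫ y : ℝ, ((1 + |y|) ^ 2 * Real.exp (-((ThT T - Real.pi) * |y|))) with hI0
  have hint := int_pow_exp (ThT T - Real.pi) (by linarith) 2
  have hI0n : 0 ≤ I0 := integral_nonneg fun y => by positivity
  have hD := DT_nonneg T
  have hK := KT_nonneg T
  have hpi := Real.pi_pos
  refine ⟨Real.pi / 2 * (81 * DT T * Real.exp (-(x / 2)) * I0) + 1, by positivity, fun N k hN hk => ?_⟩
  have h := J_eq (64 * N) (Rk (17 * N) k) x hx
  have hJ : ‖Jf (((64 * N : ℕ) : ℝ) - 1 / 2) (Rk (17 * N) k) x‖ ≤ (81 * DT T * (N + 1) ^ 8 * KT T ^ N * Real.exp ((((64 * N : ℕ) : ℝ) - 1 / 2) * x)) * I0 := by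
    rw [Jf, hI0, ← integral_const_mul]
    exact norm_integral_le_of_norm_le (hint.const_mul _) (Eventually.of_forall fun y => integrand_bound T hT x N k hN hk y)
  rw [h, norm_mul] at hJ
  have hn : ‖(-((2 / Real.pi : ℝ) : ℂ))‖ = 2 / Real.pi := by
    rw [norm_neg, Complex.norm_real, Real.norm_of_nonneg (by positivity)]
  rw [hn] at hJ
  have he : Real.exp ((((64 * N : ℕ) : ℝ) - 1 / 2) * x) = Real.exp (64 * x) ^ N * Real.exp (-(x / 2)) := by
    rw [← Real.exp_nat_mul, ← Real.exp_add]; push_cast; ring_nf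
  rw [he] at hJ
  have hJ2 : ‖Sf (64 * N) (Rk (17 * N) k) x‖ ≤ Real.pi / 2 * (81 * DT T * Real.exp (-(x / 2)) * I0) * ((N + 1) ^ 8 * (KT T * Real.exp (64 * x)) ^ N) := by
    rw [mul_pow]
    calc _ = Real.pi / 2 * (2 / Real.pi * ‖Sf (64 * N) (Rk (17 * N) k) x‖) := by field_simp
      _ ≤ Real.pi / 2 * _ := mul_le_mul_of_nonneg_left hJ (by positivity)
      _ = _ := by ring
  refine hJ2.trans ?_
  rw [mul_assoc _ ((N + 1 : ℝ) ^ 8)]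
  exact mul_le_mul_of_nonneg_right (by linarith) (mul_nonneg (pow_nonneg (by positivity) 8) (pow_nonneg (mul_nonneg hK (Real.exp_pos _).le) _))
end

section
open Polynomial Filter Topology

lemma aeval_natC (Q : ℚ[X]) (ν : ℕ) : aeval (ν : ℂ) Q = ((Q.eval (ν : ℚ) : ℚ) : ℂ) := by
  simpa using aeval_algebraMap_apply_eq_algebraMap_eval (A := ℂ) (ν : ℚ) Q

lemma Pf_shift (k : ℕ) (Q : ℚ[X]) (x : ℂ) (hx : x.re < 0) (h : Q.eval (k : ℚ) = 0) :
    Complex.exp x * Pf k (Q.comp (X + C 1)) x = Pf k Q x := by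
  conv_rhs => rw [Pf, (Pf_summable k Q x hx).of_norm.tsum_eq_zero_add]
  rw [Nat.add_zero, aeval_natC, h, Rat.cast_zero, zero_mul, zero_add, Pf, ← tsum_mul_left]
  refine tsum_congr fun j => ?_
  have e1 : aeval ((k + j : ℕ) : ℂ) (Q.comp (X + C 1)) = aeval ((k + (j + 1) : ℕ) : ℂ) Q := by
    rw [aeval_comp]; congr 2; simp; ring
  have e2 : Complex.exp (((k + (j + 1) : ℕ) : ℂ) * x) = Complex.exp x * Complex.exp (((k + j : ℕ) : ℂ) * x) := by
    rw [← Complex.exp_add]; push_cast; ring_nf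
  rw [e1, e2]; ring

lemma Sf_shift (k : ℕ) (Q : ℚ[X]) (x : ℂ) (hx : x.re < 0) (h : Q.eval (k : ℚ) = 0) (h' : (derivative Q).eval (k : ℚ) = 0) :
    Complex.exp x * Sf k (Q.comp (X + C 1)) x = Sf k Q x := by
  rw [Sf, Sf, ← Pf_shift k Q x hx h, ← Pf_shift k (derivative Q) x hx h', derivative_comp]
  simp; ring

noncomputable def Lam (k : ℕ) (a b x : ℂ) (Q : ℚ[X]) : ℂ := a * Pf k Q x + b * Sf k Q x

lemma Lam_add (k : ℕ) (a b x : ℂ) (hx : x.re < 0) (Q1 Q2 : ℚ[X]) : Lam k a b x (Q1 + Q2) = Lam k a b x Q1 + Lam k a b x Q2 := by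
  rw [Lam, Lam, Lam, Pf_add k _ _ x hx, Sf_add k _ _ x hx]; ring

lemma Lam_smul (k : ℕ) (a b x : ℂ) (c : ℚ) (Q : ℚ[X]) : Lam k a b x (C c * Q) = c * Lam k a b x Q := by
  rw [Lam, Lam, Pf_smul, Sf_smul]; ring

lemma Lam_shift (k : ℕ) (a b x : ℂ) (hx : x.re < 0) (Q : ℚ[X]) (h : Q.eval (k : ℚ) = 0) (h' : (derivative Q).eval (k : ℚ) = 0) :
    Complex.exp x * Lam k a b x (Q.comp (X + C 1)) = Lam k a b x Q := by
  rw [Lam, Lam, ← Pf_shift k Q x hx h, ← Sf_shift k Q x hx h h']; ring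

lemma Rp_zero (n ν : ℕ) (h1 : n ≤ ν) (h2 : ν < 6 * n) (G : ℚ[X]) : (Rp n * G).eval (ν : ℚ) = 0 ∧ (derivative (Rp n * G)).eval (ν : ℚ) = 0 := by
  have h := Rk_zero n 0 ν h1 h2
  simp only [Rk, pow_zero, mul_one] at h
  rw [derivative_mul, eval_add, eval_mul, eval_mul, eval_mul, h.1, h.2]; simp

noncomputable def Up (n : ℕ) : ℚ[X] := (X + C 1) * (X + C (1 - n : ℚ)) * (X + C (1 - 2 * n : ℚ))
noncomputable def Vp (n : ℕ) : ℚ[X] := (X - C (5 * n : ℚ)) * (X - C (6 * n : ℚ)) * (X - C (7 * n : ℚ))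

lemma binP_step (m : ℕ) (x : ℚ) : (binP m).eval (x + 1) * (x + 1 - m) = (binP m).eval x * (x + 1) := by
  rcases m with _ | m
  · simp [binP]
  · simp only [binP_eval]
    rw [Finset.prod_range_succ', Finset.prod_range_succ]
    have : ∏ k ∈ Finset.range m, (x + 1 - ((k + 1 : ℕ) : ℚ)) = ∏ k ∈ Finset.range m, (x - k) :=
      Finset.prod_congr rfl fun i _ => by push_cast; ring
    rw [this]; push_cast; ring

lemma Rp_step (n : ℕ) : (Rp n * Vp n).comp (X + C 1) = Rp n * Up n := by
  refine Polynomial.funext fun x => ?_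
  have h1 := binP_step (7 * n) x
  have h2 := binP_step (5 * n) (x - n)
  have h3 := binP_step (3 * n) (x - 2 * n)
  simp only [Rp, Vp, Up, eval_comp, eval_mul, eval_add, eval_X, eval_C, eval_sub]
  rw [show x + 1 - (n:ℚ) = x - n + 1 by ring, show x + 1 - 2 * (n:ℚ) = x - 2 * n + 1 by ring]
  push_cast at h1 h2 h3
  generalize eval (x + 1) (binP (7 * n)) = A1 at *
  generalize eval x (binP (7 * n)) = A0 at *
  generalize eval (x - n + 1) (binP (5 * n)) = B1 at *
  generalize eval (x - n) (binP (5 * n)) = B0 at *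
  generalize eval (x - 2 * n + 1) (binP (3 * n)) = D1 at *
  generalize eval (x - 2 * n) (binP (3 * n)) = D0 at *
  calc _ = (A1 * (x + 1 - 7 * n)) * (B1 * (x - n + 1 - 5 * n)) * (D1 * (x - 2 * n + 1 - 3 * n)) := by ring
    _ = _ := by rw [h1, h2, h3]; ring

lemma Up_monic (n d : ℕ) : (Up n * (X + C 1) ^ d).Monic ∧ (Up n * (X + C 1) ^ d).natDegree = d + 3 := by
  have m1 : (X + C (1:ℚ)).Monic := monic_X_add_C _
  have m2 : (X + C (1 - n : ℚ)).Monic := monic_X_add_C _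
  have m3 : (X + C (1 - 2 * n : ℚ)).Monic := monic_X_add_C _
  refine ⟨((m1.mul m2).mul m3).mul (m1.pow d), ?_⟩
  rw [Up, Monic.natDegree_mul ((m1.mul m2).mul m3) (m1.pow d), Monic.natDegree_mul (m1.mul m2) m3, Monic.natDegree_mul m1 m2, m1.natDegree_pow]
  simp only [natDegree_X_add_C]; ring

lemma Vp_monic (n d : ℕ) : (Vp n * X ^ d).Monic ∧ (Vp n * X ^ d).natDegree = d + 3 := by
  have m1 : (X - C (5 * n : ℚ)).Monic := monic_X_sub_C _
  have m2 : (X - C (6 * n : ℚ)).Monic := monic_X_sub_C _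
  have m3 : (X - C (7 * n : ℚ)).Monic := monic_X_sub_C _
  have m4 : (X : ℚ[X]).Monic := monic_X
  refine ⟨((m1.mul m2).mul m3).mul (m4.pow d), ?_⟩
  rw [Vp, Monic.natDegree_mul ((m1.mul m2).mul m3) (m4.pow d), Monic.natDegree_mul (m1.mul m2) m3, Monic.natDegree_mul m1 m2, m4.natDegree_pow]
  simp only [natDegree_X_sub_C, natDegree_X]; ring

section
variable (n k : ℕ) (hk1 : n ≤ k) (hk2 : k < 6 * n) (a b x : ℂ) (hx : x.re < 0)
include hk1 hk2 hx

lemma Lam_rec (d : ℕ) (h : ∀ G : ℚ[X], G.degree < (d + 3 : ℕ) → Lam k a b x (Rp n * G) = 0) : Lam k a b x (Rp n * X ^ (d + 3)) = 0 := by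
  have hs := Lam_shift k a b x hx (Rp n * (Vp n * X ^ d)) (Rp_zero n k hk1 hk2 _).1 (Rp_zero n k hk1 hk2 _).2
  have hc : (Rp n * (Vp n * X ^ d)).comp (X + C 1) = Rp n * (Up n * (X + C 1) ^ d) := by
    rw [← mul_assoc, mul_comp, Rp_step, X_pow_comp, mul_assoc]
  rw [hc] at hs
  have hm : (X ^ (d + 3) : ℚ[X]).Monic := monic_X_pow _
  have key : ∀ P : ℚ[X], P.Monic → P.natDegree = d + 3 → Lam k a b x (Rp n * P) = Lam k a b x (Rp n * X ^ (d + 3)) := by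
    intro P hP hd
    have hdeg : P.degree = (d + 3 : ℕ) := by rw [degree_eq_natDegree hP.ne_zero, hd]
    have hlt : (P - X ^ (d + 3)).degree < ((d + 3 : ℕ) : WithBot ℕ) := by
      rw [← hdeg]
      exact degree_sub_lt (by rw [hdeg, degree_X_pow]) hP.ne_zero (by rw [hP.leadingCoeff, hm.leadingCoeff])
    have := h _ hlt
    have h2 : Rp n * P = Rp n * X ^ (d + 3) + Rp n * (P - X ^ (d + 3)) := by ring
    rw [h2, Lam_add k a b x hx, this, add_zero]
  rw [key _ (Up_monic n d).1 (Up_monic n d).2, key _ (Vp_monic n d).1 (Vp_monic n d).2] at hs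
  have hne : Complex.exp x ≠ 1 := by
    intro h1
    have := congrArg norm h1
    rw [Complex.norm_exp, norm_one] at this
    have := Real.exp_lt_one_iff.2 hx
    linarith
  have : (Complex.exp x - 1) * Lam k a b x (Rp n * X ^ (d + 3)) = 0 := by rw [sub_mul, hs]; ring
  exact (mul_eq_zero.1 this).resolve_left (sub_ne_zero.2 hne)

lemma Lam_all (h : ∀ j ≤ 2, Lam k a b x (Rk n j) = 0) (d : ℕ) : ∀ G : ℚ[X], G.degree < (d + 3 : ℕ) → Lam k a b x (Rp n * G) = 0 := by
  induction d with
  | zero =>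
    intro G hG
    have hG' : G = C (G.coeff 0) + C (G.coeff 1) * X + C (G.coeff 2) * X ^ 2 := by
      have h1 : G.natDegree < 3 := by
        rcases eq_or_ne G 0 with rfl | h0
        · simp
        · rw [degree_eq_natDegree h0] at hG; exact_mod_cast hG
      conv_lhs => rw [G.as_sum_range_C_mul_X_pow' h1]
      simp [Finset.sum_range_succ]
    set g0 := G.coeff 0
    set g1 := G.coeff 1
    set g2 := G.coeff 2
    have e : Rp n * G = C (g0 + g1 * (7 * n - 1) / 2 + g2 * (7 * n - 1) ^ 2 / 4) * Rk n 0 + C (g1 / 2 + g2 * (7 * n - 1) / 2) * Rk n 1 + C (g2 / 4) * Rk n 2 := by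
      rw [hG']
      refine Polynomial.funext fun y => ?_
      simp [Rk, Lp]; ring
    rw [e, Lam_add k a b x hx, Lam_add k a b x hx, Lam_smul, Lam_smul, Lam_smul, h 0 (by norm_num), h 1 (by norm_num), h 2 le_rfl]; simp
  | succ d ih =>
    intro G hG
    have hr := Lam_rec n k hk1 hk2 a b x hx d ih
    set c := G.coeff (d + 3)
    have hlt : (G - C c * X ^ (d + 3)).degree < ((d + 3 : ℕ) : WithBot ℕ) := by
      rw [degree_lt_iff_coeff_zero]
      intro m hm
      rw [degree_lt_iff_coeff_zero] at hG
      rcases eq_or_lt_of_le hm with rfl | h1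
      · simp [c]
      · rw [coeff_sub, coeff_C_mul_X_pow, hG m (by omega), if_neg (by omega), sub_zero]
    have e : Rp n * G = C c * (Rp n * X ^ (d + 3)) + Rp n * (G - C c * X ^ (d + 3)) := by ring
    rw [e, Lam_add k a b x hx, Lam_smul, hr, ih _ hlt]; simp

lemma Lam_pow (h : ∀ j ≤ 2, Lam k a b x (Rk n j) = 0) (i : ℕ) : Lam k a b x (X ^ i * Rp n) = 0 := by
  rw [mul_comm]
  refine Lam_all n k hk1 hk2 a b x hx h i _ ?_
  rw [degree_X_pow]; exact_mod_cast (by omega : i < i + 3)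

end

lemma Lam_deriv (k : ℕ) (a b : ℂ) (Q : ℚ[X]) (x : ℂ) (hx : x.re < 0) : HasDerivAt (fun x => Lam k a b x Q) (Lam k a b x (X * Q)) x :=
  ((Pf_deriv k Q x hx).const_mul a).add ((Sf_deriv k Q x hx).const_mul b)

lemma Lam_iter (k : ℕ) (a b : ℂ) (Q : ℚ[X]) (i : ℕ) : ∀ x : ℂ, x.re < 0 → iteratedDeriv i (fun x => Lam k a b x Q) x = Lam k a b x (X ^ i * Q) := by
  induction i with
  | zero => intro x _; simp
  | succ i ih =>
    intro x hx
    rw [iteratedDeriv_succ]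
    have : iteratedDeriv i (fun x => Lam k a b x Q) =ᶠ[𝓝 x] (fun x => Lam k a b x (X ^ i * Q)) := by
      filter_upwards [(isOpen_lt Complex.continuous_re continuous_const).mem_nhds hx] with w hw
      exact ih w hw
    rw [this.deriv_eq, (Lam_deriv k a b _ x hx).deriv, pow_succ', mul_assoc]

lemma Pf_period (k : ℕ) (Q : ℚ[X]) (x : ℂ) : Pf k Q (x + 2 * Real.pi * Complex.I) = Pf k Q x := by
  rw [Pf, Pf]
  refine tsum_congr fun j => ?_
  rw [mul_add, Complex.exp_add, Complex.exp_nat_mul_two_pi_mul_I, mul_one]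

theorem rank_final (n k : ℕ) (hk1 : n ≤ k) (hk2 : k < 6 * n) (a b : ℂ) (x : ℝ) (hx : x < 0)
    (h : ∀ j ≤ 2, Lam k a b x (Rk n j) = 0) : b = 0 := by
  have hx' : (x : ℂ).re < 0 := by simpa using hx
  have hU : IsOpen {w : ℂ | w.re < 0} := isOpen_lt Complex.continuous_re continuous_const
  have hpre : IsPreconnected {w : ℂ | w.re < 0} := (convex_halfSpace_re_lt 0).isPreconnected
  have hd : DifferentiableOn ℂ (fun x => Lam k a b x (Rp n)) {w : ℂ | w.re < 0} := fun w hw => (Lam_deriv k a b _ w hw).differentiableAt.differentiableWithinAt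
  have hball : Metric.ball (x : ℂ) (-x) ⊆ {w : ℂ | w.re < 0} := by
    intro w hw
    rw [Metric.mem_ball, dist_eq_norm] at hw
    have := (Complex.abs_re_le_norm (w - x)).trans_lt hw
    rw [Complex.sub_re, Complex.ofReal_re] at this
    have := (abs_lt.1 this).2
    show w.re < 0
    linarith
  have hz : ∀ w ∈ Metric.ball (x : ℂ) (-x), Lam k a b w (Rp n) = 0 := by
    intro w hw
    have h1 := Complex.taylorSeries_eq_on_ball' hw (hd.mono hball)
    rw [← h1]
    have : ∀ i : ℕ, iteratedDeriv i (fun x => Lam k a b x (Rp n)) (x : ℂ) = 0 := fun i => by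
      rw [Lam_iter k a b _ i x hx', Lam_pow n k hk1 hk2 a b x hx' h i]
    simp [this]
  have hall := (hd.analyticOnNhd hU).eqOn_zero_of_preconnected_of_eventuallyEq_zero hpre (z₀ := (x : ℂ)) hx'
    (by filter_upwards [Metric.ball_mem_nhds (x : ℂ) (by linarith : 0 < -x)] with w hw; exact hz w hw)
  have h0 : Lam k a b x (Rp n) = 0 := hall hx'
  have h1 : Lam k a b (x + 2 * Real.pi * Complex.I) (Rp n) = 0 := hall (by show ((x : ℂ) + 2 * Real.pi * Complex.I).re < 0; simpa using hx)
  have hb : b * (2 * Real.pi * Complex.I) * Pf k (Rp n) x = 0 := by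
    simp only [Lam, Sf, Pf_period] at h0 h1
    linear_combination h1 - h0
  have hP : Pf k (Rp n) x ≠ 0 := by
    rw [Pf_start k (6 * n) hk2.le (Rp n) x hx' (fun ν h1 h2 => by simpa [Rk] using (Rk_zero n 0 ν (hk1.trans h1) h2).1)]
    have hs := (Pf_summable (6 * n) (Rp n) x hx').of_norm
    have ht : ∀ j : ℕ, aeval ((6 * n + j : ℕ) : ℂ) (Rp n) * Complex.exp (((6 * n + j : ℕ) : ℂ) * x) =
      (((((6 * n + j).choose (7 * n) * (6 * n + j - n).choose (5 * n) * (6 * n + j - 2 * n).choose (3 * n) : ℕ) : ℝ) * Real.exp (((6 * n + j : ℕ) : ℝ) * x) : ℝ) : ℂ) := by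
      intro j
      rw [aeval_natC, Rp_eval_nat n _ (by omega)]; push_cast; rfl
    rw [Pf]
    simp_rw [ht] at hs ⊢
    rw [← Complex.ofReal_tsum]
    have hs' := Complex.summable_ofReal.1 hs
    have : 0 < ∑' j : ℕ, ((((6 * n + j).choose (7 * n) * (6 * n + j - n).choose (5 * n) * (6 * n + j - 2 * n).choose (3 * n) : ℕ) : ℝ) * Real.exp (((6 * n + j : ℕ) : ℝ) * x)) := by
      refine hs'.tsum_pos (fun j => by positivity) n ?_
      have : 0 < (6 * n + n).choose (7 * n) * (6 * n + n - n).choose (5 * n) * (6 * n + n - 2 * n).choose (3 * n) := by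
        refine Nat.mul_pos (Nat.mul_pos (Nat.choose_pos ?_) (Nat.choose_pos ?_)) (Nat.choose_pos ?_) <;> omega
      have : (0:ℝ) < ((6 * n + n).choose (7 * n) * (6 * n + n - n).choose (5 * n) * (6 * n + n - 2 * n).choose (3 * n) : ℕ) := by exact_mod_cast this
      positivity
    exact_mod_cast this.ne'
  have h2 : (2 * Real.pi * Complex.I : ℂ) ≠ 0 := Complex.two_pi_I_ne_zero
  exact (mul_eq_zero.1 ((mul_eq_zero.1 hb).resolve_right hP)).resolve_right h2
end

section
open Polynomial Filter Topology

lemma conn (r : ℝ) (hr0 : 0 < r) (hr1 : r < 1) (n k0 c : ℕ) (hn : 1 ≤ n) (hk : k0 ≤ 6 * n) (G : ℚ[X]) (V : ℝ)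
    (hG : ∀ ν : ℕ, k0 ≤ ν → ν < 6 * n → G.eval (ν : ℚ) = 0)
    (h : HasSum (fun j : ℕ => (((c : ℚ) * G.eval ((6 * n + j : ℕ) : ℚ) : ℚ) : ℝ) * r ^ (2 * j + 5 * n + 1)) V) :
    (c : ℂ) * Pf k0 G ((2 * Real.log r : ℝ) : ℂ) = ((V * r ^ (7 * n - 1) : ℝ) : ℂ) := by
  have hx : (((2 * Real.log r : ℝ) : ℂ)).re < 0 := by
    rw [Complex.ofReal_re]; have := Real.log_neg hr0 hr1; linarith
  rw [Pf_start k0 (6 * n) hk G _ hx hG, Pf, ← tsum_mul_left]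
  have h2 := (h.mul_right (r ^ (7 * n - 1)))
  have h3 := (Complex.hasSum_ofReal.2 h2).tsum_eq
  rw [← h3]
  refine tsum_congr fun j => ?_
  rw [aeval_natC]
  have he : Complex.exp (((6 * n + j : ℕ) : ℂ) * ((2 * Real.log r : ℝ) : ℂ)) = ((r ^ (2 * (6 * n + j)) : ℝ) : ℂ) := by
    have : (((6 * n + j : ℕ) : ℂ) * ((2 * Real.log r : ℝ) : ℂ)) = (((2 * (6 * n + j) : ℕ) * Real.log r : ℝ) : ℂ) := by push_cast; ring
    rw [this, ← Complex.ofReal_exp, Real.exp_nat_mul, Real.exp_log hr0]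
  rw [he, show 2 * (6 * n + j) = (2 * j + 5 * n + 1) + (7 * n - 1) by omega, pow_add]
  push_cast; ring

noncomputable def r0 : ℝ := (Real.sqrt 17 - 1) / 4

lemma s17 : Real.sqrt 17 ^ 2 = 17 := Real.sq_sqrt (by norm_num)
lemma s17l : 4.123 < Real.sqrt 17 := Real.lt_sqrt_of_sq_lt (by norm_num)
lemma s17u : Real.sqrt 17 < 4.124 := by rw [Real.sqrt_lt' (by norm_num)]; norm_num
lemma r0_pos : 0 < r0 := by unfold r0; linarith [s17l]
lemma r0_lt : r0 < 1 := by unfold r0; linarith [s17u]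
lemma r0_sq : r0 ^ 2 = (9 - Real.sqrt 17) / 8 := by unfold r0; nlinarith [s17]
lemma r0_a : r0 / (1 - r0 ^ 2) = 2 := by
  rw [r0_sq, div_eq_iff (by linarith [s17l])]; unfold r0; ring
lemma r0_b : (1 + r0 ^ 2) / (1 - r0 ^ 2) = Real.sqrt 17 := by
  rw [r0_sq, div_eq_iff (by linarith [s17l])]; nlinarith [s17]
lemma r0_log : Real.log ((Real.sqrt 17 - 1) / (Real.sqrt 17 + 1)) = 2 * Real.log r0 := by
  have : (Real.sqrt 17 - 1) / (Real.sqrt 17 + 1) = r0 ^ 2 := by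
    rw [r0_sq, div_eq_iff (by linarith [s17l])]; nlinarith [s17]
  rw [this, Real.log_pow]; norm_num

theorem assembly (N : ℕ) (hN : 1 ≤ N) (p : ℤ) (q : ℕ+) : ∃ k ≤ 2, ∃ A B : ℤ, A * (q : ℤ) + B * p ≠ 0 ∧
    HasSum (fun j : ℕ => (((Qn (17 * N) (savedSet (17 * N)) : ℚ) * (Rk (17 * N) k).eval ((6 * (17 * N) + j : ℕ) : ℚ) : ℚ) : ℝ) * r0 ^ (2 * j + 5 * (17 * N) + 1)) ((if Even k then 1 else Real.sqrt 17) * 2 ^ (5 * (17 * N) + 1) * B) ∧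
    |A + B * (Real.sqrt 17 * (2 * Real.log r0))| * (2 ^ (5 * (17 * N) + 1) * r0 ^ (7 * (17 * N) - 1)) ≤ Real.sqrt 17 * (Qn (17 * N) (savedSet (17 * N)) * ‖Sf (64 * N) (Rk (17 * N) k) ((2 * Real.log r0 : ℝ) : ℂ)‖) := by
  set n := 17 * N with hn
  set Q := Qn n (savedSet n) with hQ
  set x0 := 2 * Real.log r0 with hx0
  have hx0n : x0 < 0 := by have := Real.log_neg r0_pos r0_lt; linarith
  set s := Real.sqrt 17 with hs
  have hs2 : s ^ 2 = 17 := s17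
  have hs4 : 4.123 < s := s17l
  set W : ℝ := 2 ^ (5 * n + 1) * r0 ^ (7 * n - 1) with hW
  have hWp : 0 < W := by have := r0_pos; positivity
  have hQp : 0 < (Q : ℝ) := by exact_mod_cast Qn_pos n
  have key : ∀ k : ℕ, ∃ A B : ℤ, HasSum (fun j : ℕ => (((Q : ℚ) * (Rk n k).eval ((6 * n + j : ℕ) : ℚ) : ℚ) : ℝ) * r0 ^ (2 * j + 5 * n + 1)) ((if Even k then 1 else s) * 2 ^ (5 * n + 1) * B) ∧
     (Q : ℂ) * Pf (64 * N) (Rk n k) x0 = (((if Even k then 1 else s) * B * W : ℝ) : ℂ) ∧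
     (Q : ℂ) * Pf (64 * N) (derivative (Rk n k)) x0 = (((if Even k then s else 1) * A * W : ℝ) : ℂ) := by
    intro k
    obtain ⟨A, B, h1, h2⟩ := forms r0 s r0_pos r0_lt r0_a r0_b n (savedSet n) (savedSet_spec n) k
    refine ⟨A, B, h1, ?_, ?_⟩
    · rw [conn r0 r0_pos r0_lt n (64 * N) Q (by omega) (by omega) _ _ (fun ν a b => (Rk_zero n k ν (by omega) b).1) h1, hW]
      congr 1; ring
    · rw [conn r0 r0_pos r0_lt n (64 * N) Q (by omega) (by omega) _ _ (fun ν a b => (Rk_zero n k ν (by omega) b).2) h2, hW]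
      congr 1; ring
  have hex : ∃ k ≤ 2, Lam (64 * N) ((p - s * (q : ℕ) * x0 : ℝ) : ℂ) ((s * (q : ℕ) : ℝ) : ℂ) x0 (Rk n k) ≠ 0 := by
    by_contra hc
    push Not at hc
    have := rank_final n (64 * N) (by omega) (by omega) _ _ x0 hx0n hc
    have h0 : s * (q : ℕ) = 0 := by exact_mod_cast this
    have hq : (0 : ℝ) < (q : ℕ) := by exact_mod_cast q.pos
    have : 0 < s * (q : ℕ) := by positivity
    linarith
  obtain ⟨k, hk, hne⟩ := hex
  obtain ⟨A, B, h1, h2, h3⟩ := key k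
  have hL : (Q : ℂ) * Lam (64 * N) ((p - s * (q : ℕ) * x0 : ℝ) : ℂ) ((s * (q : ℕ) : ℝ) : ℂ) x0 (Rk n k) =
      ((p * ((if Even k then 1 else s) * B * W) + s * (q : ℕ) * ((if Even k then s else 1) * A * W) : ℝ) : ℂ) := by
    rw [Lam, Sf]; push_cast
    push_cast at h2 h3
    linear_combination (p : ℂ) * h2 + (s : ℂ) * (q : ℕ) * h3
  have hS : (Q : ℂ) * Sf (64 * N) (Rk n k) x0 = ((x0 * ((if Even k then 1 else s) * B * W) + ((if Even k then s else 1) * A * W) : ℝ) : ℂ) := by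
    rw [Sf]; push_cast
    push_cast at h2 h3
    linear_combination (x0 : ℂ) * h2 + h3
  have hSn : (Q : ℝ) * ‖Sf (64 * N) (Rk n k) x0‖ = |x0 * ((if Even k then 1 else s) * B * W) + ((if Even k then s else 1) * A * W)| := by
    have := congrArg norm hS
    rw [norm_mul, Complex.norm_natCast, Complex.norm_real, Real.norm_eq_abs] at this
    exact this
  have hQc : (Q : ℂ) ≠ 0 := by exact_mod_cast hQp.ne'
  have hLn : (p * ((if Even k then 1 else s) * B * W) + s * (q : ℕ) * ((if Even k then s else 1) * A * W) : ℝ) ≠ 0 := by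
    intro h; rw [h, Complex.ofReal_zero] at hL
    exact (mul_ne_zero hQc hne) hL
  by_cases hkE : Even k
  · refine ⟨k, hk, 17 * A, B, ?_, h1, ?_⟩
    · intro h
      apply hLn
      rw [if_pos hkE, if_pos hkE]
      have h' : (17 * A * (q : ℕ) + B * p : ℝ) = 0 := by exact_mod_cast h
      linear_combination W * h' + (q : ℕ) * A * W * hs2
    · rw [hSn, if_pos hkE, if_pos hkE, ← abs_of_pos hWp, ← abs_mul]
      conv_rhs => rw [← abs_of_pos (show 0 < s by linarith), ← abs_mul]
      rw [abs_of_pos hWp]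
      push_cast
      refine le_of_eq (congrArg abs ?_)
      rw [abs_of_pos (show 0 < s by linarith)]
      linear_combination (-A * W) * hs2
  · refine ⟨k, hk, A, B, ?_, h1, ?_⟩
    · intro h
      apply hLn
      rw [if_neg hkE, if_neg hkE]
      have h' : (A * (q : ℕ) + B * p : ℝ) = 0 := by exact_mod_cast h
      linear_combination s * W * h'
    · rw [hSn, if_neg hkE, if_neg hkE]
      have e : |A + B * (s * x0)| * W = |x0 * (s * B * W) + 1 * A * W| := by
        rw [← abs_of_pos hWp, ← abs_mul, abs_of_pos hWp]; congr 1; ring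
      rw [e]
      nlinarith [abs_nonneg (x0 * (s * B * W) + 1 * A * W)]
end

section
lemma log_hi (v t L : ℝ) (k : ℕ) (hv : 0 < v) (h0 : 0 ≤ t) (h1 : t < 1) (h : v * (1 - t) ≤ 2 ^ k * (1 + t))
    (hL : k * 0.6931471808 + 2 * ((∑ i ∈ Finset.range 8, t ^ (2 * i + 1) / (2 * i + 1)) + t ^ (2 * 8 + 1) / (1 - t ^ 2)) ≤ L) : Real.log v ≤ L := by
  have a := Real.log_div_le_sum_range_add h0 h1 8
  have h1' : 0 < 1 - t := by linarith
  have b : Real.log v ≤ Real.log (2 ^ k * ((1 + t) / (1 - t))) := by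
    refine Real.log_le_log hv ?_
    rw [← mul_div_assoc, le_div_iff₀ h1']; exact h
  rw [Real.log_mul (by positivity) (by positivity), Real.log_pow] at b
  have c := Real.log_two_lt_d9
  have d : (k : ℝ) * Real.log 2 ≤ k * 0.6931471808 := by gcongr
  linarith

lemma log_lo (v t L : ℝ) (k : ℕ) (h0 : 0 ≤ t) (h1 : t < 1) (h : 2 ^ k * (1 + t) ≤ v * (1 - t))
    (hL : L ≤ k * 0.6931471803 + 2 * (∑ i ∈ Finset.range 8, t ^ (2 * i + 1) / (2 * i + 1))) : L ≤ Real.log v := by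
  have a := Real.sum_range_le_log_div h0 h1 8
  have h1' : 0 < 1 - t := by linarith
  have b : Real.log (2 ^ k * ((1 + t) / (1 - t))) ≤ Real.log v := by
    refine Real.log_le_log (by positivity) ?_
    rw [← mul_div_assoc, div_le_iff₀ h1']; exact h
  rw [Real.log_mul (by positivity) (by positivity), Real.log_pow] at b
  have c := Real.log_two_gt_d9
  have d : (k : ℝ) * 0.6931471803 ≤ k * Real.log 2 := by gcongr
  linarith

lemma lgA64 : Real.log (64 ^ 2 + 22.2346 ^ 2) ≤ 8.431717533 := by
  refine log_hi _ 0.0569141096 _ 12 (by norm_num) (by norm_num) (by norm_num) (by norm_num) ?_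
  norm_num [Finset.sum_range_succ]
lemma lgA55 : Real.log (55 ^ 2 + 22.2346 ^ 2) ≤ 8.166039392 := by
  refine log_hi _ 0.2642855553 _ 11 (by norm_num) (by norm_num) (by norm_num) (by norm_num) ?_
  norm_num [Finset.sum_range_succ]
lemma lgA47 : Real.log (47 ^ 2 + 22.2346 ^ 2) ≤ 7.902257176 := by
  refine log_hi _ 0.1379341983 _ 11 (by norm_num) (by norm_num) (by norm_num) (by norm_num) ?_
  norm_num [Finset.sum_range_succ]
lemma lgA38 : Real.log (38 ^ 2 + 22.2346 ^ 2) ≤ 7.569606537 := by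
  refine log_hi _ 0.3086633816 _ 10 (by norm_num) (by norm_num) (by norm_num) (by norm_num) ?_
  norm_num [Finset.sum_range_succ]
lemma lgA30 : Real.log (30 ^ 2 + 22.2346 ^ 2) ≤ 7.240203316 := by
  refine log_hi _ 0.1531512127 _ 10 (by norm_num) (by norm_num) (by norm_num) (by norm_num) ?_
  norm_num [Finset.sum_range_succ]
lemma lgA21 : Real.log (21 ^ 2 + 22.2346 ^ 2) ≤ 6.840950128 := by
  refine log_hi _ 0.2925134981 _ 9 (by norm_num) (by norm_num) (by norm_num) (by norm_num) ?_
  norm_num [Finset.sum_range_succ]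
lemma lgM119 : 4.779123491 ≤ Real.log (119) := by
  refine log_lo _ 0.3005464480 _ 6 (by norm_num) (by norm_num) (by norm_num) ?_
  norm_num [Finset.sum_range_succ]
lemma lgM85 : 4.442651254 ≤ Real.log (85) := by
  refine log_lo _ 0.1409395973 _ 6 (by norm_num) (by norm_num) (by norm_num) ?_
  norm_num [Finset.sum_range_succ]
lemma lgM51 : 3.931825631 ≤ Real.log (51) := by
  refine log_lo _ 0.2289156626 _ 5 (by norm_num) (by norm_num) (by norm_num) ?_
  norm_num [Finset.sum_range_succ]
lemma lgM7 : 1.945910148 ≤ Real.log (7) := by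
  refine log_lo _ 0.2727272727 _ 2 (by norm_num) (by norm_num) (by norm_num) ?_
  norm_num [Finset.sum_range_succ]
lemma lgM5 : 1.609437911 ≤ Real.log (5) := by
  refine log_lo _ 0.1111111111 _ 2 (by norm_num) (by norm_num) (by norm_num) ?_
  norm_num [Finset.sum_range_succ]
lemma lgM3 : 1.098612288 ≤ Real.log (3) := by
  refine log_lo _ 0.2000000000 _ 1 (by norm_num) (by norm_num) (by norm_num) ?_
  norm_num [Finset.sum_range_succ]
lemma lgW1 : Real.log (26.89794) ≤ 3.292049705 := by
  refine log_hi _ 0.2540434343 _ 4 (by norm_num) (by norm_num) (by norm_num) (by norm_num) ?_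
  norm_num [Finset.sum_range_succ]
lemma lgW3 : 3.363770311 ≤ Real.log (28.89794) := by
  refine log_lo _ 0.2872724227 _ 4 (by norm_num) (by norm_num) (by norm_num) ?_
  norm_num [Finset.sum_range_succ]
lemma lgV1 : Real.log (33.89794) ≤ 3.523354247 := by
  refine log_hi _ 0.0288012039 _ 5 (by norm_num) (by norm_num) (by norm_num) (by norm_num) ?_
  norm_num [Finset.sum_range_succ]
lemma lgV2 : Real.log (32.89794) ≤ 3.493410044 := by
  refine log_hi _ 0.0138361865 _ 5 (by norm_num) (by norm_num) (by norm_num) (by norm_num) ?_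
  norm_num [Finset.sum_range_succ]
lemma lgV3 : Real.log (31.89794) ≤ 3.462541448 := by
  refine log_hi _ 0.3319128130 _ 4 (by norm_num) (by norm_num) (by norm_num) (by norm_num) ?_
  norm_num [Finset.sum_range_succ]
lemma lgR : Real.log (1.561552813) ≤ 0.445680720 := by
  refine log_hi _ 0.2192235937 _ 0 (by norm_num) (by norm_num) (by norm_num) (by norm_num) ?_
  norm_num [Finset.sum_range_succ]

lemma r0_hi : r0 < 0.78077640642 := by
  have : Real.sqrt 17 < 4.12310562565 := by rw [Real.sqrt_lt' (by norm_num)]; norm_num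
  unfold r0; linarith

lemma log_r0 : Real.log r0 + Real.log 2 ≤ Real.log 1.561552813 := by
  rw [← Real.log_mul r0_pos.ne' (by norm_num)]
  refine Real.log_le_log (by have := r0_pos; positivity) ?_
  have := r0_hi; linarith

lemma theta_pi : Real.pi < ThT 22.2346 := by
  unfold ThT
  rw [Real.arctan_add (x := 22.2346 / 64) (y := 22.2346 / 55) (by norm_num), Real.arctan_add (x := 22.2346 / 47) (y := 22.2346 / 38) (by norm_num),
    Real.arctan_add (x := 22.2346 / 30) (y := 22.2346 / 21) (by norm_num), Real.arctan_add_eq_add_pi (by norm_num) (by norm_num)]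
  have h : ∀ a b : ℝ, -a < b → Real.pi < Real.arctan a + Real.pi + Real.arctan b := by
    intro a b h
    have := Real.arctan_strictMono h
    rw [Real.arctan_neg] at this; linarith
  exact h _ _ (by norm_num)

lemma log_half (a : ℕ) (ha : 0 < a) (T : ℝ) : Real.log (a ^ a * √(1 + (T / a) ^ 2) ^ a) = a / 2 * Real.log ((a:ℝ) ^ 2 + T ^ 2) := by
  have ha' : (0:ℝ) < a := by exact_mod_cast ha
  have e : (a:ℝ) * √(1 + (T / a) ^ 2) = √((a:ℝ) ^ 2 + T ^ 2) := by
    rw [← Real.sqrt_sq ha'.le, ← Real.sqrt_mul (by positivity), Real.sqrt_sq ha'.le]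
    congr 1; field_simp
  rw [← mul_pow, e, Real.log_pow, Real.log_sqrt (by positivity)]; ring

lemma Kf_pos (T : ℝ) (a b : ℕ) (ha : 0 < a) (hb : 0 < b) : 0 < Kf T a b := by
  unfold Kf
  have ha' : (0:ℝ) < a := by exact_mod_cast ha
  have hb' : (0:ℝ) < b := by exact_mod_cast hb
  have : 0 < √(1 + (T / a) ^ 2) := Real.sqrt_pos.2 (by positivity)
  have : 0 < √(1 + (T / b) ^ 2) := Real.sqrt_pos.2 (by positivity)
  push_cast
  positivity

lemma log_Kf (T : ℝ) (a b : ℕ) (ha : 0 < a) (hb : 0 < b) : Real.log (Kf T a b) = a / 2 * Real.log ((a:ℝ) ^ 2 + T ^ 2) + b / 2 * Real.log ((b:ℝ) ^ 2 + T ^ 2) - (a + b : ℕ) * Real.log ((a + b : ℕ) : ℝ) := by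
  have ha' : (0:ℝ) < a := by exact_mod_cast ha
  have hb' : (0:ℝ) < b := by exact_mod_cast hb
  have h1 : 0 < √(1 + (T / a) ^ 2) := Real.sqrt_pos.2 (by positivity)
  have h2 : 0 < √(1 + (T / b) ^ 2) := Real.sqrt_pos.2 (by positivity)
  have hab : (0:ℝ) < ((a + b : ℕ) : ℝ) := by exact_mod_cast (by omega : 0 < a + b)
  have e : Kf T a b = ((a:ℝ) ^ a * √(1 + (T / a) ^ 2) ^ a) * ((b:ℝ) ^ b * √(1 + (T / b) ^ 2) ^ b) / ((a + b : ℕ) : ℝ) ^ (a + b) := by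
    unfold Kf; ring
  rw [e, Real.log_div (by positivity) (by positivity), Real.log_mul (by positivity) (by positivity), log_half a ha, log_half b hb, Real.log_pow]

lemma KT_pos : 0 < KT 22.2346 := mul_pos (mul_pos (Kf_pos _ _ _ (by norm_num) (by norm_num)) (Kf_pos _ _ _ (by norm_num) (by norm_num))) (Kf_pos _ _ _ (by norm_num) (by norm_num))

lemma E_bound : Real.log (KT 22.2346) + 9 * Real.log r0 - 85 * Real.log 2 ≤ 17 * (-11.980542) := by
  unfold KT
  rw [Real.log_mul (mul_pos (Kf_pos _ _ _ (by norm_num) (by norm_num)) (Kf_pos _ _ _ (by norm_num) (by norm_num))).ne' (Kf_pos _ _ _ (by norm_num) (by norm_num)).ne',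
    Real.log_mul (Kf_pos _ _ _ (by norm_num) (by norm_num)).ne' (Kf_pos _ _ _ (by norm_num) (by norm_num)).ne',
    log_Kf _ _ _ (by norm_num) (by norm_num), log_Kf _ _ _ (by norm_num) (by norm_num), log_Kf _ _ _ (by norm_num) (by norm_num)]
  rw [show (64 + 55 : ℕ) = 119 by norm_num, show (47 + 38 : ℕ) = 85 by norm_num, show (30 + 21 : ℕ) = 51 by norm_num]
  simp only [Nat.cast_ofNat]
  linarith [lgA64, lgA55, lgA47, lgA38, lgA30, lgA21, lgM119, lgM85, lgM51, lgR, log_r0, Real.log_two_gt_d9]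

noncomputable def Bb : ℝ := (r0 / 2) ^ 5 * ((1 + 7 / 26.89794) ^ 6 * (1 + 5 / 27.89794) ^ 5 * (1 + 3 / 28.89794) ^ 4 / ((7 / 26.89794) ^ 7 * (5 / 27.89794) ^ 5 * (3 / 28.89794) ^ 3))

lemma Bb_pos : 0 < Bb := by have := r0_pos; unfold Bb; positivity

lemma q_bound : Real.log Bb ≤ 22.718156 := by
  have hr := r0_pos
  have e : Bb = (r0 / 2) ^ 5 * (33.89794 ^ 6 * 26.89794 * 32.89794 ^ 5 * 31.89794 ^ 4 / (7 ^ 7 * 5 ^ 5 * 3 ^ 3 * 28.89794)) := by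
    unfold Bb; congr 1; norm_num
  rw [e, Real.log_mul (by positivity) (by positivity), Real.log_div (by positivity) (by positivity),
    Real.log_mul (by positivity) (by positivity), Real.log_mul (by positivity) (by positivity), Real.log_mul (by positivity) (by positivity),
    Real.log_mul (by positivity) (by positivity), Real.log_mul (by positivity) (by positivity), Real.log_mul (by positivity) (by positivity),
    Real.log_pow, Real.log_pow, Real.log_pow, Real.log_pow, Real.log_pow, Real.log_pow, Real.log_pow, Real.log_div (by positivity) (by positivity)]
  simp only [Nat.cast_ofNat]
  linarith [lgV1, lgV2, lgV3, lgW1, lgW3, lgM7, lgM5, lgM3, lgR, log_r0, Real.log_two_gt_d9]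

lemma rho_lt : r0 ^ 2 * ((1 + 7 / 26.89794) * (1 + 5 / 27.89794) * (1 + 3 / 28.89794)) < 1 := by
  have : (4.1231056256 : ℝ) < Real.sqrt 17 := Real.lt_sqrt_of_sq_lt (by norm_num)
  rw [r0_sq]
  norm_num
  linarith
end

section
open Polynomial Filter Topology

lemma poly_absorb (C δ : ℝ) (hδ : 0 < δ) : ∀ᶠ N : ℕ in atTop, C * ((N : ℝ) + 1) ^ 8 ≤ Real.exp (δ * N) := by
  have h := (isLittleO_pow_exp_pos_mul_atTop 8 hδ)
  have h2 := (h.def (show 0 < (1 / ((|C| + 1) * Real.exp δ)) by positivity))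
  have ht : Tendsto (fun N : ℕ => (N : ℝ) + 1) atTop atTop := tendsto_atTop_add_const_right _ _ tendsto_natCast_atTop_atTop
  filter_upwards [ht.eventually h2] with N hN
  rw [Real.norm_of_nonneg (by positivity), Real.norm_of_nonneg (by positivity)] at hN
  rw [show δ * ((N : ℝ) + 1) = δ + δ * N by ring, Real.exp_add] at hN
  have e : 1 / ((|C| + 1) * Real.exp δ) * (Real.exp δ * Real.exp (δ * N)) = Real.exp (δ * N) / (|C| + 1) := by
    have := Real.exp_pos δ
    field_simp
  rw [e, le_div_iff₀ (by positivity)] at hN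
  have : C ≤ |C| + 1 := by linarith [le_abs_self C]
  have h3 : C * ((N : ℝ) + 1) ^ 8 ≤ (|C| + 1) * ((N : ℝ) + 1) ^ 8 := by gcongr
  linarith

lemma pow_le_exp (b L : ℝ) (hb : 0 < b) (h : Real.log b ≤ L) (n : ℕ) : b ^ n ≤ Real.exp (L * n) := by
  rw [← Real.exp_log hb, ← Real.exp_nat_mul, Real.exp_le_exp, mul_comm]
  gcongr

theorem irrationality_measure_alpha_4 :
    ∀ κ : ℝ, κ > 3.47835 →
      {pq : ℤ × ℕ+ |
        |Real.sqrt 17 * Real.log ((Real.sqrt 17 - 1) / (Real.sqrt 17 + 1)) -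
            (pq.1 : ℝ) / ((pq.2 : ℕ) : ℝ)| <
          ((pq.2 : ℕ) : ℝ) ^ (-κ)}.Finite := by
  intro κ hκ
  refine irr_final _ (17 * 24.723058) (17 * 9.97564) κ (by norm_num) (by norm_num) (lt_trans (by norm_num) hκ) ?_
  rw [r0_log]
  have hlr := Real.log_neg r0_pos r0_lt
  have hr0 := r0_pos
  obtain ⟨C, hC, hB⟩ := B_bound r0 (Real.sqrt 17) (7 / 26.89794) (5 / 27.89794) (3 / 28.89794) r0_pos r0_lt (by linarith [s17l]) (by norm_num) (by norm_num) (by norm_num) rho_lt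
  obtain ⟨M, hM, hS⟩ := Sf_bound 22.2346 (by norm_num) theta_pi (2 * Real.log r0) (by linarith)
  have ht : Tendsto (fun N : ℕ => 17 * N) atTop atTop := tendsto_id.const_mul_atTop' (by norm_num)
  filter_upwards [ht.eventually (cost_final 1e-6 (by norm_num)), poly_absorb (289 * C) (17 * 1e-6) (by norm_num),
    poly_absorb (5 * M) (17 * 1e-6) (by norm_num), eventually_ge_atTop 1] with N hQ hp1 hp2 hN p q
  obtain ⟨k, hk, A, B, h1, h2, h3⟩ := assembly N hN p q
  set Q := Qn (17 * N) (savedSet (17 * N)) with hQd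
  have hQp : 0 < (Q : ℝ) := by exact_mod_cast Qn_pos _
  have hQe : (Q : ℝ) ≤ Real.exp (17 * 2.004901 * N) := by
    rw [← Real.log_le_iff_le_exp hQp]
    refine hQ.trans (le_of_eq ?_)
    push_cast; ring
  refine ⟨A, B, h1, ?_, ?_⟩
  · have hb := hB (17 * N) Q k B hk h2
    have hp := pow_le_exp Bb _ Bb_pos q_bound (17 * N)
    have hn : (((17 * N : ℕ) : ℝ) + 1) ^ 2 ≤ 289 * ((N : ℝ) + 1) ^ 8 := by
      have h1 : ((17 * N : ℕ) : ℝ) + 1 ≤ 17 * (N + 1) := by push_cast; linarith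
      have h2 : ((N : ℝ) + 1) ^ 2 ≤ (N + 1) ^ 8 := pow_le_pow_right₀ (by linarith [N.cast_nonneg (α := ℝ)]) (by norm_num)
      calc _ ≤ (17 * ((N : ℝ) + 1)) ^ 2 := by gcongr
        _ ≤ _ := by nlinarith
    calc |(B : ℝ)| ≤ C * (((17 * N : ℕ) : ℝ) + 1) ^ 2 * Q * Bb ^ (17 * N) := hb
      _ ≤ C * (289 * ((N : ℝ) + 1) ^ 8) * Real.exp (17 * 2.004901 * N) * Real.exp (22.718156 * (17 * N : ℕ)) := by
        have := Bb_pos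
        gcongr
      _ = (289 * C * ((N : ℝ) + 1) ^ 8) * Real.exp (17 * 2.004901 * N) * Real.exp (22.718156 * (17 * N : ℕ)) := by ring
      _ ≤ Real.exp (17 * 1e-6 * N) * Real.exp (17 * 2.004901 * N) * Real.exp (22.718156 * (17 * N : ℕ)) := by gcongr
      _ = _ := by rw [← Real.exp_add, ← Real.exp_add]; congr 1; push_cast; ring
  · have hs := hS N k hN hk
    have hK := KT_pos
    set b : ℝ := KT 22.2346 * Real.exp (64 * (2 * Real.log r0)) / (2 ^ 85 * r0 ^ 119) with hb
    have hbp : 0 < b := by positivity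
    have hbl : Real.log b ≤ 17 * (-11.980542) := by
      rw [hb, Real.log_div (by positivity) (by positivity), Real.log_mul (by positivity) (by positivity), Real.log_exp,
        Real.log_mul (by positivity) (by positivity), Real.log_pow, Real.log_pow]
      have := E_bound
      push_cast; linarith
    have hp := pow_le_exp b _ hbp hbl N
    have hW : (2 ^ 85 * r0 ^ 119) ^ N ≤ 2 ^ (5 * (17 * N) + 1) * r0 ^ (7 * (17 * N) - 1) := by
      rw [mul_pow, ← pow_mul, ← pow_mul]
      have a1 : (2:ℝ) ^ (85 * N) ≤ 2 ^ (5 * (17 * N) + 1) := pow_le_pow_right₀ (by norm_num) (by omega)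
      have a2 : r0 ^ (119 * N) ≤ r0 ^ (7 * (17 * N) - 1) := pow_le_pow_of_le_one r0_pos.le r0_lt.le (by omega)
      gcongr
    set W : ℝ := (2 ^ 85 * r0 ^ 119) ^ N with hWd
    have hWp : 0 < W := by positivity
    have h4 : |(A : ℝ) + B * (Real.sqrt 17 * (2 * Real.log r0))| * W ≤ 5 * (Q * (M * (N + 1) ^ 8 * (b ^ N * W))) := by
      have e : b ^ N * W = (KT 22.2346 * Real.exp (64 * (2 * Real.log r0))) ^ N := by
        rw [hWd, ← mul_pow, hb, div_mul_cancel₀ _ (by positivity)]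
      rw [e]
      calc _ ≤ _ := mul_le_mul_of_nonneg_left hW (abs_nonneg _)
        _ ≤ _ := h3
        _ ≤ _ := by
          have : Real.sqrt 17 ≤ 5 := by linarith [s17u]
          gcongr
    have h5 : |(A : ℝ) + B * (Real.sqrt 17 * (2 * Real.log r0))| ≤ 5 * (Q * (M * (N + 1) ^ 8 * b ^ N)) := by
      refine le_of_mul_le_mul_right (h4.trans (le_of_eq (by ring))) hWp
    calc _ ≤ _ := h5
      _ = (5 * M * ((N : ℝ) + 1) ^ 8) * Q * b ^ N := by ring
      _ ≤ Real.exp (17 * 1e-6 * N) * Real.exp (17 * 2.004901 * N) * Real.exp (17 * (-11.980542) * N) := by gcongr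
      _ = _ := by rw [← Real.exp_add, ← Real.exp_add]; congr 1; ring
end
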